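/- arXiv:1208.3161 — 3 statements merged into one kernel-verified Lean document; each statement's English description precedes it below -/
import Mathlib

section
/- There exist a rank-one transformation T of an infinite σ-finite measure space and an increasing sequence (m_i) of positive integers such that T is subsequence rationally weakly mixing along (m_i): with F = I the unit interval, for all measurable A, B ⊆ I one has (1/a_{m_i}(I)) ∑_{k=0}^{m_i−1} |μ(A ∩ T^k B) − μ(A)μ(B) u_k(I)| → 0 as i → ∞. -/
open MeasureTheory Filter Set Pointwise

/-- A rank-one cutting-and-stacking transformation of a subset `X ⊆ ℝ` (with Lebesgue
measure), given by columns `C n` consisting of `h n` levels (open intervals) of width `w n`,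
with `pos n j` the left endpoint of the level of height `j` in column `C n`; column `C (n+1)`
is obtained from `C n` by cutting into `r n ≥ 2` subcolumns of equal width, adding `s n k`
spacers above the `k`-th subcolumn, and stacking. -/
structure RankOne where
  X : Set ℝ
  T : ℝ ≃ᵐ ℝ
  r : ℕ → ℕ
  s : ℕ → ℕ → ℕ
  h : ℕ → ℕ
  w : ℕ → ℝ
  pos : ℕ → ℕ → ℝ
  hr : ∀ n, 2 ≤ r n
  h0 : h 0 = 1
  w0 : w 0 = 1
  pos0 : pos 0 0 = 0
  hrec : ∀ n, h (n + 1) = ∑ k ∈ Finset.range (r n), (h n + s n k)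
  wrec : ∀ n, w (n + 1) = w n / (r n : ℝ)
  hX : X = ⋃ n, ⋃ j < h n, Set.Ioo (pos n j) (pos n j + w n)
  disj : ∀ n, ∀ j < h n, ∀ j' < h n, j ≠ j' →
    Disjoint (Set.Ioo (pos n j) (pos n j + w n)) (Set.Ioo (pos n j') (pos n j' + w n))
  stack : ∀ n, ∀ j < h n, ∀ k < r n,
    pos (n + 1) ((∑ i ∈ Finset.range k, (h n + s n i)) + j) = pos n j + (k : ℝ) * w (n + 1)
  Tmap : ∀ n j, j + 1 < h n → ∀ x ∈ Set.Ioo (pos n j) (pos n j + w n),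
    T x = x + (pos n (j + 1) - pos n j)
  Tbij : Set.BijOn (⇑T) X X
  Tpres : MeasurePreserving (⇑T) (volume.restrict X) (volume.restrict X)

namespace RankOne

/-- The level of height `j` in column `C n`. -/
def lvl (S : RankOne) (n j : ℕ) : Set ℝ := Set.Ioo (S.pos n j) (S.pos n j + S.w n)

/-- The measure on the space: Lebesgue measure restricted to `X`. -/
noncomputable def μ (S : RankOne) : Measure ℝ := volume.restrict S.X

/-- The intrinsic weight sequence `u n F = μ(F ∩ TⁿF) / μ(F)²`. -/
noncomputable def u (S : RankOne) (F : Set ℝ) (n : ℕ) : ℝ :=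
  (S.μ (F ∩ (⇑S.T)^[n] '' F)).toReal / (S.μ F).toReal ^ 2

/-- `a n F = ∑_{k<n} u k F`. -/
noncomputable def a (S : RankOne) (F : Set ℝ) (n : ℕ) : ℝ :=
  ∑ k ∈ Finset.range n, S.u F k

/-- `T` is normal if spacers are added above the rightmost subcolumn infinitely often. -/
def Normal (S : RankOne) : Prop := ∀ m, ∃ n, m ≤ n ∧ 0 < S.s n (S.r n - 1)

/-- `T` grows exponentially: `2 s_{n, r_n - 1} ≥ h_{n+1}` for every `n`. -/
def ExpGrowing (S : RankOne) : Prop := ∀ n, S.h (n + 1) ≤ 2 * S.s n (S.r n - 1)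

/-- `T` has a bounded number of cuts: `sup r_n < ∞`. -/
def BoundedCuts (S : RankOne) : Prop := ∃ c, ∀ n, S.r n ≤ c

/-- `H n = {0} ∪ {∑_{k≤i} (h n + s n k) : 0 ≤ i < r n - 1}`. -/
def Hset (S : RankOne) (n : ℕ) : Finset ℕ :=
  insert 0 ((Finset.range (S.r n - 1)).image fun i => ∑ k ∈ Finset.range (i + 1), (S.h n + S.s n k))

/-- The set of heights in column `C N` of the descendants of the level of height `p`
in column `C j`: `D(J, N) = p + H j ⊕ H (j+1) ⊕ ⋯ ⊕ H (N-1)`. -/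
def desc (S : RankOne) (j p : ℕ) : ℕ → Finset ℕ
  | 0 => {p}
  | N + 1 => if N < j then {p} else desc S j p N + S.Hset N

/-- `M m`: the maximal height of a descendant of the unit interval `I` in column `C m`. -/
def M (S : RankOne) (m : ℕ) : ℕ := (S.desc 0 0 m).sup id

/-- The ergodic sum `S_n(1_F)(x) = ∑_{k<n} 1_F(T^k x)`. -/
noncomputable def birkhoff (S : RankOne) (F : Set ℝ) (n : ℕ) (x : ℝ) : ℝ :=
  ∑ k ∈ Finset.range n, Set.indicator F (fun _ => (1 : ℝ)) ((⇑S.T)^[k] x)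

/-- `T` is rationally weakly mixing on `F`. -/
def RWMOn (S : RankOne) (F : Set ℝ) : Prop :=
  MeasurableSet F ∧ 0 < S.μ F ∧ S.μ F ≠ ⊤ ∧
  ∀ A B : Set ℝ, MeasurableSet A → A ⊆ F → MeasurableSet B → B ⊆ F →
    Tendsto (fun n => (S.a F n)⁻¹ *
      ∑ k ∈ Finset.range n,
        |(S.μ (A ∩ (⇑S.T)^[k] '' B)).toReal - (S.μ A).toReal * (S.μ B).toReal * S.u F k|)
      atTop (nhds 0)

/-- `T` is rationally weakly mixing. -/
def RWM (S : RankOne) : Prop := ∃ F, S.RWMOn F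

/-- `T` is rationally ergodic: some set `F` of positive finite measure satisfies a
Renyi inequality. -/
def RatErgodic (S : RankOne) : Prop :=
  ∃ (F : Set ℝ) (c : ℝ), MeasurableSet F ∧ 0 < S.μ F ∧ S.μ F ≠ ⊤ ∧
    ∀ n, ∫ x in F, (S.birkhoff F n x) ^ 2 ∂S.μ ≤ c * (∫ x in F, S.birkhoff F n x ∂S.μ) ^ 2

/-- `T` is spectrally weakly mixing: every bounded measurable eigenfunction is a.e. constant. -/
def SpecWM (S : RankOne) : Prop :=
  ∀ (f : ℝ → ℂ) (z : ℂ), Measurable f → (∃ C, ∀ᵐ x ∂S.μ, ‖f x‖ ≤ C) →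
    (∀ᵐ x ∂S.μ, f (S.T x) = z * f x) → ∃ c : ℂ, ∀ᵐ x ∂S.μ, f x = c

/-- `T` is zero-type: `μ(A ∩ TⁿA) → 0` for all `A` of finite measure. -/
def ZeroType (S : RankOne) : Prop :=
  ∀ A : Set ℝ, MeasurableSet A → S.μ A ≠ ⊤ →
    Tendsto (fun n => S.μ (A ∩ (⇑S.T)^[n] '' A)) atTop (nhds 0)

/-- The `i`-th nonzero element of `H n` (for `i < r n - 1`): `e n i = ∑_{k ≤ i} (h n + s n k)`. -/
def e (S : RankOne) (n i : ℕ) : ℕ := ∑ k ∈ Finset.range (i + 1), (S.h n + S.s n k)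

/-- `T` is steep: listing the nonzero elements of `H 0`, then `H 1`, etc., as `t 1, t 2, …`,
each successive element is at least `4` times the previous one. -/
def Steep (S : RankOne) : Prop :=
  (∀ n i, i + 2 < S.r n → 4 * S.e n i ≤ S.e n (i + 1)) ∧
  (∀ n, 4 * S.e n (S.r n - 2) ≤ S.e (n + 1) 0)

/-- `T` is almost steep. -/
def AlmostSteep (S : RankOne) : Prop :=
  ∀ n, 3 ≤ S.r n ∧ S.s n 0 = 0 ∧ S.s n 1 = 1 ∧
    ∀ i, 2 ≤ i → i ≤ S.r n - 1 →
      4 * (∑ k ∈ Finset.range i, (S.h n + S.s n k)) ≤ ∑ k ∈ Finset.range (i + 1), (S.h n + S.s n k)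

/-- `A` is a finite union of levels of `T`. -/
def FinUnionLevels (S : RankOne) (A : Set ℝ) : Prop :=
  ∃ q : Finset (ℕ × ℕ), (∀ v ∈ q, v.2 < S.h v.1) ∧ A = ⋃ v ∈ q, S.lvl v.1 v.2

end RankOne


namespace R1

/-- Heights of the columns. -/
def hh : ℕ → ℕ
  | 0 => 1
  | n + 1 => 2 * ((∑ k ∈ Finset.range (n + 1), (hh n + k)) + hh n)

/-- Half of the height of column `n+1`. -/
def pp (n : ℕ) : ℕ := (∑ k ∈ Finset.range (n + 1), (hh n + k)) + hh n

/-- Number of spacers. -/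
def sp (n k : ℕ) : ℕ := if k < n + 1 then k else pp n

/-- Offset of the `k`-th subcolumn. -/
def off (n k : ℕ) : ℕ := ∑ i ∈ Finset.range k, (hh n + sp n i)

/-- Width of the levels. -/
noncomputable def ww (n : ℕ) : ℝ := 1 / ((n + 1).factorial : ℝ)

/-- Bound for cell indices. -/
def cc : ℕ → ℕ
  | 0 => 1
  | n + 1 => cc n * (n + 2) + hh (n + 1)

open Classical in
/-- Cell index of a level. -/
noncomputable def qq : ℕ → ℕ → ℕ
  | 0, _ => 0
  | n + 1, i => if hx : ∃ p : ℕ × ℕ, p.2 < hh n ∧ p.1 < n + 2 ∧ i = off n p.1 + p.2 then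
      qq n hx.choose.2 * (n + 2) + hx.choose.1 else cc n * (n + 2) + i

lemma hh_succ (n : ℕ) : hh (n + 1) = 2 * pp n := rfl

lemma hh_pos (n : ℕ) : 0 < hh n := by
  induction n with
  | zero => simp [hh]
  | succ n ih => rw [hh_succ, pp]; omega

lemma pp_pos (n : ℕ) : 0 < pp n := by
  have := hh_pos n
  unfold pp; omega

lemma off_succ (n k : ℕ) : off n (k + 1) = off n k + (hh n + sp n k) := by
  simp [off, Finset.sum_range_succ]

lemma off_mono (n : ℕ) : Monotone (off n) :=
  monotone_nat_of_le_succ (fun k => by rw [off_succ]; omega)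

lemma off_last (n : ℕ) : off n (n + 1) + hh n = pp n := by
  unfold off pp
  congr 1
  apply Finset.sum_congr rfl
  intro k hk
  simp at hk
  simp [sp, hk]

lemma off_top (n : ℕ) : off n (n + 2) = hh (n + 1) := by
  have := off_last n
  rw [off_succ, hh_succ]
  simp [sp]
  omega

lemma off_add_lt {n k j : ℕ} (hj : j < hh n) (hk : k < n + 2) : off n k + j < pp n := by
  have h1 : off n k ≤ off n (n + 1) := off_mono n (by omega)
  have := off_last n
  omega

lemma off_inj {n k j k' j' : ℕ} (hj : j < hh n) (hj' : j' < hh n)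
    (h : off n k + j = off n k' + j') : k = k' ∧ j = j' := by
  rcases lt_trichotomy k k' with hk | hk | hk
  · have h1 : off n (k + 1) ≤ off n k' := off_mono n hk
    rw [off_succ] at h1
    omega
  · subst hk; exact ⟨rfl, by omega⟩
  · have h1 : off n (k' + 1) ≤ off n k := off_mono n hk
    rw [off_succ] at h1
    omega

lemma qq_desc {n k j : ℕ} (hj : j < hh n) (hk : k < n + 2) :
    qq (n + 1) (off n k + j) = qq n j * (n + 2) + k := by
  have hx : ∃ p : ℕ × ℕ, p.2 < hh n ∧ p.1 < n + 2 ∧ off n k + j = off n p.1 + p.2 :=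
    ⟨(k, j), hj, hk, rfl⟩
  rw [qq, dif_pos hx]
  obtain ⟨h1, h2, h3⟩ := hx.choose_spec
  obtain ⟨h4, h5⟩ := off_inj hj h1 h3
  rw [← h4, ← h5]

lemma qq_spacer {n i : ℕ}
    (hx : ¬ ∃ p : ℕ × ℕ, p.2 < hh n ∧ p.1 < n + 2 ∧ i = off n p.1 + p.2) :
    qq (n + 1) i = cc n * (n + 2) + i := by
  rw [qq, dif_neg hx]

lemma qq_lt (n : ℕ) : ∀ i < hh n, qq n i < cc n := by
  induction n with
  | zero => intro i _; simp [qq, cc]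
  | succ n ih =>
    intro i hi
    by_cases hx : ∃ p : ℕ × ℕ, p.2 < hh n ∧ p.1 < n + 2 ∧ i = off n p.1 + p.2
    · obtain ⟨⟨k, j⟩, hj, hk, rfl⟩ := hx
      simp only at hj hk ⊢
      rw [qq_desc hj hk, cc]
      have := ih j hj
      have h2 : (qq n j + 1) * (n + 2) ≤ cc n * (n + 2) := Nat.mul_le_mul_right _ this
      have h3 := hh_pos (n + 1)
      nlinarith
    · rw [qq_spacer hx, cc]; omega

lemma desc_lt {n k j : ℕ} (hj : j < hh n) (hk : k < n + 2) :
    qq n j * (n + 2) + k < cc n * (n + 2) := by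
  have := qq_lt n j hj
  have h2 : (qq n j + 1) * (n + 2) ≤ cc n * (n + 2) := Nat.mul_le_mul_right _ this
  nlinarith

lemma qq_inj (n : ℕ) : ∀ i < hh n, ∀ i' < hh n, qq n i = qq n i' → i = i' := by
  induction n with
  | zero => intro i hi i' hi' _; simp [hh] at hi hi'; omega
  | succ n ih =>
    intro i hi i' hi' h
    by_cases hx : ∃ p : ℕ × ℕ, p.2 < hh n ∧ p.1 < n + 2 ∧ i = off n p.1 + p.2
    · obtain ⟨⟨k, j⟩, hj, hk, rfl⟩ := hx
      simp only at hj hk h ⊢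
      rw [qq_desc hj hk] at h
      by_cases hx' : ∃ p : ℕ × ℕ, p.2 < hh n ∧ p.1 < n + 2 ∧ i' = off n p.1 + p.2
      · obtain ⟨⟨k', j'⟩, hj', hk', rfl⟩ := hx'
        simp only at hj' hk' h ⊢
        rw [qq_desc hj' hk'] at h
        have h1 : k = k' := by
          have := congrArg (· % (n + 2)) h
          simpa [Nat.add_mod, Nat.mod_eq_of_lt hk, Nat.mod_eq_of_lt hk'] using this
        subst h1
        have h2 : qq n j = qq n j' := by
          have : qq n j * (n + 2) = qq n j' * (n + 2) := by omega
          exact Nat.eq_of_mul_eq_mul_right (by omega) this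
        rw [ih j hj j' hj' h2]
      · rw [qq_spacer hx'] at h
        have := desc_lt hj hk
        omega
    · rw [qq_spacer hx] at h
      by_cases hx' : ∃ p : ℕ × ℕ, p.2 < hh n ∧ p.1 < n + 2 ∧ i' = off n p.1 + p.2
      · obtain ⟨⟨k', j'⟩, hj', hk', rfl⟩ := hx'
        simp only at hj' hk' h ⊢
        rw [qq_desc hj' hk'] at h
        have := desc_lt hj' hk'
        omega
      · rw [qq_spacer hx'] at h
        omega

lemma ww_pos (n : ℕ) : 0 < ww n := by unfold ww; positivity

lemma ww_succ (n : ℕ) : ww (n + 1) = ww n / ((n + 2 : ℕ) : ℝ) := by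
  unfold ww
  rw [Nat.factorial_succ (n + 1)]
  push_cast
  field_simp
  ring

lemma ww_eq (n : ℕ) : ww n = ((n : ℝ) + 2) * ww (n + 1) := by
  rw [ww_succ]; push_cast; field_simp

/-- Left endpoint of a level. -/
noncomputable def ps (n j : ℕ) : ℝ := (qq n j : ℝ) * ww n

/-- Level. -/
def L (n j : ℕ) : Set ℝ := Set.Ioo (ps n j) (ps n j + ww n)

lemma mem_L {n j : ℕ} {x : ℝ} : x ∈ L n j ↔ (qq n j : ℝ) * ww n < x ∧ x < (qq n j + 1 : ℝ) * ww n := by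
  unfold L ps
  rw [Set.mem_Ioo, add_mul, one_mul]

lemma ps_desc {n k j : ℕ} (hj : j < hh n) (hk : k < n + 2) :
    ps (n + 1) (off n k + j) = ps n j + (k : ℝ) * ww (n + 1) := by
  unfold ps
  rw [qq_desc hj hk, ww_eq n]
  push_cast
  ring

lemma cell_eq {w x : ℝ} {a b : ℕ} (hw : 0 < w) (h1 : (a : ℝ) * w < x) (h2 : x < (a + 1 : ℝ) * w)
    (h3 : (b : ℝ) * w < x) (h4 : x < (b + 1 : ℝ) * w) : a = b := by
  have h5 : (a : ℝ) < b + 1 := lt_of_mul_lt_mul_right (h1.trans h4) hw.le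
  have h6 : (b : ℝ) < a + 1 := lt_of_mul_lt_mul_right (h3.trans h2) hw.le
  have h7 : a < b + 1 := by exact_mod_cast h5
  have h8 : b < a + 1 := by exact_mod_cast h6
  omega

lemma L_unique {n j j' : ℕ} {x : ℝ} (hj : j < hh n) (hj' : j' < hh n) (h : x ∈ L n j)
    (h' : x ∈ L n j') : j = j' := by
  rw [mem_L] at h h'
  exact qq_inj n j hj j' hj' (cell_eq (ww_pos n) h.1 h.2 h'.1 h'.2)

/-- Grid points of generation `n`. -/
def grid (n : ℕ) : Set ℝ := {x | ∃ z : ℤ, x = (z : ℝ) * ww n}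

lemma L_not_grid {n j : ℕ} {x : ℝ} (h : x ∈ L n j) : x ∉ grid n := by
  rintro ⟨z, rfl⟩
  rw [mem_L] at h
  have h1 := lt_of_mul_lt_mul_right h.1 (ww_pos n).le
  have h2 := lt_of_mul_lt_mul_right h.2 (ww_pos n).le
  have h3 : (qq n j : ℤ) < z := by exact_mod_cast h1
  have h4 : z < (qq n j : ℤ) + 1 := by exact_mod_cast h2
  omega

lemma grid_succ (n : ℕ) : grid n ⊆ grid (n + 1) := by
  rintro x ⟨z, rfl⟩
  exact ⟨z * (n + 2), by rw [ww_eq n]; push_cast; ring⟩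

lemma grid_mono : Monotone grid := monotone_nat_of_le_succ grid_succ

lemma grid_countable (n : ℕ) : (grid n).Countable := by
  have : grid n = Set.range (fun z : ℤ => (z : ℝ) * ww n) := by
    ext x; simp [grid, eq_comm]
  rw [this]; exact Set.countable_range _

/-- A non-grid point of a level is in a level of the next column. -/
lemma L_refine {n j : ℕ} {x : ℝ} (hj : j < hh n) (h : x ∈ L n j) (hg : x ∉ grid (n + 1)) :
    ∃ k < n + 2, x ∈ L (n + 1) (off n k + j) := by
  rw [mem_L, ww_eq n] at h
  have hw := ww_pos (n + 1)
  set z := ⌊x / ww (n + 1)⌋ with hz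
  have h1 : (z : ℝ) * ww (n + 1) ≤ x := by
    have := Int.floor_le (x / ww (n + 1)); rwa [le_div_iff₀ hw] at this
  have h2 : x < ((z : ℝ) + 1) * ww (n + 1) := by
    have := Int.lt_floor_add_one (x / ww (n + 1)); rwa [div_lt_iff₀ hw] at this
  have h3 : (z : ℝ) * ww (n + 1) < x := lt_of_le_of_ne h1 (fun he => hg ⟨z, he.symm⟩)
  have h4 : (qq n j : ℝ) * (n + 2) < z + 1 := by
    apply lt_of_mul_lt_mul_right _ hw.le
    calc _ = (qq n j : ℝ) * ((n + 2) * ww (n + 1)) := by ring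
      _ < _ := h.1.trans h2
  have h5 : (z : ℝ) < (qq n j + 1) * (n + 2) := by
    apply lt_of_mul_lt_mul_right _ hw.le
    calc _ < _ := h3.trans h.2
      _ = _ := by ring
  have h6 : (qq n j : ℤ) * (n + 2) < z + 1 := by exact_mod_cast h4
  have h7 : z < (qq n j + 1) * (n + 2) := by exact_mod_cast h5
  obtain ⟨k, hk⟩ : ∃ k : ℕ, z = (qq n j : ℤ) * (n + 2) + k :=
    ⟨(z - (qq n j : ℤ) * (n + 2)).toNat, by omega⟩
  have hk2 : k < n + 2 := by
    have : (k : ℤ) < n + 2 := by linarith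
    omega
  refine ⟨k, hk2, ?_⟩
  rw [mem_L, qq_desc hj hk2]
  have : ((qq n j * (n + 2) + k : ℕ) : ℝ) = z := by rw [hk]; push_cast; ring
  rw [this]
  exact ⟨h3, h2⟩

lemma L_sub {n j k : ℕ} (hj : j < hh n) (hk : k < n + 2) : L (n + 1) (off n k + j) ⊆ L n j := by
  intro x hx
  have hw := ww_pos (n + 1)
  unfold L at hx ⊢
  rw [ps_desc hj hk, Set.mem_Ioo] at hx
  rw [Set.mem_Ioo, ww_eq n]
  have h1 : (k : ℝ) + 1 ≤ n + 2 := by exact_mod_cast hk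
  have h2 : ((k : ℝ) + 1) * ww (n + 1) ≤ (n + 2) * ww (n + 1) := by gcongr
  have h3 : 0 ≤ (k : ℝ) * ww (n + 1) := by positivity
  constructor <;> nlinarith

/-- Translation vector. -/
noncomputable def tr (n j : ℕ) : ℝ := ps n (j + 1) - ps n j

lemma tr_refine {n n' j : ℕ} {x : ℝ} (hn : n ≤ n') (hj : j + 1 < hh n) (h : x ∈ L n j)
    (hg : x ∉ grid n') : ∃ j', j' + 1 < hh n' ∧ x ∈ L n' j' ∧ tr n' j' = tr n j := by
  induction n', hn using Nat.le_induction with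
  | base => exact ⟨j, hj, h, rfl⟩
  | succ m hm ih =>
    obtain ⟨j', h1, h2, h3⟩ := ih (fun hx => hg (grid_succ m hx))
    obtain ⟨k, hk, hx⟩ := L_refine (by omega) h2 hg
    have h4 := off_add_lt h1 hk
    have h5 := hh_succ m
    refine ⟨off m k + j', by omega, hx, ?_⟩
    rw [← h3, tr, tr, add_assoc, ps_desc h1 hk, ps_desc (by omega) hk]
    ring

lemma mem_tr {n j : ℕ} {x : ℝ} : x + tr n j ∈ L n (j + 1) ↔ x ∈ L n j := by
  unfold L tr
  simp only [Set.mem_Ioo]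
  constructor <;> rintro ⟨h1, h2⟩ <;> constructor <;> linarith

lemma grid_tr {n n' j : ℕ} {x : ℝ} (hn : n ≤ n') : x + tr n j ∈ grid n' ↔ x ∈ grid n' := by
  have h1 : tr n j ∈ grid n' := grid_mono hn
    ⟨(qq n (j + 1) : ℤ) - qq n j, by unfold tr ps; push_cast; ring⟩
  obtain ⟨z, hz⟩ := h1
  constructor
  · rintro ⟨y, hy⟩
    exact ⟨y - z, by push_cast; linarith⟩
  · rintro ⟨y, hy⟩
    exact ⟨y + z, by push_cast; linarith⟩

/-- Points not always in the top level. -/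
def Dom : Set ℝ := {x | ∃ n j, j + 1 < hh n ∧ x ∈ L n j}
/-- Points not always in the bottom level. -/
def Ran : Set ℝ := {x | ∃ n j, j + 1 < hh n ∧ x ∈ L n (j + 1)}
/-- The space. -/
def XX : Set ℝ := ⋃ n, ⋃ j < hh n, Set.Ioo (ps n j) (ps n j + ww n)

lemma mem_XX {x : ℝ} : x ∈ XX ↔ ∃ n j, j < hh n ∧ x ∈ L n j := by
  simp only [XX, Set.mem_iUnion, L, exists_prop]

lemma Dom_sub : Dom ⊆ XX := by
  rintro x ⟨n, j, hj, hx⟩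
  exact mem_XX.2 ⟨n, j, by omega, hx⟩

lemma Ran_sub : Ran ⊆ XX := by
  rintro x ⟨n, j, hj, hx⟩
  exact mem_XX.2 ⟨n, j + 1, by omega, hx⟩

lemma tr_unique {n j n' j' : ℕ} {x : ℝ} (hj : j + 1 < hh n) (hx : x ∈ L n j)
    (hj' : j' + 1 < hh n') (hx' : x ∈ L n' j') : tr n j = tr n' j' := by
  wlog h : n ≤ n' generalizing n j n' j'
  · exact (this hj' hx' hj hx (by omega)).symm
  obtain ⟨i, h1, h2, h3⟩ := tr_refine h hj hx (L_not_grid hx')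
  have := L_unique (by omega) (by omega) h2 hx'
  rw [← h3, this]

lemma tr_inj {n j n' j' : ℕ} {x x' : ℝ} (hj : j + 1 < hh n) (hx : x ∈ L n j)
    (hj' : j' + 1 < hh n') (hx' : x' ∈ L n' j') (he : x + tr n j = x' + tr n' j') : x = x' := by
  wlog h : n ≤ n' generalizing n j n' j' x x'
  · exact (this hj' hx' hj hx he.symm (by omega)).symm
  have hg : x + tr n j ∉ grid n' := by
    rw [he, grid_tr le_rfl]
    exact L_not_grid hx'
  rw [grid_tr h] at hg
  obtain ⟨i, h1, h2, h3⟩ := tr_refine h hj hx hg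
  rw [← h3] at he
  have h4 := mem_tr.2 h2
  rw [he] at h4
  have h5 := L_unique (by omega) (by omega) h4 (mem_tr.2 hx')
  have h6 : i = j' := by omega
  subst h6
  linarith

open Classical in
/-- The partially defined map. -/
noncomputable def T0 (x : ℝ) : ℝ :=
  if hx : ∃ p : ℕ × ℕ, p.2 + 1 < hh p.1 ∧ x ∈ L p.1 p.2 then
    x + tr hx.choose.1 hx.choose.2 else x

lemma T0_eq {n j : ℕ} {x : ℝ} (hj : j + 1 < hh n) (hx : x ∈ L n j) : T0 x = x + tr n j := by
  have h : ∃ p : ℕ × ℕ, p.2 + 1 < hh p.1 ∧ x ∈ L p.1 p.2 := ⟨(n, j), hj, hx⟩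
  rw [T0, dif_pos h, tr_unique h.choose_spec.1 h.choose_spec.2 hj hx]

lemma T0_bij : Set.BijOn T0 Dom Ran := by
  refine ⟨?_, ?_, ?_⟩
  · rintro x ⟨n, j, hj, hx⟩
    rw [T0_eq hj hx]
    exact ⟨n, j, hj, mem_tr.2 hx⟩
  · rintro x ⟨n, j, hj, hx⟩ x' ⟨n', j', hj', hx'⟩ h
    rw [T0_eq hj hx, T0_eq hj' hx'] at h
    exact tr_inj hj hx hj' hx' h
  · rintro y ⟨n, j, hj, hy⟩
    have : y - tr n j ∈ L n j := by rw [← mem_tr]; simpa using hy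
    exact ⟨y - tr n j, ⟨n, j, hj, this⟩, by rw [T0_eq hj this]; ring⟩

lemma two_hh (n : ℕ) : 2 ≤ hh (n + 1) := by
  have := pp_pos n
  rw [hh_succ]; omega

lemma not_grid_Dom {x : ℝ} (hx : x ∈ XX) (hg : ∀ n, x ∉ grid n) : x ∈ Dom := by
  obtain ⟨n, j, hj, h⟩ := mem_XX.1 hx
  obtain ⟨k, hk, h2⟩ := L_refine hj h (hg (n + 1))
  refine ⟨n + 1, off n k + j, ?_, h2⟩
  have := off_add_lt hj hk
  have := pp_pos n
  rw [hh_succ]; omega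

lemma qq_zero (n : ℕ) : qq n 0 = 0 := by
  induction n with
  | zero => rfl
  | succ n ih =>
    have := qq_desc (n := n) (k := 0) (j := 0) (hh_pos n) (by omega)
    simpa [off, ih] using this

lemma ww_tendsto : Tendsto ww atTop (nhds 0) := by
  have h := tendsto_one_div_add_atTop_nhds_zero_nat (𝕜 := ℝ)
  refine squeeze_zero (fun n => (ww_pos n).le) (fun n => ?_) h
  unfold ww
  apply one_div_le_one_div_of_le (by positivity)
  have := Nat.self_le_factorial (n + 1)
  exact_mod_cast this

lemma not_grid_Ran {x : ℝ} (hx : x ∈ XX) (hg : ∀ n, x ∉ grid n) : x ∈ Ran := by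
  obtain ⟨n, j, hj, h⟩ := mem_XX.1 hx
  by_contra hR
  have key : ∀ m, n ≤ m → x ∈ L m 0 := by
    intro m hm
    have : ∃ i, i < hh m ∧ x ∈ L m i := by
      induction m, hm using Nat.le_induction with
      | base => exact ⟨j, hj, h⟩
      | succ m hm ih =>
        obtain ⟨i, hi, hx⟩ := ih
        obtain ⟨k, hk, h2⟩ := L_refine hi hx (hg (m + 1))
        refine ⟨off m k + i, ?_, h2⟩
        have := off_add_lt hi hk
        rw [hh_succ]; omega
    obtain ⟨i, hi, hx⟩ := this
    cases i with
    | zero => exact hx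
    | succ i => exact absurd ⟨m, i, hi, hx⟩ hR
  have h0 : 0 < x := by
    have := (mem_L.1 (key n le_rfl)).1
    simpa [qq_zero] using this
  obtain ⟨m, hm⟩ := ((ww_tendsto.eventually_lt_const h0).and (eventually_ge_atTop n)).exists
  have := (mem_L.1 (key m hm.2)).2
  simp [qq_zero] at this
  linarith [hm.1]

lemma compl_Dom_countable : (XX \ Dom).Countable := by
  refine Set.Countable.mono ?_ (Set.countable_iUnion grid_countable)
  rintro x ⟨hx, hD⟩
  by_contra h
  simp only [Set.mem_iUnion, not_exists] at h
  exact hD (not_grid_Dom hx h)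

lemma compl_Ran_countable : (XX \ Ran).Countable := by
  refine Set.Countable.mono ?_ (Set.countable_iUnion grid_countable)
  rintro x ⟨hx, hD⟩
  by_contra h
  simp only [Set.mem_iUnion, not_exists] at h
  exact hD (not_grid_Ran hx h)

lemma ww_anti : StrictAnti ww := by
  apply strictAnti_nat_of_succ_lt
  intro n
  rw [ww_eq n]
  have := ww_pos (n + 1)
  have h2 : (0 : ℝ) ≤ n := by positivity
  nlinarith

lemma compl_Ran_infinite : (XX \ Ran).Infinite := by
  refine Set.infinite_of_injective_forall_mem (f := fun n => ww (n + 1))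
    (fun a b h => by have := ww_anti.injective h; omega) ?_
  intro n
  have hlt : ∀ m, m ≤ n → ww (n + 1) ∈ L m 0 := by
    intro m hm
    rw [mem_L, qq_zero]
    have h1 := ww_pos (n + 1)
    have h2 : ww (n + 1) < ww m := ww_anti (by omega)
    simp [h1, h2]
  refine ⟨mem_XX.2 ⟨0, 0, hh_pos 0, hlt 0 (by omega)⟩, ?_⟩
  rintro ⟨m, j, hj, hx⟩
  rcases Nat.lt_or_ge n m with h | h
  · exact L_not_grid hx (grid_mono (show n + 1 ≤ m from h) ⟨1, by simp⟩)
  · have := L_unique hj (hh_pos m) hx (hlt m h)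
    omega

lemma top_spacer (n : ℕ) : cc n * (n + 2) ≤ qq (n + 1) (hh (n + 1) - 1) := by
  rw [qq_spacer]
  · omega
  · rintro ⟨⟨k, j⟩, hj, hk, h⟩
    have h1 := off_add_lt hj hk
    have h2 := pp_pos n
    rw [hh_succ] at h
    simp only at h h1
    omega

lemma ccww_mono : Monotone (fun n => (cc n : ℝ) * ww n) := by
  apply monotone_nat_of_le_succ
  intro n
  rw [ww_eq n, cc]
  have := ww_pos (n + 1)
  push_cast
  have h2 : 0 ≤ (hh (n + 1) : ℝ) * ww (n + 1) := by positivity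
  nlinarith

lemma L_lt {n j : ℕ} {x : ℝ} (hj : j < hh n) (hx : x ∈ L n j) : x < (cc n : ℝ) * ww n := by
  have h := (mem_L.1 hx).2
  have h1 : (qq n j : ℝ) + 1 ≤ cc n := by exact_mod_cast qq_lt n j hj
  have := ww_pos n
  nlinarith

lemma compl_Dom_infinite : (XX \ Dom).Infinite := by
  set z : ℕ → ℝ := fun n => ps (n + 1) (hh (n + 1) - 1) + ww (n + 2) with hz
  have hzL : ∀ n, z n ∈ L (n + 1) (hh (n + 1) - 1) := by
    intro n
    have h1 := ww_pos (n + 2)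
    have h2 : ww (n + 2) < ww (n + 1) := ww_anti (by omega)
    simp [L, hz, h1, h2]
  have hlow : ∀ n, (cc n : ℝ) * ww n < z n := by
    intro n
    have h1 := (mem_L.1 (hzL n)).1
    have h2 : (cc n * (n + 2) : ℝ) ≤ qq (n + 1) (hh (n + 1) - 1) := by
      exact_mod_cast top_spacer n
    have h3 := ww_pos (n + 1)
    rw [ww_eq n]
    nlinarith
  have htop : ∀ n, hh (n + 1) - 1 < hh (n + 1) := fun n => by
    have := hh_pos (n + 1); omega
  refine Set.infinite_of_injective_forall_mem (f := z) ?_ ?_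
  · apply StrictMono.injective
    apply strictMono_nat_of_lt_succ
    intro n
    exact (L_lt (htop n) (hzL n)).trans (hlow (n + 1))
  · intro n
    refine ⟨mem_XX.2 ⟨n + 1, _, htop n, hzL n⟩, ?_⟩
    rintro ⟨m, j, hj, hx⟩
    rcases Nat.lt_trichotomy m (n + 1) with h | h | h
    · have h1 := L_lt (by omega) hx
      have h2 : (cc m : ℝ) * ww m ≤ (cc n : ℝ) * ww n := ccww_mono (by omega)
      linarith [hlow n]
    · subst h
      have := L_unique (by omega) (htop n) hx (hzL n)
      omega
    · refine L_not_grid hx (grid_mono (show n + 2 ≤ m from h)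
        ⟨(qq (n + 1) (hh (n + 1) - 1) : ℤ) * (n + 3) + 1, ?_⟩)
      simp only [hz, ps]
      rw [ww_eq (n + 1)]
      push_cast
      ring

lemma bij_union {f : ℝ → ℝ} {s t s' t' : Set ℝ} (h : Set.BijOn f s t) (h' : Set.BijOn f s' t')
    (ht : Disjoint t t') : Set.BijOn f (s ∪ s') (t ∪ t') := by
  refine h.union h' ?_
  rintro x (hx | hx) y (hy | hy) he
  · exact h.injOn hx hy he
  · exact absurd (he ▸ h'.mapsTo hy) (Set.disjoint_left.1 ht (h.mapsTo hx))
  · exact absurd (h'.mapsTo hx) (Set.disjoint_left.1 ht (he ▸ h.mapsTo hy))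
  · exact h'.injOn hx hy he

lemma Dom_open : IsOpen Dom := by
  have : Dom = ⋃ n, ⋃ j, ⋃ (_ : j + 1 < hh n), L n j := by
    ext x; simp [Dom]
  rw [this]
  exact isOpen_iUnion fun n => isOpen_iUnion fun j => isOpen_iUnion fun _ => isOpen_Ioo

lemma Ran_open : IsOpen Ran := by
  have : Ran = ⋃ n, ⋃ j, ⋃ (_ : j + 1 < hh n), L n (j + 1) := by
    ext x; simp [Ran]
  rw [this]
  exact isOpen_iUnion fun n => isOpen_iUnion fun j => isOpen_iUnion fun _ => isOpen_Ioo

lemma T0_deriv {x : ℝ} (hx : x ∈ Dom) : HasDerivAt T0 1 x := by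
  obtain ⟨n, j, hj, h⟩ := hx
  have h1 : HasDerivAt (fun y => y + tr n j) 1 x := (hasDerivAt_id x).add_const _
  refine h1.congr_of_eventuallyEq ?_
  filter_upwards [isOpen_Ioo.mem_nhds h] with y hy
  exact T0_eq hj hy

lemma exists_T : ∃ T : ℝ ≃ᵐ ℝ, (∀ x ∈ Dom, T x = T0 x) ∧ Set.BijOn T XX XX := by
  classical
  have : Countable ↥(XX \ Dom) := compl_Dom_countable.to_subtype
  have : Countable ↥(XX \ Ran) := compl_Ran_countable.to_subtype
  have : Infinite ↥(XX \ Dom) := compl_Dom_infinite.to_subtype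
  have : Infinite ↥(XX \ Ran) := compl_Ran_infinite.to_subtype
  obtain ⟨e⟩ : Nonempty (↥(XX \ Dom) ≃ ↥(XX \ Ran)) := nonempty_equiv_of_countable
  set Tf : ℝ → ℝ := fun x => if x ∈ Dom then T0 x else
    if hx : x ∈ XX \ Dom then (e ⟨x, hx⟩ : ℝ) else x with hTf
  have hD : ∀ x ∈ Dom, Tf x = T0 x := fun x hx => by simp [hTf, hx]
  have hC : ∀ x (hx : x ∈ XX \ Dom), Tf x = (e ⟨x, hx⟩ : ℝ) := fun x hx => by
    have := hx.2
    simp only [hTf]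
    rw [if_neg hx.2, dif_pos hx]
  have hN : ∀ x ∉ XX, Tf x = x := fun x hx => by
    have h1 : x ∉ Dom := fun h => hx (Dom_sub h)
    simp [hTf, hx, h1]
  have b1 : Set.BijOn Tf Dom Ran := T0_bij.congr (fun x hx => (hD x hx).symm)
  have b2 : Set.BijOn Tf (XX \ Dom) (XX \ Ran) := by
    refine ⟨fun x hx => ?_, fun x hx y hy h => ?_, fun y hy => ?_⟩
    · rw [hC x hx]; exact (e ⟨x, hx⟩).2
    · rw [hC x hx, hC y hy] at h
      have := e.injective (Subtype.ext h)
      exact congrArg Subtype.val this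
    · refine ⟨e.symm ⟨y, hy⟩, (e.symm ⟨y, hy⟩).2, ?_⟩
      rw [hC _ (e.symm ⟨y, hy⟩).2]
      simp
  have b3 : Set.BijOn Tf XXᶜ XXᶜ :=
    (Set.bijOn_id _).congr (fun x hx => (hN x hx).symm)
  have b4 : Set.BijOn Tf XX XX := by
    have := bij_union b1 b2 Set.disjoint_sdiff_right
    rwa [Set.union_diff_cancel Dom_sub, Set.union_diff_cancel Ran_sub] at this
  have b5 : Set.BijOn Tf Set.univ Set.univ := by
    have := bij_union b4 b3 disjoint_compl_right
    rwa [Set.union_compl_self] at this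
  have hbij : Function.Bijective Tf := Set.bijOn_univ.1 b5
  have hmeas : Measurable Tf := by
    have h1 : Measurable (Dom.piecewise T0 id) :=
      ContinuousOn.measurable_piecewise
        (fun x hx => (T0_deriv hx).continuousAt.continuousWithinAt) continuousOn_id
        Dom_open.measurableSet
    refine h1.measurable_of_countable_ne (compl_Dom_countable.mono ?_)
    intro x hx
    by_contra hcon
    apply hx
    by_cases hd : x ∈ Dom
    · rw [hD x hd, Set.piecewise_eq_of_mem _ _ _ hd]
    · have : x ∉ XX := fun h => hcon ⟨h, hd⟩
      rw [hN x this, Set.piecewise_eq_of_notMem _ _ _ hd]; rfl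
  have hemb : MeasurableEmbedding Tf := hmeas.measurableEmbedding hbij.injective
  refine ⟨⟨Equiv.ofBijective Tf hbij, hmeas, ?_⟩, hD, b4⟩
  intro s hs
  rw [← Equiv.image_eq_preimage_symm]
  exact hemb.measurableSet_image.2 hs

lemma XX_meas : MeasurableSet XX := by
  unfold XX
  exact MeasurableSet.iUnion fun n => MeasurableSet.iUnion fun j =>
    MeasurableSet.iUnion fun _ => measurableSet_Ioo

lemma T_pres (T : ℝ ≃ᵐ ℝ) (hT : ∀ x ∈ Dom, T x = T0 x) (hb : Set.BijOn T XX XX) :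
    MeasurePreserving T (volume.restrict XX) (volume.restrict XX) := by
  refine ⟨T.measurable, ?_⟩
  ext B hB
  rw [Measure.map_apply T.measurable hB, Measure.restrict_apply (T.measurable hB),
    Measure.restrict_apply hB]
  have e1 : volume (T ⁻¹' B ∩ XX) = volume (T ⁻¹' B ∩ Dom) := by
    apply le_antisymm
    · calc volume (T ⁻¹' B ∩ XX) ≤ volume ((T ⁻¹' B ∩ Dom) ∪ (XX \ Dom)) := by
            apply measure_mono
            rintro x ⟨h1, h2⟩
            by_cases hd : x ∈ Dom
            · exact Or.inl ⟨h1, hd⟩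
            · exact Or.inr ⟨h2, hd⟩
        _ ≤ volume (T ⁻¹' B ∩ Dom) + volume (XX \ Dom) := measure_union_le _ _
        _ = _ := by rw [compl_Dom_countable.measure_zero, add_zero]
    · exact measure_mono (Set.inter_subset_inter_right _ Dom_sub)
  have e2 : volume (B ∩ XX) = volume (B ∩ Ran) := by
    apply le_antisymm
    · calc volume (B ∩ XX) ≤ volume ((B ∩ Ran) ∪ (XX \ Ran)) := by
            apply measure_mono
            rintro x ⟨h1, h2⟩
            by_cases hd : x ∈ Ran
            · exact Or.inl ⟨h1, hd⟩
            · exact Or.inr ⟨h2, hd⟩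
        _ ≤ volume (B ∩ Ran) + volume (XX \ Ran) := measure_union_le _ _
        _ = _ := by rw [compl_Ran_countable.measure_zero, add_zero]
    · exact measure_mono (Set.inter_subset_inter_right _ Ran_sub)
  rw [e1, e2]
  have hbT : Set.BijOn T Dom Ran := T0_bij.congr (fun x hx => (hT x hx).symm)
  have himg : T0 '' (T ⁻¹' B ∩ Dom) = B ∩ Ran := by
    ext y
    constructor
    · rintro ⟨x, ⟨h1, h2⟩, rfl⟩
      rw [← hT x h2]
      exact ⟨h1, hbT.mapsTo h2⟩
    · rintro ⟨h1, h2⟩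
      obtain ⟨x, hx, rfl⟩ := hbT.surjOn h2
      exact ⟨x, ⟨h1, hx⟩, (hT x hx).symm⟩
  have hms : MeasurableSet (T ⁻¹' B ∩ Dom) := (T.measurable hB).inter Dom_open.measurableSet
  have := lintegral_image_eq_lintegral_abs_deriv_mul (f := T0) (f' := fun _ => 1) hms
    (fun x hx => (T0_deriv hx.2).hasDerivWithinAt) (T0_bij.injOn.mono Set.inter_subset_right)
    (fun _ => 1)
  rw [himg] at this
  simpa using this.symm

/-- The transformation. -/
noncomputable def S : RankOne where
  X := XX
  T := exists_T.choose
  r := fun n => n + 2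
  s := sp
  h := hh
  w := ww
  pos := ps
  hr := fun n => by omega
  h0 := rfl
  w0 := by simp [ww]
  pos0 := by simp [ps, qq]
  hrec := fun n => (off_top n).symm
  wrec := ww_succ
  hX := rfl
  disj := by
    intro n j hj j' hj' hne
    rw [Set.disjoint_left]
    intro x hx hx'
    exact hne (L_unique hj hj' hx hx')
  stack := fun n j hj k hk => ps_desc hj hk
  Tmap := by
    intro n j hj x hx
    rw [exists_T.choose_spec.1 x ⟨n, j, hj, hx⟩]
    exact T0_eq hj hx
  Tbij := exists_T.choose_spec.2
  Tpres := T_pres _ exists_T.choose_spec.1 exists_T.choose_spec.2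

end R1


namespace R1

/-- Relative heights, in column `j+d`, of the descendants of a level of column `j`. -/
def R (j : ℕ) : ℕ → Finset ℕ
  | 0 => {0}
  | d + 1 => (Finset.range (j + d + 2) ×ˢ R j d).image (fun p => off (j + d) p.1 + p.2)

lemma R_lt (j d : ℕ) : ∀ a < hh j, ∀ x ∈ R j d, a + x < hh (j + d) := by
  induction d with
  | zero => intro a ha x hx; simp [R] at hx; subst hx; simpa using ha
  | succ d ih =>
    intro a ha x hx
    simp only [R, Finset.mem_image, Finset.mem_product, Finset.mem_range, Prod.exists] at hx
    obtain ⟨k, y, ⟨hk, hy⟩, rfl⟩ := hx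
    have := off_add_lt (ih a ha y hy) hk
    have h2 := hh_succ (j + d)
    rw [show j + (d + 1) = j + d + 1 from rfl]
    omega

lemma R_lt_pp (j d : ℕ) {a x n : ℕ} (ha : a < hh j) (hx : x ∈ R j (d + 1)) (hn : j + d = n) :
    a + x < pp n := by
  subst hn
  simp only [R, Finset.mem_image, Finset.mem_product, Finset.mem_range, Prod.exists] at hx
  obtain ⟨k, y, ⟨hk, hy⟩, rfl⟩ := hx
  have := off_add_lt (R_lt j d a ha y hy) hk
  omega

lemma R_sum (j d : ℕ) {M : Type*} [AddCommMonoid M] (F : ℕ → M) :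
    ∑ x ∈ R j (d + 1), F x =
      ∑ k ∈ Finset.range (j + d + 2), ∑ x ∈ R j d, F (off (j + d) k + x) := by
  rw [R, Finset.sum_image, Finset.sum_product]
  rintro ⟨k, x⟩ h ⟨k', x'⟩ h' he
  simp only [Finset.coe_product, Set.mem_prod, Finset.mem_coe] at h h' he
  have h1 := R_lt j d 0 (hh_pos j) x h.2
  have h2 := R_lt j d 0 (hh_pos j) x' h'.2
  obtain ⟨h3, h4⟩ := off_inj (by omega) (by omega) he
  rw [h3, h4]

lemma R_card_succ (j d : ℕ) : (R j (d + 1)).card = (j + d + 2) * (R j d).card := by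
  have := R_sum j d (fun _ => (1 : ℕ))
  simpa using this

lemma R_card (j d : ℕ) : ((R j d).card : ℝ) * ww (j + d) = ww j := by
  induction d with
  | zero => simp [R]
  | succ d ih =>
    rw [R_card_succ, ← ih, ← add_assoc, ww_eq (j + d)]
    push_cast
    ring

lemma R_L_sub (j d : ℕ) : ∀ a < hh j, ∀ x ∈ R j d, L (j + d) (a + x) ⊆ L j a := by
  induction d with
  | zero => intro a ha x hx; simp [R] at hx; subst hx; simp
  | succ d ih =>
    intro a ha x hx
    simp only [R, Finset.mem_image, Finset.mem_product, Finset.mem_range, Prod.exists] at hx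
    obtain ⟨k, y, ⟨hk, hy⟩, rfl⟩ := hx
    have h1 := L_sub (R_lt j d a ha y hy) hk
    have h2 : a + (off (j + d) k + y) = off (j + d) k + (a + y) := by ring
    rw [h2]
    exact h1.trans (ih a ha y hy)

lemma R_L_refine (j d : ℕ) {a : ℕ} (ha : a < hh j) {z : ℝ} (hz : z ∈ L j a)
    (hg : z ∉ grid (j + d)) : ∃ x ∈ R j d, z ∈ L (j + d) (a + x) := by
  induction d with
  | zero => exact ⟨0, by simp [R], by simpa using hz⟩
  | succ d ih =>
    obtain ⟨x, hx, h⟩ := ih (fun h => hg (grid_succ _ h))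
    obtain ⟨k, hk, h2⟩ := L_refine (R_lt j d a ha x hx) h hg
    refine ⟨off (j + d) k + x, ?_, ?_⟩
    · simp only [R, Finset.mem_image, Finset.mem_product, Finset.mem_range, Prod.exists]
      exact ⟨k, x, ⟨hk, hx⟩, rfl⟩
    · have h3 : a + (off (j + d) k + x) = off (j + d) k + (a + x) := by ring
      rw [h3]; exact h2

lemma L_nonempty (n j : ℕ) : (L n j).Nonempty := by
  have := ww_pos n
  exact ⟨ps n j + ww n / 2, by unfold L; constructor <;> linarith⟩

/-- Descendants of a set of levels. -/
def Des (P : Finset ℕ) (j d : ℕ) : Finset ℕ := (P ×ˢ R j d).image (fun p => p.1 + p.2)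

lemma Des_sum {P : Finset ℕ} {j : ℕ} (hP : ∀ a ∈ P, a < hh j) (d : ℕ) (F : ℕ → ℝ) :
    ∑ z ∈ Des P j d, F z = ∑ a ∈ P, ∑ x ∈ R j d, F (a + x) := by
  rw [Des, Finset.sum_image, Finset.sum_product]
  rintro ⟨k, x⟩ h ⟨k', x'⟩ h' he
  simp only [Finset.coe_product, Set.mem_prod, Finset.mem_coe] at h h' he
  obtain ⟨z, hz⟩ := L_nonempty (j + d) (k + x)
  have h1 := R_L_sub j d k (hP k h.1) x h.2 hz
  rw [he] at hz
  have h2 := R_L_sub j d k' (hP k' h'.1) x' h'.2 hz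
  have h3 := L_unique (hP k h.1) (hP k' h'.1) h1 h2
  have h4 : x = x' := by omega
  rw [h3, h4]

lemma R0_lt {j a : ℕ} (h : a ∈ R 0 j) : a < hh j := by
  have := R_lt 0 j 0 (hh_pos 0) a h
  simpa using this

lemma Des_R (j d : ℕ) : Des (R 0 j) j d = R 0 (j + d) := by
  induction d with
  | zero => ext x; simp [Des, R]
  | succ d ih =>
    ext z
    rw [← add_assoc, R, ← ih]
    simp only [Des, R, Finset.mem_image, Finset.mem_product, Finset.mem_range, Prod.exists,
      zero_add]
    constructor
    · rintro ⟨a, x, ⟨ha, k, y, ⟨hk, hy⟩, rfl⟩, rfl⟩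
      exact ⟨k, a + y, ⟨hk, a, y, ⟨ha, hy⟩, rfl⟩, by ring⟩
    · rintro ⟨k, x, ⟨hk, a, y, ⟨ha, hy⟩, rfl⟩, rfl⟩
      exact ⟨a, off (j + d) k + y, ⟨ha, k, y, ⟨hk, hy⟩, rfl⟩, by ring⟩

/-! ### almost shift invariance -/

/-- The variation bound. -/
noncomputable def vv (j : ℕ) : ℕ → ℝ
  | 0 => 2
  | d + 1 => (1 - ((j + d : ℕ) + 1 : ℝ) / ((j + d : ℕ) + 2) ^ 2) * vv j d +
      2 / (((j + d : ℕ) : ℝ) + 2) ^ 2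

lemma diag_sum {n : ℕ} (G : ℕ → ℕ → ℝ) :
    ∑ k ∈ Finset.range (n + 2), ∑ k' ∈ Finset.range (n + 2), (if k = k' + 1 then G k k' else 0) =
      ∑ i ∈ Finset.range (n + 1), G (i + 1) i := by
  rw [Finset.sum_comm, Finset.sum_range_succ]
  have h0 : ∑ k ∈ Finset.range (n + 2), (if k = n + 1 + 1 then G k (n + 1) else 0) = 0 := by
    apply Finset.sum_eq_zero
    intro k hk
    simp at hk
    rw [if_neg (by omega)]
  rw [h0, add_zero]
  apply Finset.sum_congr rfl
  intro i hi
  simp at hi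
  rw [Finset.sum_ite_eq', if_pos (by simp; omega)]

lemma pair_bound {n : ℕ} {F : ℕ → ℕ → ℝ} {V W : ℝ} (hF : ∀ k k', |F k k'| ≤ V)
    (hW : |∑ i ∈ Finset.range (n + 1), F (i + 1) i| ≤ W) :
    |∑ k ∈ Finset.range (n + 2), ∑ k' ∈ Finset.range (n + 2), F k k'| ≤
      (((n : ℝ) + 2) ^ 2 - (n + 1)) * V + W := by
  have h1 : ∑ k ∈ Finset.range (n + 2), ∑ k' ∈ Finset.range (n + 2), F k k' =
      ∑ k ∈ Finset.range (n + 2), ∑ k' ∈ Finset.range (n + 2), (if k = k' + 1 then 0 else F k k')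
      + ∑ i ∈ Finset.range (n + 1), F (i + 1) i := by
    rw [← diag_sum F, ← Finset.sum_add_distrib]
    refine Finset.sum_congr rfl fun k _ => ?_
    rw [← Finset.sum_add_distrib]
    refine Finset.sum_congr rfl fun k' _ => ?_
    split_ifs <;> simp
  have h2 : |∑ k ∈ Finset.range (n + 2), ∑ k' ∈ Finset.range (n + 2),
      (if k = k' + 1 then 0 else F k k')| ≤ (((n : ℝ) + 2) ^ 2 - (n + 1)) * V := by
    calc _ ≤ ∑ k ∈ Finset.range (n + 2), ∑ k' ∈ Finset.range (n + 2),
          |if k = k' + 1 then 0 else F k k'| :=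
        (Finset.abs_sum_le_sum_abs _ _).trans
          (Finset.sum_le_sum fun k _ => Finset.abs_sum_le_sum_abs _ _)
      _ ≤ ∑ k ∈ Finset.range (n + 2), ∑ k' ∈ Finset.range (n + 2),
          (V - if k = k' + 1 then V else 0) := by
        refine Finset.sum_le_sum fun k _ => Finset.sum_le_sum fun k' _ => ?_
        split_ifs
        · simp
        · simpa using hF k k'
      _ = _ := by
        simp only [Finset.sum_sub_distrib]
        rw [diag_sum (fun _ _ => V)]
        simp
        ring
  rw [h1]
  exact (abs_add_le _ _).trans (add_le_add h2 hW)

lemma off_step {n i : ℕ} (hi : i < n + 1) : off n (i + 1) = off n i + (hh n + i) := by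
  rw [off_succ, sp, if_pos hi]

lemma vv_bound (j d : ℕ) : ∀ σ : ℤ → ℝ, (∀ z, |σ z| ≤ 1) →
    |∑ x ∈ R j d, ∑ y ∈ R j d, (σ ((x : ℤ) - y + 1) - σ ((x : ℤ) - y))| ≤
      vv j d * ((R j d).card : ℝ) ^ 2 := by
  induction d with
  | zero =>
    intro σ hσ
    simp only [R, Finset.sum_singleton, vv, Finset.card_singleton]
    have h1 := hσ ((0 : ℕ) - (0 : ℕ) + 1)
    have h2 := hσ ((0 : ℕ) - (0 : ℕ))
    have h3 := abs_sub (σ ((0 : ℕ) - (0 : ℕ) + 1)) (σ ((0 : ℕ) - (0 : ℕ)))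
    norm_num at h1 h2 h3 ⊢
    linarith
  | succ d ih =>
    intro σ hσ
    set n := j + d with hn
    set F : ℕ → ℕ → ℝ := fun k k' => ∑ x ∈ R j d, ∑ y ∈ R j d,
      (σ (((off n k + x : ℕ) : ℤ) - (off n k' + y : ℕ) + 1) -
        σ (((off n k + x : ℕ) : ℤ) - (off n k' + y : ℕ))) with hFdef
    have e1 : ∑ x ∈ R j (d + 1), ∑ y ∈ R j (d + 1), (σ ((x : ℤ) - y + 1) - σ ((x : ℤ) - y)) =
        ∑ k ∈ Finset.range (n + 2), ∑ k' ∈ Finset.range (n + 2), F k k' := by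
      rw [R_sum]
      refine Finset.sum_congr rfl fun k _ => ?_
      simp only [hFdef]
      rw [Finset.sum_comm (s := Finset.range (n + 2))]
      refine Finset.sum_congr rfl fun x _ => ?_
      rw [R_sum]
    have hF : ∀ k k', |F k k'| ≤ vv j d * ((R j d).card : ℝ) ^ 2 := by
      intro k k'
      have := ih (fun z => σ (z + off n k - off n k')) (fun z => hσ _)
      refine le_of_eq_of_le ?_ this
      simp only [hFdef]
      congr 1
      refine Finset.sum_congr rfl fun x _ => Finset.sum_congr rfl fun y _ => ?_
      congr 2 <;> push_cast <;> ring
    have hW : |∑ i ∈ Finset.range (n + 1), F (i + 1) i| ≤ 2 * ((R j d).card : ℝ) ^ 2 := by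
      have e2 : ∑ i ∈ Finset.range (n + 1), F (i + 1) i = ∑ x ∈ R j d, ∑ y ∈ R j d,
          (σ ((x : ℤ) - y + hh n + (n + 1 : ℕ)) - σ ((x : ℤ) - y + hh n + (0 : ℕ))) := by
        simp only [hFdef]
        rw [Finset.sum_comm]
        refine Finset.sum_congr rfl fun x _ => ?_
        rw [Finset.sum_comm]
        refine Finset.sum_congr rfl fun y _ => ?_
        rw [← Finset.sum_range_sub (fun i : ℕ => σ ((x : ℤ) - y + hh n + i))]
        refine Finset.sum_congr rfl fun i hi => ?_
        rw [off_step (Finset.mem_range.1 hi)]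
        congr 2 <;> push_cast <;> ring
      rw [e2]
      calc _ ≤ ∑ x ∈ R j d, ∑ y ∈ R j d, |σ ((x : ℤ) - y + hh n + (n + 1 : ℕ)) -
            σ ((x : ℤ) - y + hh n + (0 : ℕ))| :=
          (Finset.abs_sum_le_sum_abs _ _).trans
            (Finset.sum_le_sum fun k _ => Finset.abs_sum_le_sum_abs _ _)
        _ ≤ ∑ x ∈ R j d, ∑ y ∈ R j d, (2 : ℝ) := by
          refine Finset.sum_le_sum fun x _ => Finset.sum_le_sum fun y _ => ?_
          refine (abs_sub _ _).trans ?_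
          linarith [hσ ((x : ℤ) - y + hh n + (n + 1 : ℕ)), hσ ((x : ℤ) - y + hh n + (0 : ℕ))]
        _ = _ := by simp; ring
    rw [e1]
    refine (pair_bound hF hW).trans (le_of_eq ?_)
    rw [R_card_succ, vv, ← hn]
    push_cast
    field_simp

lemma vv_range (j d : ℕ) : 0 ≤ vv j d ∧ vv j d ≤ 2 := by
  induction d with
  | zero => norm_num [vv]
  | succ d ih =>
    obtain ⟨h1, h2⟩ := ih
    rw [vv]
    set t : ℝ := ((j + d : ℕ) : ℝ) with ht
    have ht0 : 0 ≤ t := by positivity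
    have hc : (t + 1) / (t + 2) ^ 2 ≤ 1 := by
      rw [div_le_one (by positivity)]; nlinarith
    have hd : 1 / (t + 2) ^ 2 ≤ (t + 1) / (t + 2) ^ 2 := by
      gcongr; linarith
    have he : 2 / (t + 2) ^ 2 = 2 * (1 / (t + 2) ^ 2) := by ring
    have hp : 0 ≤ 1 / (t + 2) ^ 2 := by positivity
    constructor
    · have := mul_nonneg (sub_nonneg.2 hc) h1
      linarith
    · have := mul_le_mul_of_nonneg_left h2 (sub_nonneg.2 hc)
      linarith

lemma vv_sum (j d : ℕ) : ((j : ℝ) + d + 1) * vv j d ≤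
    2 * (j + 1) + 4 * ∑ k ∈ Finset.range d, (1 / ((k : ℝ) + 1)) := by
  induction d with
  | zero => simp [vv]; linarith
  | succ d ih =>
    rw [Finset.sum_range_succ, vv]
    obtain ⟨h1, h2⟩ := vv_range j d
    have hj : (0 : ℝ) ≤ j := by positivity
    have hd : (0 : ℝ) ≤ d := by positivity
    push_cast
    have e : ((j : ℝ) + (d + 1) + 1) * ((1 - (j + d + 1 : ℝ) / (j + d + 2) ^ 2) * vv j d +
        2 / (j + d + 2) ^ 2) = ((j : ℝ) + d + 1) * vv j d + (vv j d + 2) / (j + d + 2) := by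
      field_simp
      ring
    rw [e]
    have h3 : (vv j d + 2) / ((j : ℝ) + d + 2) ≤ 4 * (1 / ((d : ℝ) + 1)) := by
      rw [mul_one_div]
      apply div_le_div₀ <;> linarith
    linarith

lemma vv_tendsto (j : ℕ) : Tendsto (vv j) atTop (nhds 0) := by
  have h1 := (tendsto_one_div_add_atTop_nhds_zero_nat (𝕜 := ℝ)).cesaro
  have h2 : Tendsto (fun d : ℕ => (d : ℝ)⁻¹) atTop (nhds 0) := tendsto_inv_atTop_nhds_zero_nat
  have h3 := (h2.const_mul (2 * ((j : ℝ) + 1))).add (h1.const_mul 4)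
  simp only [mul_zero, add_zero] at h3
  refine squeeze_zero' (Eventually.of_forall fun d => (vv_range j d).1) ?_ h3
  filter_upwards [eventually_gt_atTop 0] with d hd
  have hd' : (0 : ℝ) < d := by exact_mod_cast hd
  have h4 := vv_sum j d
  have h5 : (d : ℝ) * vv j d ≤ ((j : ℝ) + d + 1) * vv j d := by
    apply mul_le_mul_of_nonneg_right _ (vv_range j d).1
    have : (0 : ℝ) ≤ j := by positivity
    linarith
  have h6 : vv j d ≤ (d : ℝ)⁻¹ *
      (2 * (j + 1) + 4 * ∑ k ∈ Finset.range d, (1 / ((k : ℝ) + 1))) := by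
    rw [inv_mul_eq_div, le_div_iff₀ hd']
    linarith
  linarith

/-- Smoothing of `σ` by the differences. -/
noncomputable def Psi (j d : ℕ) (σ : ℤ → ℝ) (z : ℤ) : ℝ :=
  ∑ x ∈ R j d, ∑ y ∈ R j d, σ (z + x - y)

lemma Psi_step (j d : ℕ) (σ : ℤ → ℝ) (hσ : ∀ z, |σ z| ≤ 1) (z : ℤ) :
    |Psi j d σ (z + 1) - Psi j d σ z| ≤ vv j d * ((R j d).card : ℝ) ^ 2 := by
  have := vv_bound j d (fun t => σ (z + t)) (fun t => hσ _)
  refine le_of_eq_of_le ?_ this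
  unfold Psi
  congr 1
  rw [← Finset.sum_sub_distrib]
  refine Finset.sum_congr rfl fun x _ => ?_
  rw [← Finset.sum_sub_distrib]
  refine Finset.sum_congr rfl fun y _ => ?_
  congr 2 <;> ring

lemma Psi_bound (j d : ℕ) (σ : ℤ → ℝ) (hσ : ∀ z, |σ z| ≤ 1) (z : ℤ) :
    |Psi j d σ z - Psi j d σ 0| ≤ |(z : ℝ)| * (vv j d * ((R j d).card : ℝ) ^ 2) := by
  set K := vv j d * ((R j d).card : ℝ) ^ 2
  have hnat : ∀ n : ℕ, ∀ z : ℤ, |Psi j d σ (z + n) - Psi j d σ z| ≤ n * K := by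
    intro n z
    induction n with
    | zero => simp
    | succ n ih =>
      have h1 := Psi_step j d σ hσ (z + n)
      have h2 := abs_sub_le (Psi j d σ (z + (n + 1 : ℕ))) (Psi j d σ (z + n)) (Psi j d σ z)
      push_cast at h2 ⊢
      rw [← add_assoc] at h2 ⊢
      linarith
  have hcast : |(z : ℝ)| = (z.natAbs : ℝ) := by simp [Nat.cast_natAbs]
  rw [hcast]
  rcases Int.natAbs_eq z with h | h
  · have := hnat z.natAbs 0
    rwa [zero_add, ← h] at this
  · have := hnat z.natAbs z
    have h0 : z + (z.natAbs : ℤ) = 0 := by omega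
    rwa [h0, abs_sub_comm] at this

end R1


namespace R1

lemma S_lvl (n j : ℕ) : S.lvl n j = L n j := rfl

lemma T_L {n y : ℕ} (hy : y + 1 < hh n) : S.T '' L n y = L n (y + 1) := by
  have h : ∀ x ∈ L n y, S.T x = x + tr n y := fun x hx => S.Tmap n y hy x hx
  ext z
  constructor
  · rintro ⟨x, hx, rfl⟩
    rw [h x hx]; exact mem_tr.2 hx
  · intro hz
    have : z - tr n y ∈ L n y := by rw [← mem_tr]; simpa using hz
    exact ⟨z - tr n y, this, by rw [h _ this]; ring⟩

lemma Tk_L {n y : ℕ} : ∀ k, y + k < hh n → S.T^[k] '' L n y = L n (y + k) := by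
  intro k
  induction k with
  | zero => simp
  | succ k ih =>
    intro hk
    rw [Function.iterate_succ', Set.image_comp, ih (by omega), T_L (by omega)]
    rfl

lemma mu_T (E : Set ℝ) : S.μ (S.T '' E) = S.μ E := by
  have h := (MeasurePreserving.symm S.T S.Tpres).measure_preimage_equiv E
  rw [MeasurableEquiv.image_eq_preimage_symm]
  exact h

lemma mu_Tk (k : ℕ) (E : Set ℝ) : S.μ (S.T^[k] '' E) = S.μ E := by
  induction k with
  | zero => simp
  | succ k ih => rw [Function.iterate_succ', Set.image_comp, mu_T, ih]

lemma mu_L {n j : ℕ} (hj : j < hh n) : S.μ (L n j) = ENNReal.ofReal (ww n) := by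
  have hsub : L n j ⊆ S.X := fun x hx => mem_XX.2 ⟨n, j, hj, hx⟩
  unfold RankOne.μ
  rw [Measure.restrict_apply (show MeasurableSet (L n j) from measurableSet_Ioo), Set.inter_eq_left.2 hsub]
  simp [L]

lemma mu_I : S.μ (L 0 0) = 1 := by
  rw [mu_L (hh_pos 0)]; simp [ww]

lemma mu_grid (n : ℕ) : S.μ (grid n) = 0 := by
  unfold RankOne.μ
  exact (grid_countable n).measure_zero (volume.restrict S.X)

/-- Union of levels. -/
def U (n : ℕ) (P : Finset ℕ) : Set ℝ := ⋃ p ∈ P, L n p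

lemma mem_U {n : ℕ} {P : Finset ℕ} {x : ℝ} : x ∈ U n P ↔ ∃ p ∈ P, x ∈ L n p := by
  simp [U]

lemma U_meas (n : ℕ) (P : Finset ℕ) : MeasurableSet (U n P) :=
  Finset.measurableSet_biUnion _ fun _ _ => measurableSet_Ioo

lemma real_U {n : ℕ} {P : Finset ℕ} (hP : ∀ p ∈ P, p < hh n) :
    S.μ.real (U n P) = P.card * ww n := by
  unfold U
  rw [measureReal_biUnion_finset (h := fun p hp => by rw [mu_L (hP p hp)]; exact ENNReal.ofReal_ne_top)]
  · rw [Finset.sum_congr rfl (g := fun _ => ww n)]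
    · simp
    · intro p hp
      rw [measureReal_def, mu_L (hP p hp), ENNReal.toReal_ofReal (ww_pos n).le]
  · intro p hp q hq hne
    exact Set.disjoint_left.2 fun x h1 h2 => hne (L_unique (hP p hp) (hP q hq) h1 h2)
  · intro p _; exact measurableSet_Ioo

lemma Tk_U {n k : ℕ} {Q : Finset ℕ} (hQ : ∀ q ∈ Q, q + k < hh n) :
    S.T^[k] '' U n Q = U n (Q.image (· + k)) := by
  unfold U
  rw [Set.image_iUnion₂, Finset.set_biUnion_finset_image]
  exact Set.iUnion₂_congr fun q hq => Tk_L k (hQ q hq)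

lemma U_inter {n : ℕ} {P Q : Finset ℕ} (hP : ∀ p ∈ P, p < hh n) (hQ : ∀ p ∈ Q, p < hh n) :
    U n P ∩ U n Q = U n (P ∩ Q) := by
  ext x
  simp only [Set.mem_inter_iff, mem_U, Finset.mem_inter]
  constructor
  · rintro ⟨⟨p, hp, h1⟩, q, hq, h2⟩
    have := L_unique (hP p hp) (hQ q hq) h1 h2
    subst this
    exact ⟨p, ⟨hp, hq⟩, h1⟩
  · rintro ⟨p, ⟨hp, hq⟩, h⟩
    exact ⟨⟨p, hp, h⟩, p, hq, h⟩

lemma real_inter {n k : ℕ} {P Q : Finset ℕ} (hP : ∀ p ∈ P, p < hh n)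
    (hQ : ∀ q ∈ Q, q + k < hh n) :
    S.μ.real (U n P ∩ S.T^[k] '' U n Q) =
      ∑ p ∈ P, ∑ q ∈ Q, if p = q + k then ww n else 0 := by
  have hQ' : ∀ p ∈ Q.image (· + k), p < hh n := by
    intro p hp
    obtain ⟨q, hq, rfl⟩ := Finset.mem_image.1 hp
    exact hQ q hq
  rw [Tk_U hQ, U_inter hP hQ', real_U (fun p hp => hP p (Finset.mem_inter.1 hp).1),
    Finset.sum_comm]
  simp only [Finset.sum_ite_eq']
  rw [← Finset.sum_filter, Finset.sum_const, nsmul_eq_mul]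
  congr 2
  rw [show P ∩ Q.image (· + k) = (Q.filter (fun q => q + k ∈ P)).image (· + k) from ?_,
    Finset.card_image_of_injective _ (add_left_injective k)]
  ext x
  simp only [Finset.mem_inter, Finset.mem_image, Finset.mem_filter]
  constructor
  · rintro ⟨h1, q, hq, rfl⟩; exact ⟨q, ⟨hq, h1⟩, rfl⟩
  · rintro ⟨q, ⟨hq, h1⟩, rfl⟩; exact ⟨h1, q, hq, rfl⟩

lemma swap {A A' B B' : Set ℝ} (hA : A' ⊆ A) (hA0 : S.μ (A \ A') = 0) (hB : B' ⊆ B)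
    (hB0 : S.μ (B \ B') = 0) (k : ℕ) :
    S.μ (A ∩ S.T^[k] '' B) = S.μ (A' ∩ S.T^[k] '' B') := by
  apply le_antisymm
  · calc S.μ (A ∩ S.T^[k] '' B)
        ≤ S.μ ((A' ∩ S.T^[k] '' B') ∪ ((A \ A') ∪ S.T^[k] '' (B \ B'))) := by
          apply measure_mono
          rintro x ⟨h1, y, hy, rfl⟩
          by_cases h2 : S.T^[k] y ∈ A'
          · by_cases h3 : y ∈ B'
            · exact Or.inl ⟨h2, y, h3, rfl⟩
            · exact Or.inr (Or.inr ⟨y, ⟨hy, h3⟩, rfl⟩)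
          · exact Or.inr (Or.inl ⟨h1, h2⟩)
      _ ≤ S.μ (A' ∩ S.T^[k] '' B') + (S.μ (A \ A') + S.μ (S.T^[k] '' (B \ B'))) :=
          (measure_union_le _ _).trans (add_le_add le_rfl (measure_union_le _ _))
      _ = _ := by rw [mu_Tk, hA0, hB0]; simp
  · exact measure_mono (Set.inter_subset_inter hA (Set.image_mono hB))

lemma U_Des_sub {P : Finset ℕ} {j : ℕ} (hP : ∀ a ∈ P, a < hh j) (d : ℕ) :
    U (j + d) (Des P j d) ⊆ U j P := by
  intro z hz
  obtain ⟨p, hp, h⟩ := mem_U.1 hz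
  simp only [Des, Finset.mem_image, Finset.mem_product, Prod.exists] at hp
  obtain ⟨a, x, ⟨ha, hx⟩, rfl⟩ := hp
  exact mem_U.2 ⟨a, ha, R_L_sub j d a (hP a ha) x hx h⟩

lemma U_Des_null {P : Finset ℕ} {j : ℕ} (hP : ∀ a ∈ P, a < hh j) (d : ℕ) :
    U j P \ U (j + d) (Des P j d) ⊆ grid (j + d) := by
  rintro z ⟨hz, hn⟩
  by_contra hg
  obtain ⟨a, ha, h⟩ := mem_U.1 hz
  obtain ⟨x, hx, h2⟩ := R_L_refine j d (hP a ha) h hg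
  apply hn
  refine mem_U.2 ⟨a + x, ?_, h2⟩
  simp only [Des, Finset.mem_image, Finset.mem_product, Prod.exists]
  exact ⟨a, x, ⟨ha, hx⟩, rfl⟩

lemma null_of_grid {E : Set ℝ} {n : ℕ} (h : E ⊆ grid n) : S.μ E = 0 :=
  measure_mono_null h (mu_grid n)

lemma UI_sub (n : ℕ) : U n (R 0 n) ⊆ L 0 0 := by
  intro z hz
  obtain ⟨p, hp, h⟩ := mem_U.1 hz
  have := R_L_sub 0 n 0 (hh_pos 0) p hp
  simp only [zero_add] at this
  exact this h

lemma UI_null (n : ℕ) : L 0 0 \ U n (R 0 n) ⊆ grid n := by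
  rintro z ⟨hz, hn⟩
  by_contra hg
  obtain ⟨x, hx, h2⟩ := R_L_refine 0 n (hh_pos 0) hz (by simpa using hg)
  simp only [zero_add] at h2
  exact hn (mem_U.2 ⟨x, hx, h2⟩)

lemma Des_lt {P : Finset ℕ} {j d n : ℕ} (hP : ∀ a ∈ P, a < hh j) (hn : j + d = n + 1)
    (hd : 0 < d) : ∀ p ∈ Des P j d, p < pp n := by
  intro p hp
  simp only [Des, Finset.mem_image, Finset.mem_product, Prod.exists] at hp
  obtain ⟨a, x, ⟨ha, hx⟩, rfl⟩ := hp
  obtain ⟨d, rfl⟩ : ∃ e, d = e + 1 := ⟨d - 1, by omega⟩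
  exact R_lt_pp j d (hP a ha) hx (by omega)

/-- Extension of a sequence on `[0,m)` to the integers. -/
noncomputable def sg (m : ℕ) (σ : ℕ → ℝ) (z : ℤ) : ℝ := if 0 ≤ z ∧ z < m then σ z.toNat else 0

lemma sg_bound {m : ℕ} {σ : ℕ → ℝ} (hσ : ∀ k, |σ k| ≤ 1) (z : ℤ) : |sg m σ z| ≤ 1 := by
  unfold sg
  split_ifs
  · exact hσ _
  · simp

lemma sg_sum (m : ℕ) (σ : ℕ → ℝ) (w : ℝ) (p q : ℕ) :
    ∑ k ∈ Finset.range m, σ k * (if p = q + k then w else 0) = w * sg m σ ((p : ℤ) - q) := by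
  unfold sg
  by_cases h : 0 ≤ (p : ℤ) - q ∧ (p : ℤ) - q < m
  · rw [if_pos h, Finset.sum_eq_single (((p : ℤ) - q).toNat)]
    · rw [if_pos (by omega)]; ring
    · intro k _ hk
      rw [if_neg (by omega)]; simp
    · intro hk
      simp at hk; omega
  · rw [if_neg h, mul_zero]
    apply Finset.sum_eq_zero
    intro k hk
    simp at hk
    rw [if_neg (by omega)]; simp

lemma sum_sigma {n : ℕ} {P Q : Finset ℕ} (hP : ∀ p ∈ P, p < pp n) (hQ : ∀ p ∈ Q, p < pp n)
    (σ : ℕ → ℝ) :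
    ∑ k ∈ Finset.range (pp n), σ k * S.μ.real (U (n + 1) P ∩ S.T^[k] '' U (n + 1) Q) =
      ww (n + 1) * ∑ p ∈ P, ∑ q ∈ Q, sg (pp n) σ ((p : ℤ) - q) := by
  have h2 := hh_succ n
  have : ∀ k ∈ Finset.range (pp n), σ k * S.μ.real (U (n + 1) P ∩ S.T^[k] '' U (n + 1) Q) =
      ∑ p ∈ P, ∑ q ∈ Q, σ k * (if p = q + k then ww (n + 1) else 0) := by
    intro k hk
    simp at hk
    rw [real_inter (fun p hp => by have := hP p hp; omega)
      (fun q hq => by have := hQ q hq; omega), Finset.mul_sum]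
    refine Finset.sum_congr rfl fun p _ => ?_
    rw [Finset.mul_sum]
  rw [Finset.sum_congr rfl this, Finset.sum_comm, Finset.mul_sum]
  refine Finset.sum_congr rfl fun p _ => ?_
  rw [Finset.sum_comm, Finset.mul_sum]
  refine Finset.sum_congr rfl fun q _ => ?_
  rw [sg_sum]

lemma R0_pp {n : ℕ} : ∀ p ∈ R 0 (n + 1), p < pp n := by
  intro p hp
  have := R_lt_pp 0 n (hh_pos 0) hp (zero_add n)
  omega

lemma u_eq (k : ℕ) : S.u (L 0 0) k = S.μ.real (L 0 0 ∩ S.T^[k] '' L 0 0) := by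
  unfold RankOne.u
  rw [mu_I]
  simp [measureReal_def]

lemma u_eq' (n k : ℕ) :
    S.u (L 0 0) k = S.μ.real (U n (R 0 n) ∩ S.T^[k] '' U n (R 0 n)) := by
  rw [u_eq, measureReal_def, measureReal_def,
    swap (UI_sub n) (null_of_grid (UI_null n)) (UI_sub n) (null_of_grid (UI_null n))]

lemma R0_card (n : ℕ) : ((R 0 n).card : ℝ) * ww n = 1 := by
  have := R_card 0 n
  simpa [ww] using this

lemma a_lower (n : ℕ) : ((R 0 (n + 1)).card : ℝ) ≤ 2 * S.a (L 0 0) (pp n) := by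
  have h1 := sum_sigma (n := n) R0_pp R0_pp (fun _ => 1)
  have h2 : S.a (L 0 0) (pp n) = ww (n + 1) * ∑ p ∈ R 0 (n + 1), ∑ q ∈ R 0 (n + 1),
      sg (pp n) (fun _ => 1) ((p : ℤ) - q) := by
    rw [← h1]
    unfold RankOne.a
    refine Finset.sum_congr rfl fun k _ => ?_
    rw [one_mul, u_eq' (n + 1)]
  set D := R 0 (n + 1) with hD
  set g : ℕ → ℕ → ℝ := fun p q => sg (pp n) (fun _ => 1) ((p : ℤ) - q) with hg
  have h3 : ∑ p ∈ D, ∑ q ∈ D, (1 : ℝ) ≤ ∑ p ∈ D, ∑ q ∈ D, (g p q + g q p) := by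
    refine Finset.sum_le_sum fun p hp => Finset.sum_le_sum fun q hq => ?_
    have hp' := R0_pp p hp
    have hq' := R0_pp q hq
    simp only [hg, sg]
    split_ifs <;> first | (exfalso; omega) | norm_num
  have h4 : ∑ p ∈ D, ∑ q ∈ D, (g p q + g q p) = 2 * ∑ p ∈ D, ∑ q ∈ D, g p q := by
    simp only [Finset.sum_add_distrib]
    rw [Finset.sum_comm (f := fun p q => g q p)]
    ring
  have h5 : ∑ p ∈ D, ∑ q ∈ D, (1 : ℝ) = (D.card : ℝ) * D.card := by simp
  have h6 := R0_card (n + 1)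
  rw [← hD] at h6
  rw [h2]
  have h7 := ww_pos (n + 1)
  rw [h4, h5] at h3
  calc (D.card : ℝ) = ww (n + 1) * ((D.card : ℝ) * D.card) := by
        rw [← mul_assoc, mul_comm (ww (n + 1)), h6, one_mul]
    _ ≤ ww (n + 1) * (2 * ∑ p ∈ D, ∑ q ∈ D, g p q) := by gcongr
    _ = _ := by ring

/-- Estimate for unions of levels. -/
lemma level_est {j d n : ℕ} (hn : j + d = n + 1) (hd : 0 < d) {P Q : Finset ℕ}
    (hP : P ⊆ R 0 j) (hQ : Q ⊆ R 0 j) :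
    ∑ k ∈ Finset.range (pp n), |S.μ.real (U j P ∩ S.T^[k] '' U j Q) -
        S.μ.real (U j P) * S.μ.real (U j Q) * S.u (L 0 0) k| ≤
      2 * hh j * vv j d * (R 0 (n + 1)).card := by
  have hP' : ∀ a ∈ P, a < hh j := fun a ha => R0_lt (hP ha)
  have hQ' : ∀ a ∈ Q, a < hh j := fun a ha => R0_lt (hQ ha)
  have hR' : ∀ a ∈ R 0 j, a < hh j := fun a ha => R0_lt ha
  set f : ℕ → ℝ := fun k => S.μ.real (U j P ∩ S.T^[k] '' U j Q) -
        S.μ.real (U j P) * S.μ.real (U j Q) * S.u (L 0 0) k with hf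
  set σ : ℕ → ℝ := fun k => if 0 ≤ f k then 1 else -1 with hσdef
  have hσ : ∀ k, |σ k| ≤ 1 := by
    intro k; simp only [hσdef]; split_ifs <;> simp
  have habs : ∀ k, |f k| = σ k * f k := by
    intro k; simp only [hσdef]; split_ifs with h
    · rw [abs_of_nonneg h, one_mul]
    · rw [abs_of_neg (not_le.1 h)]; ring
  set s := sg (pp n) σ with hs
  have hsb : ∀ z, |s z| ≤ 1 := sg_bound hσ
  set K := (hh j : ℝ) * (vv j d * ((R j d).card : ℝ) ^ 2) with hK
  have hgen : ∀ {P Q : Finset ℕ}, (∀ a ∈ P, a < hh j) → (∀ a ∈ Q, a < hh j) →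
      ∑ k ∈ Finset.range (pp n), σ k * S.μ.real (U j P ∩ S.T^[k] '' U j Q) =
        ww (n + 1) * ∑ a ∈ P, ∑ b ∈ Q, Psi j d s ((a : ℤ) - b) := by
    intro P Q hP hQ
    have h1 := sum_sigma (Des_lt hP hn hd) (Des_lt hQ hn hd) σ
    have h2 : ∀ k, S.μ.real (U j P ∩ S.T^[k] '' U j Q) =
        S.μ.real (U (n + 1) (Des P j d) ∩ S.T^[k] '' U (n + 1) (Des Q j d)) := by
      intro k
      rw [measureReal_def, measureReal_def, ← hn,
        swap (U_Des_sub hP d) (null_of_grid (U_Des_null hP d)) (U_Des_sub hQ d)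
          (null_of_grid (U_Des_null hQ d))]
    simp only [h2]
    rw [h1]
    congr 1
    rw [Des_sum hP]
    refine Finset.sum_congr rfl fun a _ => ?_
    have : ∀ x ∈ R j d, ∑ q ∈ Des Q j d, sg (pp n) σ (((a + x : ℕ) : ℤ) - q) =
        ∑ b ∈ Q, ∑ y ∈ R j d, s ((a : ℤ) - b + x - y) := by
      intro x _
      rw [Des_sum hQ]
      refine Finset.sum_congr rfl fun b _ => Finset.sum_congr rfl fun y _ => ?_
      rw [hs]
      congr 1
      push_cast; ring
    rw [Finset.sum_congr rfl this, Finset.sum_comm]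
    rfl
  have hdev : ∀ {P Q : Finset ℕ}, (∀ a ∈ P, a < hh j) → (∀ a ∈ Q, a < hh j) →
      |∑ a ∈ P, ∑ b ∈ Q, Psi j d s ((a : ℤ) - b) - P.card * Q.card * Psi j d s 0| ≤
        P.card * Q.card * K := by
    intro P Q hP hQ
    have h1 : ∑ a ∈ P, ∑ b ∈ Q, Psi j d s ((a : ℤ) - b) - P.card * Q.card * Psi j d s 0 =
        ∑ a ∈ P, ∑ b ∈ Q, (Psi j d s ((a : ℤ) - b) - Psi j d s 0) := by
      simp only [Finset.sum_sub_distrib, Finset.sum_const, nsmul_eq_mul]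
      ring
    rw [h1]
    calc _ ≤ ∑ a ∈ P, ∑ b ∈ Q, |Psi j d s ((a : ℤ) - b) - Psi j d s 0| :=
          (Finset.abs_sum_le_sum_abs _ _).trans
            (Finset.sum_le_sum fun k _ => Finset.abs_sum_le_sum_abs _ _)
      _ ≤ ∑ a ∈ P, ∑ b ∈ Q, K := by
        refine Finset.sum_le_sum fun a ha => Finset.sum_le_sum fun b hb => ?_
        refine (Psi_bound j d s hsb _).trans ?_
        rw [hK]
        have h2 : |(((a : ℤ) - b : ℤ) : ℝ)| ≤ hh j := by
          have h3 : |(a : ℤ) - b| ≤ (hh j : ℤ) := by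
            have := hP a ha; have := hQ b hb
            rw [abs_le]; constructor <;> omega
          exact_mod_cast h3
        have h4 := (vv_range j d).1
        gcongr
      _ = _ := by simp; ring
  have hsum : ∑ k ∈ Finset.range (pp n), |f k| =
      ww (n + 1) * (∑ a ∈ P, ∑ b ∈ Q, Psi j d s ((a : ℤ) - b) -
        (P.card * ww j) * (Q.card * ww j) *
          ∑ a ∈ R 0 j, ∑ b ∈ R 0 j, Psi j d s ((a : ℤ) - b)) := by
    have e1 := hgen hP' hQ'
    have e2 := hgen hR' hR'
    rw [mul_sub, ← e1, mul_left_comm, ← e2, Finset.mul_sum, ← Finset.sum_sub_distrib]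
    refine Finset.sum_congr rfl fun k _ => ?_
    rw [habs, hf]
    simp only
    rw [real_U hP', real_U hQ', u_eq' j k]
    ring
  rw [hsum]
  have d1 := hdev hP' hQ'
  have d2 := hdev hR' hR'
  set p : ℝ := (P.card : ℝ)
  set q : ℝ := (Q.card : ℝ)
  set D : ℝ := ((R 0 j).card : ℝ) with hDdef
  set X := ∑ a ∈ P, ∑ b ∈ Q, Psi j d s ((a : ℤ) - b)
  set Y := ∑ a ∈ R 0 j, ∑ b ∈ R 0 j, Psi j d s ((a : ℤ) - b)
  have hD1 : D * ww j = 1 := R0_card j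
  have hwj := ww_pos j
  have hwn := ww_pos (n + 1)
  have hp0 : 0 ≤ p := by positivity
  have hq0 : 0 ≤ q := by positivity
  have hpD : p ≤ D := Nat.cast_le.2 (Finset.card_le_card hP)
  have hqD : q ≤ D := Nat.cast_le.2 (Finset.card_le_card hQ)
  have hv := (vv_range j d).1
  have hK0 : 0 ≤ K := by positivity
  have hcard : ((R 0 (n + 1)).card : ℝ) = D * (R j d).card := by
    have h1 := Des_sum hR' d (fun _ => 1)
    rw [Des_R, hn] at h1
    simpa using h1
  have hcard1 := R0_card (n + 1)
  have b1 : X ≤ p * q * Psi j d s 0 + p * q * K := by linarith [(abs_le.1 d1).2]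
  have b2 : (p * ww j) * (q * ww j) * (D * D * Psi j d s 0 - D * D * K) ≤
      (p * ww j) * (q * ww j) * Y := by
    apply mul_le_mul_of_nonneg_left _ (by positivity)
    linarith [(abs_le.1 d2).1]
  have b3 : (p * ww j) * (q * ww j) * (D * D * Psi j d s 0 - D * D * K) =
      p * q * Psi j d s 0 - p * q * K := by
    calc _ = p * q * ((D * ww j) * (D * ww j)) * (Psi j d s 0 - K) := by ring
      _ = _ := by rw [hD1]; ring
  have b4 : X - (p * ww j) * (q * ww j) * Y ≤ 2 * (p * q * K) := by linarith
  have b5 : p * q * K ≤ D * D * K := by gcongr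
  calc ww (n + 1) * (X - (p * ww j) * (q * ww j) * Y) ≤ ww (n + 1) * (2 * (D * D * K)) := by
        gcongr; linarith
    _ = 2 * hh j * vv j d * ((D * (R j d).card * ww (n + 1)) * (D * (R j d).card)) := by
        rw [hK]; ring
    _ = 2 * hh j * vv j d * (R 0 (n + 1)).card := by
        rw [← hcard, hcard1, one_mul]

end R1


namespace R1

lemma L_meas (n j : ℕ) : MeasurableSet (L n j) := measurableSet_Ioo

lemma sum_le_mu {n : ℕ} {ι : Type*} (s : Finset ι) (f : ι → ℕ) (hf : ∀ i ∈ s, f i < hh n)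
    (hinj : ∀ i ∈ s, ∀ i' ∈ s, f i = f i' → i = i') {E : Set ℝ} (hE : MeasurableSet E) :
    ∑ i ∈ s, S.μ (E ∩ L n (f i)) ≤ S.μ E := by
  rw [← measure_biUnion_finset]
  · exact measure_mono (Set.iUnion₂_subset fun i _ => Set.inter_subset_left)
  · intro i hi i' hi' hne
    refine Set.disjoint_left.2 fun x h1 h2 => hne (hinj i hi i' hi' ?_)
    exact L_unique (hf i hi) (hf i' hi') h1.2 h2.2
  · intro i _; exact hE.inter (L_meas _ _)

lemma M2a (n : ℕ) {E : Set ℝ} (hE : MeasurableSet E) :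
    ∑ k ∈ Finset.range (pp n), S.μ (E ∩ S.T^[k] '' L 0 0) ≤ (R 0 (n + 1)).card * S.μ E := by
  have h2 := hh_succ n
  calc ∑ k ∈ Finset.range (pp n), S.μ (E ∩ S.T^[k] '' L 0 0)
      ≤ ∑ k ∈ Finset.range (pp n), ∑ y ∈ R 0 (n + 1), S.μ (E ∩ L (n + 1) (y + k)) := by
        refine Finset.sum_le_sum fun k hk => ?_
        simp only [Finset.mem_range] at hk
        rw [swap (A' := E) subset_rfl (by simp) (UI_sub (n + 1))
          (null_of_grid (UI_null (n + 1)))]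
        refine (measure_mono ?_).trans (measure_biUnion_finset_le _ _)
        rintro z ⟨hz, x, hx, rfl⟩
        obtain ⟨y, hy, hxy⟩ := mem_U.1 hx
        refine Set.mem_iUnion₂.2 ⟨y, hy, hz, ?_⟩
        have := R0_pp y hy
        rw [← Tk_L k (by omega)]
        exact ⟨x, hxy, rfl⟩
    _ = ∑ y ∈ R 0 (n + 1), ∑ k ∈ Finset.range (pp n), S.μ (E ∩ L (n + 1) (y + k)) :=
        Finset.sum_comm
    _ ≤ ∑ y ∈ R 0 (n + 1), S.μ E := by
        refine Finset.sum_le_sum fun y hy => sum_le_mu _ (fun k => y + k) ?_ ?_ hE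
        · intro k hk
          have := R0_pp y hy
          simp only [Finset.mem_range] at hk
          omega
        · intro k _ k' _ h; simpa using h
    _ = _ := by simp

lemma M2b (n : ℕ) {E : Set ℝ} (hE : MeasurableSet E) (hEI : E ⊆ L 0 0) :
    ∑ k ∈ Finset.range (pp n), S.μ (L 0 0 ∩ S.T^[k] '' E) ≤ (R 0 (n + 1)).card * S.μ E := by
  have h2 := hh_succ n
  set D := R 0 (n + 1) with hD
  have hnull : S.μ (E \ (E ∩ U (n + 1) D)) = 0 := by
    refine measure_mono_null ?_ (null_of_grid (UI_null (n + 1)))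
    rintro x ⟨h1, h3⟩
    exact ⟨hEI h1, fun h4 => h3 ⟨h1, h4⟩⟩
  calc ∑ k ∈ Finset.range (pp n), S.μ (L 0 0 ∩ S.T^[k] '' E)
      ≤ ∑ k ∈ Finset.range (pp n), ∑ y ∈ D,
          (if y + k ∈ D then S.μ (E ∩ L (n + 1) y) else 0) := by
        refine Finset.sum_le_sum fun k hk => ?_
        simp only [Finset.mem_range] at hk
        rw [swap (UI_sub (n + 1)) (null_of_grid (UI_null (n + 1)))
          (Set.inter_subset_left : E ∩ U (n + 1) D ⊆ E) hnull, ← Finset.sum_filter]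
        calc S.μ (U (n + 1) (R 0 (n + 1)) ∩ S.T^[k] '' (E ∩ U (n + 1) D))
            ≤ S.μ (⋃ y ∈ D.filter (fun y => y + k ∈ D), S.T^[k] '' (E ∩ L (n + 1) y)) := by
              apply measure_mono
              rintro z ⟨hz, x, ⟨hxE, hx⟩, rfl⟩
              obtain ⟨y, hy, hxy⟩ := mem_U.1 hx
              obtain ⟨y', hy', hzy⟩ := mem_U.1 hz
              have h3 := R0_pp y hy
              have h4 : S.T^[k] x ∈ L (n + 1) (y + k) := by
                rw [← Tk_L k (by omega)]; exact ⟨x, hxy, rfl⟩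
              have h5 := L_unique (by omega) (R0_lt hy') h4 hzy
              refine Set.mem_iUnion₂.2 ⟨y, ?_, x, ⟨hxE, hxy⟩, rfl⟩
              rw [Finset.mem_filter, h5]
              exact ⟨hy, hy'⟩
          _ ≤ ∑ y ∈ D.filter (fun y => y + k ∈ D), S.μ (S.T^[k] '' (E ∩ L (n + 1) y)) :=
              measure_biUnion_finset_le _ _
          _ = _ := Finset.sum_congr rfl fun y _ => mu_Tk k _
    _ = ∑ y ∈ D, ∑ k ∈ Finset.range (pp n),
          (if y + k ∈ D then S.μ (E ∩ L (n + 1) y) else 0) := Finset.sum_comm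
    _ ≤ ∑ y ∈ D, D.card * S.μ (E ∩ L (n + 1) y) := by
        refine Finset.sum_le_sum fun y hy => ?_
        rw [← Finset.sum_filter, Finset.sum_const, nsmul_eq_mul]
        refine mul_le_mul_left (Nat.cast_le.2 ?_) _
        refine Finset.card_le_card_of_injOn (fun k => y + k) ?_ ?_
        · intro k hk
          simp only [Finset.coe_filter, Set.mem_setOf_eq] at hk
          exact hk.2
        · intro k _ k' _ h; simpa using h
    _ ≤ _ := by
        rw [← Finset.mul_sum]
        gcongr
        exact sum_le_mu D (fun y => y) (fun y hy => R0_lt hy) (fun _ _ _ _ h => h) hE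

lemma fin_sub {E : Set ℝ} (h : E ⊆ L 0 0) : S.μ E ≠ ⊤ :=
  ((measure_mono h).trans_lt (by rw [mu_I]; exact ENNReal.one_lt_top)).ne

lemma real_le_one {E : Set ℝ} (h : E ⊆ L 0 0) : S.μ.real E ≤ 1 := by
  have h1 : S.μ.real (L 0 0) = 1 := by rw [measureReal_def, mu_I]; simp
  rw [← h1]
  exact measureReal_mono h (fin_sub subset_rfl)

lemma M2a_real (n : ℕ) {E : Set ℝ} (hE : MeasurableSet E) (hEI : E ⊆ L 0 0) :
    ∑ k ∈ Finset.range (pp n), S.μ.real (E ∩ S.T^[k] '' L 0 0) ≤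
      (R 0 (n + 1)).card * S.μ.real E := by
  have h := ENNReal.toReal_mono
    (ENNReal.mul_ne_top (ENNReal.natCast_ne_top _) (fin_sub hEI)) (M2a n hE)
  rw [ENNReal.toReal_sum (fun k _ => fin_sub (Set.inter_subset_left.trans hEI)),
    ENNReal.toReal_mul, ENNReal.toReal_natCast] at h
  exact h

lemma M2b_real (n : ℕ) {E : Set ℝ} (hE : MeasurableSet E) (hEI : E ⊆ L 0 0) :
    ∑ k ∈ Finset.range (pp n), S.μ.real (L 0 0 ∩ S.T^[k] '' E) ≤
      (R 0 (n + 1)).card * S.μ.real E := by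
  have h := ENNReal.toReal_mono
    (ENNReal.mul_ne_top (ENNReal.natCast_ne_top _) (fin_sub hEI)) (M2b n hE hEI)
  rw [ENNReal.toReal_sum (fun k _ => fin_sub Set.inter_subset_left),
    ENNReal.toReal_mul, ENNReal.toReal_natCast] at h
  exact h

lemma diff_one {A B A' B' : Set ℝ} (hA : A ⊆ L 0 0) (hB : B ⊆ L 0 0) (hA' : A' ⊆ L 0 0)
    (k : ℕ) : S.μ.real (A ∩ S.T^[k] '' B) - S.μ.real (A' ∩ S.T^[k] '' B') ≤
      S.μ.real (symmDiff A A' ∩ S.T^[k] '' L 0 0) +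
        S.μ.real (L 0 0 ∩ S.T^[k] '' symmDiff B B') := by
  have hs : symmDiff A A' ⊆ L 0 0 := Set.union_subset (Set.sdiff_subset.trans hA)
    (Set.sdiff_subset.trans hA')
  have h1 : S.μ.real (A ∩ S.T^[k] '' B) ≤ S.μ.real ((A' ∩ S.T^[k] '' B') ∪
      ((symmDiff A A' ∩ S.T^[k] '' L 0 0) ∪ (L 0 0 ∩ S.T^[k] '' symmDiff B B'))) := by
    apply measureReal_mono
    · rintro z ⟨hz, x, hx, rfl⟩
      by_cases h1 : S.T^[k] x ∈ A'
      · by_cases h2 : x ∈ B'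
        · exact Or.inl ⟨h1, x, h2, rfl⟩
        · exact Or.inr (Or.inr ⟨hA hz, x, Or.inl ⟨hx, h2⟩, rfl⟩)
      · exact Or.inr (Or.inl ⟨Or.inl ⟨hz, h1⟩, x, hB hx, rfl⟩)
    · apply fin_sub
      exact Set.union_subset (Set.inter_subset_left.trans hA')
        (Set.union_subset (Set.inter_subset_left.trans hs) Set.inter_subset_left)
  have h2 := measureReal_union_le (μ := S.μ) (A' ∩ S.T^[k] '' B')
      ((symmDiff A A' ∩ S.T^[k] '' L 0 0) ∪ (L 0 0 ∩ S.T^[k] '' symmDiff B B'))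
  have h3 := measureReal_union_le (μ := S.μ) (symmDiff A A' ∩ S.T^[k] '' L 0 0)
    (L 0 0 ∩ S.T^[k] '' symmDiff B B')
  linarith

lemma diff_two {A B A' B' : Set ℝ} (hA : A ⊆ L 0 0) (hB : B ⊆ L 0 0) (hA' : A' ⊆ L 0 0)
    (hB' : B' ⊆ L 0 0)
    (k : ℕ) : |S.μ.real (A ∩ S.T^[k] '' B) - S.μ.real (A' ∩ S.T^[k] '' B')| ≤
      S.μ.real (symmDiff A A' ∩ S.T^[k] '' L 0 0) +
        S.μ.real (L 0 0 ∩ S.T^[k] '' symmDiff B B') := by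
  have h1 := diff_one (B' := B') hA hB hA' k
  have h2 := diff_one (B' := B) hA' hB' hA k
  rw [symmDiff_comm A' A, symmDiff_comm B' B] at h2
  rw [abs_le]
  constructor <;> linarith

lemma real_diff {A A' : Set ℝ} (hA : A ⊆ L 0 0) (hA' : A' ⊆ L 0 0) :
    |S.μ.real A - S.μ.real A'| ≤ S.μ.real (symmDiff A A') := by
  have key : ∀ {A A' : Set ℝ}, A ⊆ L 0 0 → A' ⊆ L 0 0 →
      S.μ.real A ≤ S.μ.real A' + S.μ.real (symmDiff A A') := by
    intro A A' hA hA'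
    refine (measureReal_mono ?_ (fin_sub ?_)).trans (measureReal_union_le _ _)
    · intro x hx
      by_cases h : x ∈ A'
      · exact Or.inl h
      · exact Or.inr (Or.inl ⟨hx, h⟩)
    · exact Set.union_subset hA' (Set.union_subset (Set.sdiff_subset.trans hA)
        (Set.sdiff_subset.trans hA'))
  have h1 := key hA hA'
  have h2 := key hA' hA
  rw [symmDiff_comm A' A] at h2
  rw [abs_le]
  constructor <;> linarith

lemma R_refine_mem {j a k : ℕ} (ha : a ∈ R 0 j) (hk : k < j + 2) :
    off j k + a ∈ R 0 (j + 1) := by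
  simp only [R, zero_add, Finset.mem_image, Finset.mem_product, Finset.mem_range, Prod.exists]
  exact ⟨k, a, ⟨hk, ha⟩, rfl⟩

open Classical in
lemma approx {A : Set ℝ} (hA : MeasurableSet A) (hAI : A ⊆ L 0 0) {ε : ℝ} (hε : 0 < ε) :
    ∃ j0, ∀ j, j0 ≤ j → ∃ P ⊆ R 0 j, S.μ.real (symmDiff A (U j P)) ≤ ε := by
  have hI : IsOpen (L 0 0) := isOpen_Ioo
  have hvol : volume A ≠ ⊤ := by
    refine ((measure_mono hAI).trans_lt ?_).ne
    simp [L]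
  obtain ⟨W, hAW, hWo, -, hWA⟩ := hA.exists_isOpen_sdiff_lt (μ := volume) hvol
    (ε := ENNReal.ofReal (ε / 2)) (by simpa using hε)
  set W' := W ∩ L 0 0 with hW'
  have hW'o : IsOpen W' := hWo.inter hI
  set G : Set ℝ := ⋃ n, grid n with hG
  have hG0 : S.μ G = 0 := measure_iUnion_null mu_grid
  have hGm : MeasurableSet G := MeasurableSet.iUnion fun n => (grid_countable n).measurableSet
  set P : ℕ → Finset ℕ := fun j => (R 0 j).filter (fun a => L j a ⊆ W') with hP
  set V : ℕ → Set ℝ := fun j => U j (P j) ∪ G with hV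
  have hVmono : Monotone V := by
    apply monotone_nat_of_le_succ
    intro j z hz
    by_cases hzG : z ∈ G
    · exact Or.inr hzG
    rcases hz with hz | hz
    · obtain ⟨a, ha, hza⟩ := mem_U.1 hz
      obtain ⟨ha1, ha2⟩ := Finset.mem_filter.1 ha
      obtain ⟨k, hk, hzk⟩ := L_refine (R0_lt ha1) hza
        (fun h => hzG (Set.mem_iUnion.2 ⟨j + 1, h⟩))
      refine Or.inl (mem_U.2 ⟨off j k + a, ?_, hzk⟩)
      exact Finset.mem_filter.2 ⟨R_refine_mem ha1 hk, (L_sub (R0_lt ha1) hk).trans ha2⟩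
    · exact Or.inr hz
  have hVm : ∀ j, MeasurableSet (V j) := fun j => (U_meas _ _).union hGm
  have hcap : ⋂ j, W' \ V j = ∅ := by
    rw [Set.eq_empty_iff_forall_notMem]
    intro z hz
    rw [Set.mem_iInter] at hz
    have hzW : z ∈ W' := (hz 0).1
    have hzG : z ∉ G := fun h => (hz 0).2 (Or.inr h)
    obtain ⟨δ, hδ, hball⟩ := Metric.isOpen_iff.1 hW'o z hzW
    obtain ⟨j, hj⟩ := (ww_tendsto.eventually (gt_mem_nhds hδ)).exists
    have hzU : z ∈ U j (R 0 j) := by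
      by_contra h
      exact hzG (Set.mem_iUnion.2 ⟨j, UI_null j ⟨hzW.2, h⟩⟩)
    obtain ⟨a, ha, hza⟩ := mem_U.1 hzU
    refine (hz j).2 (Or.inl (mem_U.2 ⟨a, Finset.mem_filter.2 ⟨ha, ?_⟩, hza⟩))
    intro y hy
    apply hball
    rw [Metric.mem_ball, Real.dist_eq, abs_lt]
    unfold L at hy hza
    rw [Set.mem_Ioo] at hy hza
    constructor <;> linarith [hy.1, hy.2, hza.1, hza.2]
  have hW'I : W' ⊆ L 0 0 := Set.inter_subset_right
  have hlim : Tendsto (fun j => S.μ (W' \ V j)) atTop (nhds 0) := by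
    have h := tendsto_measure_iInter_atTop (μ := S.μ) (s := fun j => W' \ V j)
      (fun j => (hW'o.measurableSet.diff (hVm j)).nullMeasurableSet)
      (fun i j hij => Set.sdiff_subset_sdiff_right (hVmono hij))
      ⟨0, fin_sub (Set.sdiff_subset.trans hW'I)⟩
    rw [hcap, measure_empty] at h
    exact h
  have hev := hlim.eventually (gt_mem_nhds (show (0 : ENNReal) < ENNReal.ofReal (ε / 2) by
    simpa using hε))
  obtain ⟨j0, hj0⟩ := eventually_atTop.1 hev
  refine ⟨j0, fun j hj => ⟨P j, Finset.filter_subset _ _, ?_⟩⟩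
  have hb := hj0 j hj
  have hsub : symmDiff A (U j (P j)) ⊆ ((W \ A) ∪ (W' \ V j)) ∪ G := by
    rintro z (⟨h1, h2⟩ | ⟨h1, h2⟩)
    · by_cases hzG : z ∈ G
      · exact Or.inr hzG
      · exact Or.inl (Or.inr ⟨⟨hAW h1, hAI h1⟩, fun h => h.elim h2 hzG⟩)
    · obtain ⟨a, ha, hza⟩ := mem_U.1 h1
      exact Or.inl (Or.inl ⟨((Finset.mem_filter.1 ha).2 hza).1, h2⟩)
  have hle : S.μ (symmDiff A (U j (P j))) ≤ ENNReal.ofReal ε := by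
    calc _ ≤ (S.μ (W \ A) + S.μ (W' \ V j)) + S.μ G :=
          (measure_mono hsub).trans ((measure_union_le _ _).trans
            (add_le_add (measure_union_le _ _) le_rfl))
      _ ≤ (ENNReal.ofReal (ε / 2) + ENNReal.ofReal (ε / 2)) + 0 := by
          refine add_le_add (add_le_add ?_ hb.le) hG0.le
          exact (Measure.restrict_apply_le _ _).trans hWA.le
      _ = ENNReal.ofReal ε := by
          rw [add_zero, ← ENNReal.ofReal_add (by positivity) (by positivity), add_halves]
  exact ENNReal.toReal_le_of_le_ofReal hε.le hle

lemma main_est {A B : Set ℝ} (hA : MeasurableSet A) (hAI : A ⊆ L 0 0) (hB : MeasurableSet B)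
    (hBI : B ⊆ L 0 0) {j d n : ℕ} (hn : j + d = n + 1) (hd : 0 < d) {P Q : Finset ℕ}
    (hP : P ⊆ R 0 j) (hQ : Q ⊆ R 0 j) {ε : ℝ}
    (hPε : S.μ.real (symmDiff A (U j P)) ≤ ε) (hQε : S.μ.real (symmDiff B (U j Q)) ≤ ε) :
    (S.a (L 0 0) (pp n))⁻¹ * ∑ k ∈ Finset.range (pp n),
      |S.μ.real (A ∩ S.T^[k] '' B) - S.μ.real A * S.μ.real B * S.u (L 0 0) k| ≤
      4 * hh j * vv j d + 6 * ε := by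
  have hPI : U j P ⊆ L 0 0 := (Set.biUnion_mono (fun x hx => hP hx) fun _ _ => subset_rfl).trans
    (UI_sub j)
  have hQI : U j Q ⊆ L 0 0 := (Set.biUnion_mono (fun x hx => hQ hx) fun _ _ => subset_rfl).trans
    (UI_sub j)
  set A' := U j P with hA'
  set B' := U j Q with hB'
  have sAI : symmDiff A A' ⊆ L 0 0 := Set.union_subset (Set.sdiff_subset.trans hAI)
    (Set.sdiff_subset.trans hPI)
  have sBI : symmDiff B B' ⊆ L 0 0 := Set.union_subset (Set.sdiff_subset.trans hBI)
    (Set.sdiff_subset.trans hQI)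
  have hε : 0 ≤ ε := measureReal_nonneg.trans hPε
  have hprod : |S.μ.real A' * S.μ.real B' - S.μ.real A * S.μ.real B| ≤ 2 * ε := by
    have h1 := real_diff hAI hPI
    have h2 := real_diff hBI hQI
    have h3 := real_le_one hPI
    have h4 := real_le_one hBI
    have e : S.μ.real A' * S.μ.real B' - S.μ.real A * S.μ.real B =
      -(S.μ.real A' * (S.μ.real B - S.μ.real B')) -
        (S.μ.real A - S.μ.real A') * S.μ.real B := by ring
    rw [e]
    have p1 : |S.μ.real A' * (S.μ.real B - S.μ.real B')| ≤ 1 * ε := by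
      rw [abs_mul, abs_of_nonneg measureReal_nonneg]
      exact mul_le_mul h3 (h2.trans hQε) (abs_nonneg _) zero_le_one
    have p2 : |(S.μ.real A - S.μ.real A') * S.μ.real B| ≤ ε * 1 := by
      rw [abs_mul, abs_of_nonneg (a := S.μ.real B) measureReal_nonneg]
      exact mul_le_mul (h1.trans hPε) h4 measureReal_nonneg hε
    rw [abs_le] at p1 p2 ⊢
    constructor <;> linarith [p1.1, p1.2, p2.1, p2.2]
  have hu : ∀ k, 0 ≤ S.u (L 0 0) k := fun k => by rw [u_eq]; exact measureReal_nonneg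
  set N : ℝ := ((R 0 (n + 1)).card : ℝ) with hN
  set a := S.a (L 0 0) (pp n) with ha
  have hNa : N ≤ 2 * a := a_lower n
  have hNpos : 0 < N := by
    have h1 := R0_card (n + 1)
    rw [← hN] at h1
    have h2 := ww_pos (n + 1)
    by_contra h
    push Not at h
    nlinarith
  have hapos : 0 < a := by linarith
  have hsum : ∑ k ∈ Finset.range (pp n),
      |S.μ.real (A ∩ S.T^[k] '' B) - S.μ.real A * S.μ.real B * S.u (L 0 0) k| ≤
      (N * ε + N * ε) + 2 * hh j * vv j d * N + 2 * ε * a := by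
    calc _ ≤ ∑ k ∈ Finset.range (pp n), ((S.μ.real (symmDiff A A' ∩ S.T^[k] '' L 0 0) +
        S.μ.real (L 0 0 ∩ S.T^[k] '' symmDiff B B')) +
        |S.μ.real (A' ∩ S.T^[k] '' B') - S.μ.real A' * S.μ.real B' * S.u (L 0 0) k| +
        2 * ε * S.u (L 0 0) k) := by
          refine Finset.sum_le_sum fun k _ => ?_
          have h1 := diff_two hAI hBI hPI hQI k
          have h2 : |(S.μ.real A' * S.μ.real B' - S.μ.real A * S.μ.real B) * S.u (L 0 0) k| ≤
              2 * ε * S.u (L 0 0) k := by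
            rw [abs_mul, abs_of_nonneg (hu k)]
            exact mul_le_mul_of_nonneg_right hprod (hu k)
          have e : S.μ.real (A ∩ S.T^[k] '' B) - S.μ.real A * S.μ.real B * S.u (L 0 0) k =
            (S.μ.real (A ∩ S.T^[k] '' B) - S.μ.real (A' ∩ S.T^[k] '' B')) +
            (S.μ.real (A' ∩ S.T^[k] '' B') - S.μ.real A' * S.μ.real B' * S.u (L 0 0) k) +
            (S.μ.real A' * S.μ.real B' - S.μ.real A * S.μ.real B) * S.u (L 0 0) k := by ring
          rw [e]
          exact (abs_add_three _ _ _).trans (add_le_add (add_le_add h1 le_rfl) h2)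
      _ ≤ _ := by
          rw [Finset.sum_add_distrib, Finset.sum_add_distrib, Finset.sum_add_distrib,
            ← Finset.mul_sum]
          refine add_le_add (add_le_add (add_le_add ?_ ?_) (level_est hn hd hP hQ)) le_rfl
          · exact (M2a_real n (hA.symmDiff (U_meas _ _)) sAI).trans
              (mul_le_mul_of_nonneg_left hPε hNpos.le)
          · exact (M2b_real n (hB.symmDiff (U_meas _ _)) sBI).trans
              (mul_le_mul_of_nonneg_left hQε hNpos.le)
  rw [inv_mul_le_iff₀ hapos]
  refine hsum.trans ?_
  have hc : 0 ≤ 2 * ε + 2 * hh j * vv j d := by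
    have := (vv_range j d).1
    positivity
  nlinarith [mul_le_mul_of_nonneg_left hNa hc]

lemma two_pow_le (n : ℕ) : (2 : ℝ) ^ n ≤ hh n * ww n := by
  induction n with
  | zero => simp [hh, ww]
  | succ n ih =>
    have h1 : 2 * ((n + 2) * hh n) ≤ hh (n + 1) := by
      rw [hh_succ, pp, Finset.sum_add_distrib]
      simp only [Finset.sum_const, Finset.card_range, smul_eq_mul]
      have e : (n + 2) * hh n = (n + 1) * hh n + hh n := by ring
      rw [e]
      omega
    have h2 : (2 : ℝ) * ((n + 2) * hh n) ≤ hh (n + 1) := by exact_mod_cast h1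
    have h3 := ww_pos (n + 1)
    calc (2 : ℝ) ^ (n + 1) = 2 * 2 ^ n := by ring
      _ ≤ 2 * (hh n * ww n) := by gcongr
      _ = 2 * ((n + 2) * hh n) * ww (n + 1) := by rw [ww_eq n]; ring
      _ ≤ _ := by gcongr

lemma vol_top : volume S.X = ⊤ := by
  by_contra h
  obtain ⟨n, hn⟩ := pow_unbounded_of_one_lt (volume S.X).toReal (one_lt_two (α := ℝ))
  have h1 : S.μ.real (U n (Finset.range (hh n))) = hh n * ww n := by
    rw [real_U (fun p hp => Finset.mem_range.1 hp), Finset.card_range]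
  have h2 : S.μ.real (U n (Finset.range (hh n))) ≤ (volume S.X).toReal := by
    apply ENNReal.toReal_mono h
    calc S.μ _ ≤ S.μ Set.univ := measure_mono (Set.subset_univ _)
      _ = volume S.X := by simp [RankOne.μ]
  linarith [two_pow_le n]

lemma pp_mono : StrictMono pp := by
  apply strictMono_nat_of_lt_succ
  intro n
  have h1 := hh_succ n
  have h2 := pp_pos n
  have h3 : hh (n + 1) ≤ pp (n + 1) := by unfold pp; omega
  omega

lemma final {A B : Set ℝ} (hA : MeasurableSet A) (hAI : A ⊆ L 0 0) (hB : MeasurableSet B)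
    (hBI : B ⊆ L 0 0) :
    Tendsto (fun i => (S.a (L 0 0) (pp i))⁻¹ * ∑ k ∈ Finset.range (pp i),
      |S.μ.real (A ∩ S.T^[k] '' B) - S.μ.real A * S.μ.real B * S.u (L 0 0) k|)
      atTop (nhds 0) := by
  rw [Metric.tendsto_atTop]
  intro ε hε
  obtain ⟨j1, hj1⟩ := approx hA hAI (ε := ε / 12) (by positivity)
  obtain ⟨j2, hj2⟩ := approx hB hBI (ε := ε / 12) (by positivity)
  set j := max j1 j2
  obtain ⟨P, hP, hPε⟩ := hj1 j (le_max_left _ _)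
  obtain ⟨Q, hQ, hQε⟩ := hj2 j (le_max_right _ _)
  have hv := (vv_tendsto j).const_mul (4 * (hh j : ℝ))
  rw [mul_zero] at hv
  obtain ⟨d0, hd0⟩ := eventually_atTop.1 (hv.eventually (gt_mem_nhds (half_pos hε)))
  refine ⟨j + d0, fun i hi => ?_⟩
  have h1 := main_est hA hAI hB hBI (j := j) (d := i + 1 - j) (n := i) (by omega) (by omega)
    hP hQ hPε hQε
  have h2 := hd0 (i + 1 - j) (by omega)
  have h3 : 0 ≤ S.a (L 0 0) (pp i) := by
    have := a_lower i
    have h : (0 : ℝ) ≤ ((R 0 (i + 1)).card : ℝ) := by positivity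
    linarith
  rw [Real.dist_eq, sub_zero, abs_of_nonneg (mul_nonneg (inv_nonneg.2 h3)
    (Finset.sum_nonneg fun _ _ => abs_nonneg _))]
  linarith

end R1


/-- There exist a rank-one transformation `T` of an infinite measure space
and an increasing sequence `(m i)` of positive integers along which `T` is subsequence
rationally weakly mixing on the unit interval `I`. -/
theorem statement5 :
    ∃ (S : RankOne) (m : ℕ → ℕ), StrictMono m ∧ (∀ i, 0 < m i) ∧ volume S.X = ⊤ ∧
      ∀ A B : Set ℝ, MeasurableSet A → A ⊆ S.lvl 0 0 → MeasurableSet B → B ⊆ S.lvl 0 0 →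
        Tendsto (fun i => (S.a (S.lvl 0 0) (m i))⁻¹ *
            ∑ k ∈ Finset.range (m i),
              |(S.μ (A ∩ (⇑S.T)^[k] '' B)).toReal -
                (S.μ A).toReal * (S.μ B).toReal * S.u (S.lvl 0 0) k|)
          atTop (nhds 0) := by
  refine ⟨R1.S, R1.pp, R1.pp_mono, R1.pp_pos, R1.vol_top, ?_⟩
  intro A B hA hAI hB hBI
  exact R1.final hA hAI hB hBI
end

section
/- Let T be the rank-one transformation constructed by cutting each column C_n into two subcolumns of equal width (r_n = 2) and adding no spacers above the left subcolumn (s_{n,0} = 0) and c_n ≥ 2h_n spacers above the right subcolumn (s_{n,1} = c_n), for every n. Then T is not rationally weakly mixing: there is no measurable set F with 0 < μ(F) < ∞ such that for all measurable A, B ⊆ F, (1/a_n(F)) ∑_{k=0}^{n−1} |μ(A ∩ T^k B) − μ(A)μ(B) u_k(F)| → 0 as n → ∞. -/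
open MeasureTheory Filter Set Pointwise

namespace RankOne

lemma four_h (S : RankOne) (hr2 : ∀ n, S.r n = 2) (hs0 : ∀ n, S.s n 0 = 0)
    (hs1 : ∀ n, 2 * S.h n ≤ S.s n 1) (n : ℕ) : 4 * S.h n ≤ S.h (n + 1) := by
  have h1 := S.hrec n
  rw [hr2, Finset.sum_range_succ, Finset.sum_range_succ, Finset.sum_range_zero, hs0] at h1
  have h2 := hs1 n
  omega

lemma h_gt (S : RankOne) (h4 : ∀ n, 4 * S.h n ≤ S.h (n + 1)) (n : ℕ) : n < S.h n := by
  induction n with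
  | zero => rw [S.h0]; norm_num
  | succ k ih => have := h4 k; omega

lemma h_mono (S : RankOne) (h4 : ∀ n, 4 * S.h n ≤ S.h (n + 1)) : Monotone S.h :=
  monotone_nat_of_le_succ (fun n => by have := h4 n; omega)

lemma w_succ (S : RankOne) (hr2 : ∀ n, S.r n = 2) (n : ℕ) : S.w (n + 1) = S.w n / 2 := by
  rw [S.wrec, hr2]; norm_num

lemma w_eq (S : RankOne) (hr2 : ∀ n, S.r n = 2) (n : ℕ) : S.w n = (1 / 2 : ℝ) ^ n := by
  induction n with
  | zero => rw [S.w0]; norm_num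
  | succ k ih => rw [S.w_succ hr2, ih, pow_succ]; ring

lemma w_pos (S : RankOne) (hr2 : ∀ n, S.r n = 2) (n : ℕ) : 0 < S.w n := by
  rw [S.w_eq hr2]; positivity

lemma pos_left (S : RankOne) (n j : ℕ) (hj : j < S.h n) : S.pos (n + 1) j = S.pos n j := by
  have := S.stack n j hj 0 (by have := S.hr n; omega)
  simpa using this

lemma pos_right (S : RankOne) (hr2 : ∀ n, S.r n = 2) (hs0 : ∀ n, S.s n 0 = 0)
    (n j : ℕ) (hj : j < S.h n) :
    S.pos (n + 1) (j + S.h n) = S.pos n j + S.w n / 2 := by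
  have := S.stack n j hj 1 (by rw [hr2]; norm_num)
  simp only [Finset.sum_range_one, hs0, S.w_succ hr2] at this
  rw [add_comm j]
  simpa using this

/-- Heights of the descendants in column `m + i` of level `p` of column `m`. -/
def Ds (S : RankOne) (m p : ℕ) : ℕ → Set ℕ
  | 0 => {p}
  | i + 1 => {d | d ∈ Ds S m p i ∨ ∃ e ∈ Ds S m p i, d = e + S.h (m + i)}

lemma Ds_bound (S : RankOne) (h4 : ∀ n, 4 * S.h n ≤ S.h (n + 1)) (m p i : ℕ) :
    ∀ d ∈ S.Ds m p i, p ≤ d ∧ 3 * d ≤ 3 * p + S.h (m + i) := by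
  induction i with
  | zero => intro d hd; simp only [Ds, mem_singleton_iff] at hd; omega
  | succ i ih =>
    have := h4 (m + i)
    rw [← add_assoc m i 1]
    rintro d (hd | ⟨e, he, rfl⟩)
    · have := ih d hd; omega
    · have := ih e he; omega

lemma Ds_gap (S : RankOne) (h4 : ∀ n, 4 * S.h n ≤ S.h (n + 1)) (m p i : ℕ) :
    ∀ a ∈ S.Ds m p i, ∀ b ∈ S.Ds m p i, ∀ c ∈ S.Ds m p i, ∀ d ∈ S.Ds m p i,
      a + b = c + d ∨ 3 * (a + b) + S.h m ≤ 3 * (c + d) ∨ 3 * (c + d) + S.h m ≤ 3 * (a + b) := by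
  induction i with
  | zero =>
    intro a ha b hb c hc d hd
    simp only [Ds, mem_singleton_iff] at *
    omega
  | succ i ih =>
    have hm : S.h m ≤ S.h (m + i) := S.h_mono h4 (by omega)
    have hb := S.Ds_bound h4 m p i
    have key : ∀ a ∈ S.Ds m p (i + 1), ∃ e ∈ S.Ds m p i, a = e ∨ a = e + S.h (m + i) := by
      rintro a (ha | ⟨e, he, rfl⟩)
      · exact ⟨a, ha, Or.inl rfl⟩
      · exact ⟨e, he, Or.inr rfl⟩
    intro a ha b hb' c hc d hd
    obtain ⟨a', ha, ha'⟩ := key a ha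
    obtain ⟨b', hb', hb''⟩ := key b hb'
    obtain ⟨c', hc, hc'⟩ := key c hc
    obtain ⟨d', hd, hd'⟩ := key d hd
    have h1 := ih a' ha b' hb' c' hc d' hd
    have h2 := hb a' ha
    have h3 := hb b' hb'
    have h5 := hb c' hc
    have h6 := hb d' hd
    rcases ha' with rfl | rfl <;> rcases hb'' with rfl | rfl <;> rcases hc' with rfl | rfl <;>
      rcases hd' with rfl | rfl <;> omega

/-- All endpoints of levels. -/
def Z (S : RankOne) : Set ℝ := Set.range (fun v : ℕ × ℕ => S.pos v.1 v.2)

lemma Z_countable (S : RankOne) : S.Z.Countable := Set.countable_range _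

lemma Ds_cover (S : RankOne) (hr2 : ∀ n, S.r n = 2) (hs0 : ∀ n, S.s n 0 = 0)
    (h4 : ∀ n, 4 * S.h n ≤ S.h (n + 1)) (m p : ℕ) (hp : 4 * p < S.h m) (x : ℝ)
    (hx : x ∈ S.lvl m p) (hZ : x ∉ S.Z) (i : ℕ) :
    ∃ d ∈ S.Ds m p i, x ∈ S.lvl (m + i) d := by
  induction i with
  | zero => exact ⟨p, rfl, hx⟩
  | succ i ih =>
    obtain ⟨d, hd, hxd⟩ := ih
    have hb := S.Ds_bound h4 m p i d hd
    have hm : S.h m ≤ S.h (m + i) := S.h_mono h4 (by omega)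
    have hdh : d < S.h (m + i) := by omega
    have hl := S.pos_left (m + i) d hdh
    have hrr := S.pos_right hr2 hs0 (m + i) d hdh
    have hw := S.w_succ hr2 (m + i)
    have hne : x ≠ S.pos (m + i + 1) (d + S.h (m + i)) := by
      rintro rfl
      exact hZ ⟨(m + i + 1, d + S.h (m + i)), rfl⟩
    rw [hrr] at hne
    simp only [lvl, mem_Ioo] at hxd
    rcases lt_or_gt_of_ne hne with h | h
    · refine ⟨d, Or.inl hd, ?_⟩
      rw [← add_assoc m i 1]
      simp only [lvl, mem_Ioo, hl, hw]
      exact ⟨hxd.1, h⟩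
    · refine ⟨d + S.h (m + i), Or.inr ⟨d, hd, rfl⟩, ?_⟩
      rw [← add_assoc m i 1]
      simp only [lvl, mem_Ioo, hrr, hw]
      exact ⟨h, by linarith [hxd.2]⟩

lemma iter_T (S : RankOne) (N j k : ℕ) (hk : j + k < S.h N) (x : ℝ) (hx : x ∈ S.lvl N j) :
    (⇑S.T)^[k] x = x + (S.pos N (j + k) - S.pos N j) := by
  induction k with
  | zero => simp
  | succ k ih =>
    have ih := ih (by omega)
    rw [Function.iterate_succ_apply', ih, S.Tmap N (j + k) (by omega), ← add_assoc j k 1]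
    · ring
    · simp only [lvl, mem_Ioo] at hx ⊢
      constructor <;> linarith [hx.1, hx.2]

lemma iter_T_mem (S : RankOne) (N j k : ℕ) (hk : j + k < S.h N) (x : ℝ) (hx : x ∈ S.lvl N j) :
    (⇑S.T)^[k] x ∈ S.lvl N (j + k) := by
  rw [S.iter_T N j k hk x hx]
  simp only [lvl, mem_Ioo] at hx ⊢
  constructor <;> linarith [hx.1, hx.2]

lemma return_diff (S : RankOne) (hr2 : ∀ n, S.r n = 2) (hs0 : ∀ n, S.s n 0 = 0)
    (h4 : ∀ n, 4 * S.h n ≤ S.h (n + 1)) (m p : ℕ) (hp : 4 * p < S.h m) (k : ℕ)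
    (A : Set ℝ) (hA : A ⊆ S.lvl m p)
    (hpos : S.μ (A ∩ (⇑S.T)^[k] '' A) ≠ 0) (i : ℕ) (hi : 4 * k ≤ i) :
    ∃ d ∈ S.Ds m p i, ∃ e ∈ S.Ds m p i, d = e + k := by
  have hc : (S.Z ∪ (⇑S.T)^[k] '' S.Z).Countable := S.Z_countable.union (S.Z_countable.image _)
  have hnull : S.μ (S.Z ∪ (⇑S.T)^[k] '' S.Z) = 0 := by
    unfold μ; exact hc.measure_zero _
  have : ¬ (A ∩ (⇑S.T)^[k] '' A ⊆ S.Z ∪ (⇑S.T)^[k] '' S.Z) := fun h =>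
    hpos (measure_mono_null h hnull)
  obtain ⟨y, ⟨hyA, x, hxA, rfl⟩, hyZ⟩ := Set.not_subset.1 this
  simp only [mem_union, not_or] at hyZ
  have hxZ : x ∉ S.Z := fun h => hyZ.2 ⟨x, h, rfl⟩
  obtain ⟨e, he, hxe⟩ := S.Ds_cover hr2 hs0 h4 m p hp x (hA hxA) hxZ i
  obtain ⟨d, hd, hyd⟩ := S.Ds_cover hr2 hs0 h4 m p hp _ (hA hyA) hyZ.1 i
  have hm : S.h m ≤ S.h (m + i) := S.h_mono h4 (by omega)
  have hg := S.h_gt h4 (m + i)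
  have hb := S.Ds_bound h4 m p i e he
  have hb' := S.Ds_bound h4 m p i d hd
  have hek : e + k < S.h (m + i) := by omega
  have hyd' := S.iter_T_mem (m + i) e k hek x hxe
  refine ⟨d, hd, e, he, ?_⟩
  by_contra hne
  exact Set.disjoint_left.1 (S.disj (m + i) d (by omega) (e + k) hek hne) hyd hyd'

lemma closed_next (S : RankOne) (hr2 : ∀ n, S.r n = 2) (hs0 : ∀ n, S.s n 0 = 0)
    (h4 : ∀ n, 4 * S.h n ≤ S.h (n + 1)) (x : ℝ) (n j : ℕ) (hj : j < S.h n)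
    (hx : x ∈ Set.Icc (S.pos n j) (S.pos n j + S.w n)) (i : ℕ) :
    ∃ j < S.h (n + i), x ∈ Set.Icc (S.pos (n + i) j) (S.pos (n + i) j + S.w (n + i)) := by
  induction i with
  | zero => exact ⟨j, hj, hx⟩
  | succ i ih =>
    obtain ⟨d, hd, hxd⟩ := ih
    have hl := S.pos_left (n + i) d hd
    have hrr := S.pos_right hr2 hs0 (n + i) d hd
    have hw := S.w_succ hr2 (n + i)
    have := h4 (n + i)
    simp only [mem_Icc] at hxd
    rw [← add_assoc n i 1]
    rcases le_total x (S.pos (n + i) d + S.w (n + i) / 2) with h | h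
    · refine ⟨d, by omega, ?_⟩
      simp only [mem_Icc, hl, hw]
      exact ⟨hxd.1, h⟩
    · refine ⟨d + S.h (n + i), by omega, ?_⟩
      simp only [mem_Icc, hrr, hw]
      exact ⟨h, by linarith [hxd.2]⟩

lemma lvl_sub (S : RankOne) (n j : ℕ) (hj : j < S.h n) : S.lvl n j ⊆ S.X := by
  rw [S.hX]
  intro x hx
  simp only [mem_iUnion]
  exact ⟨n, j, hj, hx⟩

lemma dense_level (S : RankOne) (hr2 : ∀ n, S.r n = 2) (hs0 : ∀ n, S.s n 0 = 0)
    (h4 : ∀ n, 4 * S.h n ≤ S.h (n + 1)) (F : Set ℝ) (hF : MeasurableSet F) (h0 : S.μ F ≠ 0) :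
    ∃ n, ∃ j < S.h n, ENNReal.ofReal (S.w n / 2) <
      volume (F ∩ Set.Icc (S.pos n j) (S.pos n j + S.w n)) := by
  have hae := IsUnifLocDoublingMeasure.ae_tendsto_measure_inter_div (volume : Measure ℝ) F 1
  have hFX : volume (F ∩ S.X) ≠ 0 := by
    rwa [μ, Measure.restrict_apply hF] at h0
  rw [ae_restrict_iff' hF] at hae
  obtain ⟨x, hxFX, hx⟩ : ∃ x ∈ F ∩ S.X, _ := by
    by_contra hcon
    push Not at hcon
    exact hFX (measure_mono_null (fun x hx => fun h => hcon x hx h) hae)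
  have hxX := hxFX.2
  rw [S.hX] at hxX
  simp only [mem_iUnion] at hxX
  obtain ⟨n, j, hj, hxj⟩ := hxX
  choose J hJ hxJ using S.closed_next hr2 hs0 h4 x n j hj (Ioo_subset_Icc_self hxj)
  have hball : ∀ i, Metric.closedBall (S.pos (n + i) (J i) + S.w (n + i) / 2) (S.w (n + i) / 2)
      = Set.Icc (S.pos (n + i) (J i)) (S.pos (n + i) (J i) + S.w (n + i)) := by
    intro i; rw [Real.closedBall_eq_Icc]; congr 1 <;> ring
  have ht := hx hxFX.1 (l := atTop) (fun i => S.pos (n + i) (J i) + S.w (n + i) / 2)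
    (fun i => S.w (n + i) / 2) (by
      rw [tendsto_nhdsWithin_iff]
      refine ⟨?_, Eventually.of_forall fun i => half_pos (S.w_pos hr2 _)⟩
      have : (fun i => S.w (n + i) / 2) = fun i => ((1 / 2 : ℝ) ^ n / 2) * (1 / 2 : ℝ) ^ i := by
        funext i; rw [S.w_eq hr2, pow_add]; ring
      rw [this]
      simpa using (tendsto_pow_atTop_nhds_zero_of_lt_one (r := (1 / 2 : ℝ)) (by norm_num)
        (by norm_num)).const_mul ((1 / 2 : ℝ) ^ n / 2))
    (Eventually.of_forall fun i => by rw [one_mul, hball]; exact hxJ i)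
  have hev := ht.eventually (lt_mem_nhds (show ENNReal.ofReal (1 / 2) < 1 by
    rw [ENNReal.ofReal_lt_one]; norm_num))
  obtain ⟨i, hi⟩ := hev.exists
  refine ⟨n + i, J i, hJ i, ?_⟩
  rw [hball, Real.volume_Icc, add_sub_cancel_left] at hi
  have hw := S.w_pos hr2 (n + i)
  rw [ENNReal.lt_div_iff_mul_lt (Or.inl (by simpa using hw)) (Or.inl ENNReal.ofReal_ne_top),
    ← ENNReal.ofReal_mul (by norm_num)] at hi
  convert hi using 2
  ring

lemma exists_A (S : RankOne) (hr2 : ∀ n, S.r n = 2) (hs0 : ∀ n, S.s n 0 = 0)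
    (h4 : ∀ n, 4 * S.h n ≤ S.h (n + 1)) (F : Set ℝ) (hF : MeasurableSet F) (h0 : S.μ F ≠ 0) :
    ∃ n, ∃ j < S.h n, ∃ A, MeasurableSet A ∧ A ⊆ S.lvl (n + 1) j ∧ A ⊆ F ∧
      (⇑S.T)^[S.h n] '' A ⊆ F ∧ S.μ A ≠ 0 := by
  obtain ⟨n, j, hj, hd⟩ := S.dense_level hr2 hs0 h4 F hF h0
  have hTm : Measurable (⇑S.T)^[S.h n] := S.T.measurable.iterate _
  have h4n := h4 n
  have hlm : MeasurableSet (S.lvl (n + 1) j) := measurableSet_Ioo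
  have hAm : MeasurableSet (S.lvl (n + 1) j ∩ F ∩ (⇑S.T)^[S.h n] ⁻¹' F) :=
    (hlm.inter hF).inter (hTm hF)
  refine ⟨n, j, hj, S.lvl (n + 1) j ∩ F ∩ (⇑S.T)^[S.h n] ⁻¹' F, hAm,
    fun x hx => hx.1.1, fun x hx => hx.1.2, ?_, ?_⟩
  · rintro _ ⟨x, hx, rfl⟩; exact hx.2
  intro hz
  have hAX : S.lvl (n + 1) j ∩ F ∩ (⇑S.T)^[S.h n] ⁻¹' F ⊆ S.X :=
    fun x hx => S.lvl_sub (n + 1) j (by omega) hx.1.1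
  rw [μ, Measure.restrict_apply hAm, Set.inter_eq_left.2 hAX] at hz
  have hl := S.pos_left n j hj
  have hrr := S.pos_right hr2 hs0 n j hj
  have hw := S.w_succ hr2 n
  have hwp := S.w_pos hr2 n
  -- translation by half the width
  have htr : ∀ x ∈ S.lvl (n + 1) j, (⇑S.T)^[S.h n] x = x + S.w n / 2 := by
    intro x hx
    rw [S.iter_T (n + 1) j (S.h n) (by omega) x hx, hl, hrr]; ring
  set P := S.lvl (n + 1) j ∩ F with hP
  set Q := S.lvl (n + 1) j ∩ (fun x => x + S.w n / 2) ⁻¹' F with hQ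
  have hPm : MeasurableSet P := hlm.inter hF
  have hPQ : volume (P ∩ Q) = 0 := by
    refine measure_mono_null ?_ hz
    rintro x ⟨hx, hx2, hx3⟩
    refine ⟨hx, ?_⟩
    rw [mem_preimage, htr x hx2]; exact hx3
  have hQv : volume Q = volume (F ∩ Set.Ioo (S.pos n j + S.w n / 2) (S.pos n j + S.w n)) := by
    rw [← measure_preimage_add_right volume (S.w n / 2)
      (F ∩ Set.Ioo (S.pos n j + S.w n / 2) (S.pos n j + S.w n))]
    congr 1
    ext x
    simp only [hQ, lvl, mem_inter_iff, mem_Ioo, mem_preimage, hl, hw]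
    constructor
    · rintro ⟨⟨h1, h2⟩, h3⟩; exact ⟨h3, by linarith, by linarith⟩
    · rintro ⟨h3, h1, h2⟩; exact ⟨⟨by linarith, by linarith⟩, h3⟩
  have hsum : volume P + volume Q ≤ ENNReal.ofReal (S.w n / 2) := by
    have := measure_union_add_inter' hPm (μ := volume) Q
    rw [hPQ, add_zero] at this
    rw [← this]
    calc volume (P ∪ Q) ≤ volume (S.lvl (n + 1) j) :=
          measure_mono (Set.union_subset (fun x hx => hx.1) (fun x hx => hx.1))
      _ = _ := by rw [lvl, Real.volume_Ioo, hw, add_sub_cancel_left]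
  have hcov : volume (F ∩ Set.Icc (S.pos n j) (S.pos n j + S.w n)) ≤ volume P + volume Q := by
    rw [hQv]
    have hfin : volume ({S.pos n j, S.pos n j + S.w n / 2, S.pos n j + S.w n} : Set ℝ) = 0 :=
      (Set.toFinite _).measure_zero _
    calc volume (F ∩ Set.Icc (S.pos n j) (S.pos n j + S.w n))
        ≤ volume ((P ∪ (F ∩ Set.Ioo (S.pos n j + S.w n / 2) (S.pos n j + S.w n))) ∪
            {S.pos n j, S.pos n j + S.w n / 2, S.pos n j + S.w n}) := by
          refine measure_mono ?_
          rintro x ⟨hxF, hx1, hx2⟩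
          simp only [hP, lvl, hl, hw, mem_union, mem_inter_iff, mem_Ioo, mem_insert_iff,
            mem_singleton_iff]
          rcases eq_or_lt_of_le hx1 with h1 | h1
          · exact Or.inr (Or.inl h1.symm)
          rcases eq_or_lt_of_le hx2 with h2 | h2
          · exact Or.inr (Or.inr (Or.inr h2))
          rcases lt_trichotomy x (S.pos n j + S.w n / 2) with h | h | h
          · exact Or.inl (Or.inl ⟨⟨h1, h⟩, hxF⟩)
          · exact Or.inr (Or.inr (Or.inl h))
          · exact Or.inl (Or.inr ⟨hxF, h, h2⟩)
      _ ≤ volume (P ∪ (F ∩ Set.Ioo (S.pos n j + S.w n / 2) (S.pos n j + S.w n))) + 0 := by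
          rw [← hfin]; exact measure_union_le _ _
      _ ≤ _ := by rw [add_zero]; exact measure_union_le _ _
  exact absurd (hd.trans_le (hcov.trans hsum)) (lt_irrefl _)

end RankOne

/-- The rank-one transformation obtained by cutting each column in half
(`r n = 2`), adding no spacers on the left subcolumn and `c_n ≥ 2 h_n` spacers on the right
subcolumn, is not rationally weakly mixing. -/
theorem statement6 (S : RankOne) (hr2 : ∀ n, S.r n = 2) (hs0 : ∀ n, S.s n 0 = 0)
    (hs1 : ∀ n, 2 * S.h n ≤ S.s n 1) :
    ¬ S.RWM := by
  rintro ⟨F, hF, hpos, hfin, hRWM⟩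
  have h4 := S.four_h hr2 hs0 hs1
  obtain ⟨n, j, hj, A, hAm, hAl, hAF, hTAF, hA0⟩ := S.exists_A hr2 hs0 h4 F hF hpos.ne'
  have hTinj : Function.Injective (⇑S.T)^[S.h n] := S.T.injective.iterate _
  have hTm : Measurable (⇑S.T)^[S.h n] := S.T.measurable.iterate _
  set B := (⇑S.T)^[S.h n] '' A with hB
  have hBm : MeasurableSet B := hAm.image_of_measurable_injOn hTm hTinj.injOn
  have hBA : S.μ B = S.μ A := by
    have := (S.Tpres.iterate (S.h n)).measure_preimage hBm.nullMeasurableSet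
    rw [hB, hTinj.preimage_image] at this
    exact this.symm
  have hAfin : S.μ A ≠ ⊤ := measure_ne_top_of_subset hAF hfin
  have hα : 0 < (S.μ A).toReal := ENNReal.toReal_pos hA0 hAfin
  have t1 := hRWM A A hAm hAF hAm hAF
  have t2 := hRWM A B hAm hAF hBm hTAF
  rw [hBA] at t2
  have t3 := t1.add t2
  rw [add_zero] at t3
  have hu : ∀ k, 0 ≤ S.u F k := fun k => by unfold RankOne.u; positivity
  have hFpos : 0 < (S.μ F).toReal := ENNReal.toReal_pos hpos.ne' hfin
  have hu0 : 0 < S.u F 0 := by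
    unfold RankOne.u
    simp only [Function.iterate_zero, image_id, inter_self]
    positivity
  have hzero : ∀ k, S.μ (A ∩ (⇑S.T)^[k] '' A) = 0 ∨ S.μ (A ∩ (⇑S.T)^[k] '' B) = 0 := by
    intro k
    by_contra hcon
    push Not at hcon
    obtain ⟨c1, c2⟩ := hcon
    rw [hB, ← image_comp, ← Function.iterate_add] at c2
    have hp : 4 * j < S.h (n + 1) := by have := h4 n; omega
    obtain ⟨d, hd, e, he, hde⟩ := S.return_diff hr2 hs0 h4 (n + 1) j hp k A hAl c1
      (4 * (k + S.h n)) (by omega)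
    obtain ⟨d', hd', e', he', hde'⟩ := S.return_diff hr2 hs0 h4 (n + 1) j hp (k + S.h n) A hAl c2
      (4 * (k + S.h n)) (by omega)
    have := S.Ds_gap h4 (n + 1) j _ d hd e' he' d' hd' e he
    have := h4 n
    have := S.h_gt h4 n
    omega
  have hge : ∀ᶠ N in atTop, (S.μ A).toReal * (S.μ A).toReal ≤
      (S.a F N)⁻¹ * ∑ k ∈ Finset.range N,
        |(S.μ (A ∩ (⇑S.T)^[k] '' A)).toReal - (S.μ A).toReal * (S.μ A).toReal * S.u F k| +
      (S.a F N)⁻¹ * ∑ k ∈ Finset.range N,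
        |(S.μ (A ∩ (⇑S.T)^[k] '' B)).toReal - (S.μ A).toReal * (S.μ A).toReal * S.u F k| := by
    filter_upwards [eventually_ge_atTop 1] with N hN
    have ha : 0 < S.a F N := by
      unfold RankOne.a
      exact Finset.sum_pos' (fun k _ => hu k) ⟨0, Finset.mem_range.2 hN, hu0⟩
    rw [← mul_add, ← Finset.sum_add_distrib, inv_mul_eq_div, le_div_iff₀ ha]
    conv_lhs => rw [RankOne.a, Finset.mul_sum]
    refine Finset.sum_le_sum fun k _ => ?_
    have hnn : 0 ≤ (S.μ A).toReal * (S.μ A).toReal * S.u F k :=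
      mul_nonneg (mul_nonneg hα.le hα.le) (hu k)
    rcases hzero k with h | h
    · rw [h, ENNReal.toReal_zero, zero_sub, abs_neg, abs_of_nonneg hnn]
      exact le_add_of_nonneg_right (abs_nonneg _)
    · rw [h, ENNReal.toReal_zero, zero_sub, abs_neg, abs_of_nonneg hnn]
      exact le_add_of_nonneg_left (abs_nonneg _)
  have := ge_of_tendsto t3 hge
  nlinarith
end

section
/- Let T be the rank-one transformation constructed by cutting each column C_n into two subcolumns of equal width (r_n = 2) and adding no spacers above the left subcolumn (s_{n,0} = 0) and exactly 2h_n + 1 spacers above the right subcolumn (s_{n,1} = 2h_n + 1), for every n. Then T is rationally ergodic and spectrally weakly mixing, but T is not rationally weakly mixing. -/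
open MeasureTheory Filter Set Pointwise

/-- The hypotheses of the theorem, bundled. -/
structure Good7 (S : RankOne) : Prop where
  hr2 : ∀ n, S.r n = 2
  hs0 : ∀ n, S.s n 0 = 0
  hs1 : ∀ n, S.s n 1 = 2 * S.h n + 1

namespace Good7

variable {S : RankOne}

lemma h_succ (H : Good7 S) (n : ℕ) : S.h (n + 1) = 4 * S.h n + 1 := by
  rw [S.hrec, H.hr2]
  simp [Finset.sum_range_succ, H.hs0, H.hs1]
  ring

lemma h_pos (H : Good7 S) (n : ℕ) : 1 ≤ S.h n := by
  cases n with
  | zero => rw [S.h0]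
  | succ n => rw [H.h_succ]; omega

lemma h_mono (H : Good7 S) : StrictMono S.h :=
  strictMono_nat_of_lt_succ fun n => by rw [H.h_succ]; omega

lemma le_h (H : Good7 S) (n : ℕ) : n ≤ S.h n := H.h_mono.le_apply

lemma w_succ (H : Good7 S) (n : ℕ) : S.w (n + 1) = S.w n / 2 := by
  rw [S.wrec, H.hr2]; norm_num

lemma w_eq (H : Good7 S) (n : ℕ) : S.w n = (1 / 2) ^ n := by
  induction n with
  | zero => simp [S.w0]
  | succ n ih => rw [H.w_succ, ih, pow_succ]; ring

lemma w_pos (H : Good7 S) (n : ℕ) : 0 < S.w n := by rw [H.w_eq]; positivity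

lemma pos_left (H : Good7 S) (n j : ℕ) (hj : j < S.h n) : S.pos (n + 1) j = S.pos n j := by
  have := S.stack n j hj 0 (by rw [H.hr2]; omega)
  simpa using this

lemma pos_right (H : Good7 S) (n j : ℕ) (hj : j < S.h n) :
    S.pos (n + 1) (S.h n + j) = S.pos n j + S.w (n + 1) := by
  have := S.stack n j hj 1 (by rw [H.hr2]; omega)
  simpa [H.hs0] using this

lemma lvl_left (H : Good7 S) (n j : ℕ) (hj : j < S.h n) : S.lvl (n + 1) j ⊆ S.lvl n j := by
  intro x hx
  have := H.w_pos n
  have := H.w_succ n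
  simp only [RankOne.lvl, mem_Ioo, H.pos_left n j hj] at hx ⊢
  constructor <;> linarith

lemma lvl_right (H : Good7 S) (n j : ℕ) (hj : j < S.h n) :
    S.lvl (n + 1) (S.h n + j) ⊆ S.lvl n j := by
  intro x hx
  have := H.w_pos n
  have := H.w_succ n
  simp only [RankOne.lvl, mem_Ioo, H.pos_right n j hj] at hx ⊢
  constructor <;> linarith

/-- The (countable) exceptional set of left endpoints. -/
def E (S : RankOne) : Set ℝ := range fun v : ℕ × ℕ => S.pos v.1 v.2

lemma E_countable : (E S).Countable := countable_range _

lemma split (H : Good7 S) {n j : ℕ} (hj : j < S.h n) {x : ℝ} (hx : x ∈ S.lvl n j)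
    (hE : x ∉ E S) : x ∈ S.lvl (n + 1) j ∨ x ∈ S.lvl (n + 1) (S.h n + j) := by
  have := H.w_succ n
  simp only [RankOne.lvl, mem_Ioo, H.pos_right n j hj, H.pos_left n j hj] at hx ⊢
  have h1 : x ≠ S.pos (n + 1) (S.h n + j) := fun h => hE ⟨(n + 1, S.h n + j), h.symm⟩
  rw [H.pos_right n j hj] at h1
  rcases lt_or_gt_of_ne h1 with h | h
  · left; constructor <;> linarith
  · right; constructor <;> linarith

lemma lvl_unique (S : RankOne) {n j j' : ℕ} (hj : j < S.h n) (hj' : j' < S.h n) {x : ℝ}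
    (hx : x ∈ S.lvl n j) (hx' : x ∈ S.lvl n j') : j = j' := by
  by_contra hne
  exact Set.disjoint_left.1 (S.disj n j hj j' hj' hne) hx hx'

lemma lvl_subset_X (S : RankOne) {n j : ℕ} (hj : j < S.h n) : S.lvl n j ⊆ S.X := by
  intro x hx
  rw [S.hX]
  simp only [mem_iUnion]
  exact ⟨n, j, hj, hx⟩

/-- Relative heights of descendants. -/
def D (S : RankOne) (a : ℕ) : ℕ → Finset ℕ
  | 0 => {0}
  | n + 1 => D S a n ∪ (D S a n).image (fun d => S.h (a + n) + d)

lemma mem_D_succ {a n d : ℕ} : d ∈ D S a (n + 1) ↔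
    d ∈ D S a n ∨ ∃ e ∈ D S a n, d = S.h (a + n) + e := by
  simp [D, eq_comm]

/-- Descendants are small. -/
lemma D_lt (H : Good7 S) (a n d : ℕ) (hd : d ∈ D S a n) : 3 * d + S.h a ≤ S.h (a + n) := by
  induction n generalizing d with
  | zero => simp [D] at hd; simp [hd]
  | succ n ih =>
    have e1 : S.h (a + (n + 1)) = 4 * S.h (a + n) + 1 := H.h_succ (a + n)
    rcases mem_D_succ.1 hd with h | ⟨e, he, rfl⟩
    · have := ih d h; omega
    · have := ih e he; omega

lemma D_lvl (H : Good7 S) (a n d j : ℕ) (hj : j < S.h a) (hd : d ∈ D S a n) :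
    j + d < S.h (a + n) ∧ S.lvl (a + n) (j + d) ⊆ S.lvl a j := by
  induction n generalizing d with
  | zero => simp [D] at hd; subst hd; simpa using hj
  | succ n ih =>
    have e1 : S.h (a + (n + 1)) = 4 * S.h (a + n) + 1 := H.h_succ (a + n)
    rcases mem_D_succ.1 hd with h | ⟨e, he, rfl⟩
    · have := ih d h
      exact ⟨by omega, (H.lvl_left (a + n) _ this.1).trans this.2⟩
    · have := ih e he
      refine ⟨by omega, ?_⟩
      rw [show j + (S.h (a + n) + e) = S.h (a + n) + (j + e) by ring]
      exact (H.lvl_right (a + n) _ this.1).trans this.2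

/-- A point off the exceptional set lies in a descendant in every later column. -/
lemma exists_D (H : Good7 S) (a n j : ℕ) (hj : j < S.h a) {x : ℝ} (hx : x ∈ S.lvl a j)
    (hE : x ∉ E S) : ∃ d ∈ D S a n, x ∈ S.lvl (a + n) (j + d) := by
  induction n with
  | zero => exact ⟨0, by simp [D], by simpa using hx⟩
  | succ n ih =>
    obtain ⟨d, hd, hxd⟩ := ih
    rcases H.split (H.D_lvl a n d j hj hd).1 hxd hE with h | h
    · exact ⟨d, mem_D_succ.2 (Or.inl hd), h⟩
    · refine ⟨S.h (a + n) + d, mem_D_succ.2 (Or.inr ⟨d, hd, rfl⟩), ?_⟩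
      rw [show j + (S.h (a + n) + d) = S.h (a + n) + (j + d) by ring]
      exact h

lemma lvl_inter (H : Good7 S) (a n j q : ℕ) (hj : j < S.h a) (hq : q < S.h (a + n)) {y : ℝ}
    (hy : y ∈ S.lvl a j) (hy' : y ∈ S.lvl (a + n) q) : ∃ d ∈ D S a n, q = j + d := by
  have ho : IsOpen (S.lvl a j ∩ S.lvl (a + n) q) := isOpen_Ioo.inter isOpen_Ioo
  obtain ⟨x, hx, hxE⟩ := ((E_countable (S := S)).dense_compl ℝ).inter_open_nonempty _ ho
    ⟨y, hy, hy'⟩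
  obtain ⟨d, hd, hxd⟩ := H.exists_D a n j hj hx.1 hxE
  exact ⟨d, hd, lvl_unique S hq (H.D_lvl a n d j hj hd).1 hx.2 hxd⟩

lemma iter (S : RankOne) {n p k : ℕ} (hp : p + k < S.h n) {x : ℝ} (hx : x ∈ S.lvl n p) :
    (⇑S.T)^[k] x ∈ S.lvl n (p + k) := by
  induction k with
  | zero => simpa using hx
  | succ k ih =>
    have h1 := ih (by omega)
    rw [Function.iterate_succ_apply', S.Tmap n (p + k) (by omega) _ h1]
    simp only [RankOne.lvl, mem_Ioo] at h1 ⊢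
    rw [show p + (k + 1) = p + k + 1 by ring]
    constructor <;> linarith [h1.1, h1.2]

/-- Generic points sit low in some late column. -/
lemma generic (H : Good7 S) (a j k : ℕ) (hj : j < S.h a) {x : ℝ} (hx : x ∈ S.lvl a j)
    (hE : x ∉ E S) : ∃ n₀, ∀ n ≥ n₀, ∃ p, x ∈ S.lvl (a + n) p ∧ p + k < S.h (a + n) := by
  refine ⟨k, fun n hn => ?_⟩
  obtain ⟨d, hd, hxd⟩ := H.exists_D a n j hj hx hE
  have h1 := H.D_lt a n d hd
  refine ⟨_, hxd, ?_⟩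
  by_cases h0 : n = 0
  · subst h0
    have : d = 0 := by simpa [D] using hd
    simp at *; omega
  · have h2 := H.le_h n
    obtain ⟨m, rfl⟩ := Nat.exists_eq_succ_of_ne_zero h0
    have e1 : S.h (a + (m + 1)) = 4 * S.h (a + m) + 1 := H.h_succ (a + m)
    have h3 : a + m ≤ S.h (a + m) := H.le_h _
    have h4 : S.h a ≤ S.h (a + m) := H.h_mono.monotone (by omega)
    simp only [Nat.succ_eq_add_one] at *
    omega

end Good7
namespace Good7

variable {S : RankOne}

lemma key (H : Good7 S) (a n d1 d1' d2 d2' : ℕ) (h1 : d1 ∈ D S (a + 1) n)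
    (h1' : d1' ∈ D S (a + 1) n) (h2 : d2 ∈ D S (a + 1) n) (h2' : d2' ∈ D S (a + 1) n) :
    d1' + d2 ≠ S.h a + d1 + d2' := by
  have hpos := H.h_pos a
  have hs := H.h_succ a
  induction n generalizing d1 d1' d2 d2' with
  | zero => simp [D] at *; omega
  | succ n ih =>
    have B := H.D_lt (a + 1) n
    rcases mem_D_succ.1 h1 with g1 | ⟨e1, g1, rfl⟩ <;>
    rcases mem_D_succ.1 h1' with g1' | ⟨e1', g1', rfl⟩ <;>
    rcases mem_D_succ.1 h2 with g2 | ⟨e2, g2, rfl⟩ <;>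
    rcases mem_D_succ.1 h2' with g2' | ⟨e2', g2', rfl⟩ <;>
    · have b1 := B _ g1
      have b2 := B _ g1'
      have b3 := B _ g2
      have b4 := B _ g2'
      have := ih _ _ _ _ g1 g1' g2 g2'
      omega

lemma exists_generic (S : RankOne) (A B : Set ℝ) (k : ℕ)
    (h : S.μ (A ∩ (⇑S.T)^[k] '' B) ≠ 0) : ∃ x ∈ B, x ∉ E S ∧ (⇑S.T)^[k] x ∈ A := by
  by_contra hcon
  push Not at hcon
  apply h
  have hc : ((⇑S.T)^[k] '' (E S)).Countable := (E_countable (S := S)).image _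
  have h0 : S.μ ((⇑S.T)^[k] '' (E S)) = 0 :=
    (Measure.absolutelyContinuous_of_le Measure.restrict_le_self) (hc.measure_zero volume)
  refine measure_mono_null ?_ h0
  rintro y ⟨hyA, x, hxB, rfl⟩
  by_cases hx : x ∈ E S
  · exact ⟨x, hx, rfl⟩
  · exact absurd hyA (hcon x hxB hx)

lemma disjoint_supp (H : Good7 S) (N j k : ℕ) (hj : j < S.h N) (A0 A1 : Set ℝ)
    (h0 : A0 ⊆ S.lvl (N + 1) j) (h1 : A1 ⊆ S.lvl (N + 1) (S.h N + j)) :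
    S.μ (A0 ∩ (⇑S.T)^[k] '' A0) = 0 ∨ S.μ (A1 ∩ (⇑S.T)^[k] '' A0) = 0 := by
  by_contra hcon
  push Not at hcon
  obtain ⟨x, hx, hxE, hTx⟩ := exists_generic S _ _ _ hcon.1
  obtain ⟨y, hy, hyE, hTy⟩ := exists_generic S _ _ _ hcon.2
  have hs := H.h_succ N
  have hj1 : j < S.h (N + 1) := by omega
  have hj2 : S.h N + j < S.h (N + 1) := by omega
  obtain ⟨n1, hn1⟩ := H.generic (N + 1) j k hj1 (h0 hx) hxE
  obtain ⟨n2, hn2⟩ := H.generic (N + 1) j k hj1 (h0 hy) hyE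
  obtain ⟨p, hp, hpk⟩ := hn1 (max n1 n2) (le_max_left _ _)
  obtain ⟨q, hq, hqk⟩ := hn2 (max n1 n2) (le_max_right _ _)
  obtain ⟨d1, hd1, e1⟩ := H.lvl_inter (N + 1) _ j p hj1 (by omega) (h0 hx) hp
  obtain ⟨d1', hd1', e1'⟩ := H.lvl_inter (N + 1) _ j (p + k) hj1 hpk (h0 hTx) (iter S hpk hp)
  obtain ⟨d2, hd2, e2⟩ := H.lvl_inter (N + 1) _ j q hj1 (by omega) (h0 hy) hq
  obtain ⟨d2', hd2', e2'⟩ := H.lvl_inter (N + 1) _ (S.h N + j) (q + k) hj2 hqk (h1 hTy)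
    (iter S hqk hq)
  have := H.key N _ _ _ _ _ hd1 hd1' hd2 hd2'
  omega

lemma exists_split (H : Good7 S) (F : Set ℝ) (hF : MeasurableSet F) (hpos : 0 < S.μ F) :
    ∃ N j, j < S.h N ∧ volume (F ∩ S.lvl (N + 1) j) ≠ 0 ∧
      volume (F ∩ S.lvl (N + 1) (S.h N + j)) ≠ 0 := by
  by_contra hcon
  push Not at hcon
  have h1 : ∃ n j, j < S.h n ∧ volume (F ∩ S.lvl n j) ≠ 0 := by
    by_contra hc
    push Not at hc
    apply hpos.ne'
    rw [RankOne.μ, Measure.restrict_apply hF, S.hX]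
    simp only [inter_iUnion]
    refine measure_iUnion_null fun n => measure_iUnion_null fun j => measure_iUnion_null fun hj => ?_
    exact hc n j hj
  obtain ⟨n, j, hj, hv⟩ := h1
  have h2 : ∀ m, ∃ q, q < S.h (n + m) ∧ volume (F ∩ S.lvl n j) ≤ volume (F ∩ S.lvl (n + m) q) := by
    intro m
    induction m with
    | zero => exact ⟨j, hj, le_rfl⟩
    | succ m ih =>
      obtain ⟨q, hq, hle⟩ := ih
      have hs : S.h (n + (m + 1)) = 4 * S.h (n + m) + 1 := H.h_succ (n + m)
      have hE0 : volume (E S) = 0 := (E_countable (S := S)).measure_zero volume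
      have hsub : F ∩ S.lvl (n + m) q ⊆ (F ∩ S.lvl (n + m + 1) q) ∪
          ((F ∩ S.lvl (n + m + 1) (S.h (n + m) + q)) ∪ E S) := by
        rintro x ⟨hxF, hx⟩
        by_cases hxE : x ∈ E S
        · exact Or.inr (Or.inr hxE)
        · rcases H.split hq hx hxE with h | h
          · exact Or.inl ⟨hxF, h⟩
          · exact Or.inr (Or.inl ⟨hxF, h⟩)
      have hle2 : volume (F ∩ S.lvl (n + m) q) ≤ volume (F ∩ S.lvl (n + m + 1) q) +
          volume (F ∩ S.lvl (n + m + 1) (S.h (n + m) + q)) := by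
        refine (measure_mono hsub).trans ((measure_union_le _ _).trans ?_)
        refine add_le_add le_rfl ?_
        refine (measure_union_le _ _).trans ?_
        rw [hE0, add_zero]
      by_cases hz : volume (F ∩ S.lvl (n + m + 1) q) = 0
      · refine ⟨S.h (n + m) + q, by omega, hle.trans (hle2.trans ?_)⟩
        rw [hz, zero_add]; rfl
      · refine ⟨q, by omega, hle.trans (hle2.trans ?_)⟩
        rw [hcon _ _ hq hz, add_zero]; rfl
  have h3 : ∀ m, volume (F ∩ S.lvl n j) ≤ ENNReal.ofReal ((1 / 2) ^ m) := by
    intro m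
    obtain ⟨q, -, hle⟩ := h2 m
    refine hle.trans ((measure_mono (μ := volume) inter_subset_right).trans ?_)
    rw [RankOne.lvl, Real.volume_Ioo, H.w_eq]
    apply ENNReal.ofReal_le_ofReal
    rw [add_sub_cancel_left]
    exact pow_le_pow_of_le_one (by norm_num) (by norm_num) (by omega)
  have h4 : Tendsto (fun m : ℕ => ENNReal.ofReal ((1 / 2 : ℝ) ^ m)) atTop (nhds 0) := by
    rw [← ENNReal.ofReal_zero]
    exact ENNReal.tendsto_ofReal
      (tendsto_pow_atTop_nhds_zero_of_lt_one (by norm_num) (by norm_num))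
  exact hv (le_antisymm (ge_of_tendsto' h4 h3) bot_le)

lemma not_RWM (H : Good7 S) : ¬ S.RWM := by
  rintro ⟨F, hF, hpos, hfin, hlim⟩
  obtain ⟨N, j, hj, hv0, hv1⟩ := H.exists_split F hF hpos
  have hs := H.h_succ N
  set A0 := F ∩ S.lvl (N + 1) j with hA0
  set A1 := F ∩ S.lvl (N + 1) (S.h N + j) with hA1
  have mA0 : MeasurableSet A0 := hF.inter measurableSet_Ioo
  have mA1 : MeasurableSet A1 := hF.inter measurableSet_Ioo
  have hX0 : A0 ⊆ S.X := inter_subset_right.trans (lvl_subset_X S (by omega))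
  have hX1 : A1 ⊆ S.X := inter_subset_right.trans (lvl_subset_X S (by omega))
  have e0 : S.μ A0 = volume A0 := by
    rw [RankOne.μ, Measure.restrict_apply mA0, inter_eq_self_of_subset_left hX0]
  have e1 : S.μ A1 = volume A1 := by
    rw [RankOne.μ, Measure.restrict_apply mA1, inter_eq_self_of_subset_left hX1]
  have p0 : 0 < (S.μ A0).toReal := ENNReal.toReal_pos (by rwa [e0])
    (ne_top_of_le_ne_top hfin (measure_mono (μ := S.μ) inter_subset_left))
  have p1 : 0 < (S.μ A1).toReal := ENNReal.toReal_pos (by rwa [e1])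
    (ne_top_of_le_ne_top hfin (measure_mono (μ := S.μ) inter_subset_left))
  have pF : 0 < (S.μ F).toReal := ENNReal.toReal_pos hpos.ne' hfin
  have hu : ∀ k, 0 ≤ S.u F k := fun k => by unfold RankOne.u; positivity
  have hu0 : 0 < S.u F 0 := by
    simp only [RankOne.u, Function.iterate_zero, image_id, inter_self]
    positivity
  have L := (hlim A0 A0 mA0 inter_subset_left mA0 inter_subset_left).add
    (hlim A1 A0 mA1 inter_subset_left mA0 inter_subset_left)
  set c := min ((S.μ A0).toReal * (S.μ A0).toReal) ((S.μ A1).toReal * (S.μ A0).toReal) with hc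
  have hcpos : 0 < c := lt_min (by positivity) (by positivity)
  have hge : ∀ᶠ n in atTop, c ≤ (S.a F n)⁻¹ *
      ∑ k ∈ Finset.range n,
        |(S.μ (A0 ∩ (⇑S.T)^[k] '' A0)).toReal - (S.μ A0).toReal * (S.μ A0).toReal * S.u F k| +
      (S.a F n)⁻¹ *
      ∑ k ∈ Finset.range n,
        |(S.μ (A1 ∩ (⇑S.T)^[k] '' A0)).toReal - (S.μ A1).toReal * (S.μ A0).toReal * S.u F k| := by
    filter_upwards [eventually_ge_atTop 1] with n hn
    have ha : 0 < S.a F n := by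
      unfold RankOne.a
      exact Finset.sum_pos' (fun k _ => hu k) ⟨0, by simp; omega, hu0⟩
    rw [← mul_add, ← Finset.sum_add_distrib, le_inv_mul_iff₀ ha]
    conv_lhs => rw [RankOne.a, Finset.sum_mul]
    refine Finset.sum_le_sum fun k _ => ?_
    rcases H.disjoint_supp N j k hj A0 A1 inter_subset_right inter_subset_right with h | h
    · rw [h]
      have : c * S.u F k ≤ (S.μ A0).toReal * (S.μ A0).toReal * S.u F k :=
        mul_le_mul_of_nonneg_right (min_le_left _ _) (hu k)
      simp only [ENNReal.toReal_zero, zero_sub, abs_neg]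
      have h2 := le_abs_self ((S.μ A0).toReal * (S.μ A0).toReal * S.u F k)
      have h3 := abs_nonneg ((S.μ (A1 ∩ (⇑S.T)^[k] '' A0)).toReal -
        (S.μ A1).toReal * (S.μ A0).toReal * S.u F k)
      linarith
    · rw [h]
      have : c * S.u F k ≤ (S.μ A1).toReal * (S.μ A0).toReal * S.u F k :=
        mul_le_mul_of_nonneg_right (min_le_right _ _) (hu k)
      simp only [ENNReal.toReal_zero, zero_sub, abs_neg]
      have h2 := le_abs_self ((S.μ A1).toReal * (S.μ A0).toReal * S.u F k)
      have h3 := abs_nonneg ((S.μ (A0 ∩ (⇑S.T)^[k] '' A0)).toReal -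
        (S.μ A0).toReal * (S.μ A0).toReal * S.u F k)
      linarith
  have := ge_of_tendsto L hge
  simp at this
  linarith

end Good7
namespace Good7

variable {S : RankOne}

/-- The average of `g` over a level. -/
noncomputable def Av (S : RankOne) (g : ℝ → ℂ) (n j : ℕ) : ℂ :=
  2 ^ n * ∫ x in (S.pos n j)..(S.pos n j + S.w n), g x

lemma intInt {g : ℝ → ℂ} {C : ℝ} (hg : Measurable g) (hb : ∀ᵐ x, ‖g x‖ ≤ C) (a b : ℝ) :
    IntervalIntegrable g volume a b := by
  rw [intervalIntegrable_iff]
  exact Measure.integrableOn_of_bounded (M := C) (by simp)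
    hg.aestronglyMeasurable (ae_restrict_of_ae hb)

lemma Av_split (H : Good7 S) {g : ℝ → ℂ} {C : ℝ} (hg : Measurable g) (hb : ∀ᵐ x, ‖g x‖ ≤ C)
    (n j : ℕ) (hj : j < S.h n) :
    Av S g n j = (Av S g (n + 1) j + Av S g (n + 1) (S.h n + j)) / 2 := by
  have hw := H.w_succ n
  unfold Av
  rw [H.pos_left n j hj, H.pos_right n j hj]
  rw [show S.pos n j + S.w (n + 1) + S.w (n + 1) = S.pos n j + S.w n by rw [hw]; ring]
  rw [← intervalIntegral.integral_add_adjacent_intervals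
    (b := S.pos n j + S.w (n + 1)) (intInt hg hb _ _) (intInt hg hb _ _)]
  rw [pow_succ]; ring

lemma Av_succ (H : Good7 S) {g : ℝ → ℂ} {z : ℂ}
    (he : ∀ᵐ x, x ∈ S.X → g (S.T x) = z * g x) (n j : ℕ) (hj : j + 1 < S.h n) :
    Av S g n (j + 1) = z * Av S g n j := by
  have hw := H.w_pos n
  unfold Av
  have h1 := intervalIntegral.integral_comp_add_right (a := S.pos n j)
    (b := S.pos n j + S.w n) g (S.pos n (j + 1) - S.pos n j)
  rw [show S.pos n j + (S.pos n (j + 1) - S.pos n j) = S.pos n (j + 1) by ring,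
    show S.pos n j + S.w n + (S.pos n (j + 1) - S.pos n j) = S.pos n (j + 1) + S.w n by ring] at h1
  rw [← h1]
  rw [show z * (2 ^ n * ∫ x in (S.pos n j)..(S.pos n j + S.w n), g x)
    = 2 ^ n * (z * ∫ x in (S.pos n j)..(S.pos n j + S.w n), g x) by ring]
  congr 1
  rw [← intervalIntegral.integral_const_mul]
  apply intervalIntegral.integral_congr_ae
  have hne : ∀ᵐ x : ℝ, x ≠ S.pos n j + S.w n := by simp [ae_iff]
  filter_upwards [he, hne] with x hx hxne hxm
  rw [uIoc_of_le (by linarith)] at hxm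
  have hxl : x ∈ S.lvl n j := ⟨hxm.1, lt_of_le_of_ne hxm.2 hxne⟩
  rw [← hx (lvl_subset_X S (by omega) hxl), S.Tmap n j hj x hxl]

lemma Av_add (H : Good7 S) {g : ℝ → ℂ} {z : ℂ}
    (he : ∀ᵐ x, x ∈ S.X → g (S.T x) = z * g x) (n j k : ℕ) (hj : j + k < S.h n) :
    Av S g n (j + k) = z ^ k * Av S g n j := by
  induction k with
  | zero => simp
  | succ k ih =>
    rw [← add_assoc, H.Av_succ he n (j + k) hj, ih (by omega), pow_succ]; ring

lemma Av_bound (H : Good7 S) {g : ℝ → ℂ} {C : ℝ} (hb : ∀ᵐ x, ‖g x‖ ≤ C) (n j : ℕ) :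
    ‖Av S g n j‖ ≤ C := by
  have hw := H.w_pos n
  have h1 : ‖∫ x in (S.pos n j)..(S.pos n j + S.w n), g x‖ ≤ C * |S.pos n j + S.w n - S.pos n j| :=
    intervalIntegral.norm_integral_le_of_norm_le_const_ae (hb.mono fun x hx _ => hx)
  rw [add_sub_cancel_left, abs_of_pos hw] at h1
  unfold Av
  rw [norm_mul, norm_pow, Complex.norm_ofNat]
  calc (2 : ℝ) ^ n * ‖∫ x in (S.pos n j)..(S.pos n j + S.w n), g x‖ ≤ 2 ^ n * (C * S.w n) := by
        gcongr
    _ = C := by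
        rw [H.w_eq, one_div, inv_pow]; field_simp

lemma Av_zero (H : Good7 S) {g : ℝ → ℂ} {C : ℝ} (hg : Measurable g) (hb : ∀ᵐ x, ‖g x‖ ≤ C)
    (h0 : ∀ n j, j < S.h n → Av S g n j = 0) : ∀ᵐ x, x ∈ S.X → g x = 0 := by
  have hloc : LocallyIntegrable g volume := by
    intro x
    refine ⟨Icc (x - 1) (x + 1), Icc_mem_nhds (by linarith) (by linarith), ?_⟩
    exact Measure.integrableOn_of_bounded (M := C) (by simp)
      hg.aestronglyMeasurable (ae_restrict_of_ae hb)
  have hEn : ∀ᵐ x : ℝ, x ∉ E S := (E_countable (S := S)).ae_notMem volume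
  filter_upwards [IsUnifLocDoublingMeasure.ae_tendsto_average volume hloc 1, hEn] with x hx hxE hxX
  rw [S.hX] at hxX
  simp only [mem_iUnion] at hxX
  obtain ⟨a, j, hj, hxl⟩ := hxX
  have := fun n => H.exists_D a n j hj hxl hxE
  choose d hd hxd using this
  have hl : Tendsto (fun n => S.w (a + n) / 2) atTop (nhdsWithin 0 (Ioi 0)) := by
    rw [tendsto_nhdsWithin_iff]
    constructor
    · have h1 : Tendsto (fun n : ℕ => (1 / 2 : ℝ) ^ n) atTop (nhds 0) :=
        tendsto_pow_atTop_nhds_zero_of_lt_one (by norm_num) (by norm_num)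
      have h2 := h1.const_mul ((1 / 2 : ℝ) ^ a / 2)
      rw [mul_zero] at h2
      refine h2.congr fun n => ?_
      rw [H.w_eq, pow_add]; ring
    · exact Eventually.of_forall fun n => half_pos (H.w_pos _)
  have hball : ∀ n, Metric.closedBall (S.pos (a + n) (j + d n) + S.w (a + n) / 2)
      (S.w (a + n) / 2) = Icc (S.pos (a + n) (j + d n))
        (S.pos (a + n) (j + d n) + S.w (a + n)) := by
    intro n
    rw [Real.closedBall_eq_Icc]
    congr 1 <;> ring
  have h3 := hx (fun n => S.pos (a + n) (j + d n) + S.w (a + n) / 2)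
    (fun n => S.w (a + n) / 2) hl (Eventually.of_forall fun n => by
      rw [one_mul, hball]
      exact Ioo_subset_Icc_self (hxd n))
  refine tendsto_nhds_unique h3 (tendsto_const_nhds.congr fun n => ?_)
  rw [hball, setAverage_eq, integral_Icc_eq_integral_Ioc,
    ← intervalIntegral.integral_of_le (by linarith [H.w_pos (a + n)])]
  have h4 := h0 (a + n) (j + d n) (H.D_lvl a n _ j hj (hd n)).1
  unfold Av at h4
  have h5 : ∫ x in (S.pos (a + n) (j + d n))..(S.pos (a + n) (j + d n) + S.w (a + n)), g x = 0 := by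
    rcases mul_eq_zero.1 h4 with h | h
    · exact absurd h (pow_ne_zero _ two_ne_zero)
    · exact h
  rw [h5, smul_zero]

/-- The product estimate, for `y = z` or `y = z⁻¹`. -/
lemma Av_prod (H : Good7 S) {g : ℝ → ℂ} {C : ℝ} (hg : Measurable g) (hb : ∀ᵐ x, ‖g x‖ ≤ C)
    {z : ℂ} (he : ∀ᵐ x, x ∈ S.X → g (S.T x) = z * g x) (y : ℂ)
    (hy : y = z ∨ (z ≠ 0 ∧ y = z⁻¹)) (m n j : ℕ) (hj : j < S.h n) :
    ‖Av S g n j‖ ≤ C * ∏ i ∈ Finset.range m, (‖1 + y ^ S.h (n + i)‖ / 2) := by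
  induction m generalizing n j with
  | zero => simpa using H.Av_bound hb n j
  | succ m ih =>
    have hs := H.h_succ n
    have h1 := H.Av_add he (n + 1) j (S.h n) (by omega)
    have h2 := H.Av_split hg hb n j hj
    rw [add_comm (S.h n) j] at h2
    have h3 : ∃ j', j' < S.h (n + 1) ∧ Av S g n j = Av S g (n + 1) j' * ((1 + y ^ S.h n) / 2) := by
      rcases hy with rfl | ⟨hz, rfl⟩
      · refine ⟨j, by omega, ?_⟩
        rw [h2, h1]; ring
      · refine ⟨j + S.h n, by omega, ?_⟩
        rw [h2, h1]
        have : z ^ S.h n ≠ 0 := pow_ne_zero _ hz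
        rw [inv_pow]
        field_simp
        ring
    obtain ⟨j', hj', e⟩ := h3
    rw [e, norm_mul, norm_div, Complex.norm_ofNat, Finset.prod_range_succ']
    have h4 := ih (n + 1) j' hj'
    rw [add_zero, ← mul_assoc]
    refine mul_le_mul_of_nonneg_right (h4.trans (le_of_eq ?_)) (by positivity)
    congr 1
    refine Finset.prod_congr rfl fun i _ => ?_
    rw [show n + 1 + i = n + (i + 1) by ring]

lemma y_eq_one (H : Good7 S) (y : ℂ) (hy : ‖y‖ ≤ 1) (n : ℕ) (C δ : ℝ) (hδ : 0 < δ)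
    (hp : ∀ m, δ ≤ C * ∏ i ∈ Finset.range m, (‖1 + y ^ S.h (n + i)‖ / 2)) : y = 1 := by
  set q : ℕ → ℝ := fun i => ‖1 + y ^ S.h (n + i)‖ / 2 with hq
  set P : ℕ → ℝ := fun m => ∏ i ∈ Finset.range m, q i with hP
  have hpow : ∀ k, ‖y ^ k‖ ≤ 1 := fun k => by
    rw [norm_pow]; exact pow_le_one₀ (norm_nonneg _) hy
  have hq0 : ∀ i, 0 ≤ q i := fun i => by simp only [hq]; positivity
  have hq1 : ∀ i, q i ≤ 1 := fun i => by
    simp only [hq]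
    have := norm_add_le 1 (y ^ S.h (n + i))
    have := hpow (S.h (n + i))
    rw [norm_one] at *
    linarith
  have hP0 : ∀ m, 0 ≤ P m := fun m => Finset.prod_nonneg fun i _ => hq0 i
  have hPs : ∀ m, P (m + 1) = P m * q m := fun m => Finset.prod_range_succ _ _
  have hanti : Antitone P := antitone_nat_of_succ_le fun m => by
    rw [hPs]; exact mul_le_of_le_one_right (hP0 m) (hq1 m)
  have hC : 0 < C := by
    have h1 := hp 0
    simp at h1; linarith
  have hlow : ∀ m, δ / C ≤ P m := fun m => by
    rw [div_le_iff₀ hC, mul_comm]; exact hp m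
  have hlim := tendsto_atTop_ciInf hanti ⟨δ / C, by rintro _ ⟨m, rfl⟩; exact hlow m⟩
  set l := ⨅ i, P i
  have hl : δ / C ≤ l := le_ciInf hlow
  have hlpos : 0 < l := lt_of_lt_of_le (by positivity) hl
  have hqlim : Tendsto q atTop (nhds 1) := by
    have h1 := (hlim.comp (tendsto_add_atTop_nat 1)).div hlim hlpos.ne'
    rw [div_self hlpos.ne'] at h1
    refine h1.congr fun m => ?_
    have : P m ≠ 0 := (lt_of_lt_of_le (by positivity) (hlow m)).ne'
    simp only [Function.comp, Pi.div_apply, hPs]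
    field_simp
  have hsq : ∀ i, ‖y ^ S.h (n + i) - 1‖ ^ 2 ≤ 4 - 4 * q i ^ 2 := fun i => by
    have h1 := parallelogram_law_with_norm ℝ (1 : ℂ) (y ^ S.h (n + i))
    have h2 := hpow (S.h (n + i))
    rw [norm_sub_rev, norm_one] at h1
    simp only [hq]
    nlinarith [norm_nonneg (y ^ S.h (n + i))]
  have hsqlim : Tendsto (fun i => ‖y ^ S.h (n + i) - 1‖ ^ 2) atTop (nhds 0) := by
    have h1 : Tendsto (fun i => 4 - 4 * q i ^ 2) atTop (nhds 0) := by
      have := ((hqlim.pow 2).const_mul 4).const_sub 4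
      norm_num at this
      exact this
    exact squeeze_zero (fun i => by positivity) hsq h1
  have hy1 : Tendsto (fun i => y ^ S.h (n + i)) atTop (nhds 1) := by
    rw [tendsto_iff_norm_sub_tendsto_zero]
    have := hsqlim.sqrt
    simpa [Real.sqrt_sq] using this
  have h1 : Tendsto (fun i => y ^ S.h (n + (i + 1))) atTop (nhds 1) :=
    hy1.comp (tendsto_add_atTop_nat 1)
  have h2 : Tendsto (fun i => y ^ S.h (n + (i + 1))) atTop (nhds (1 ^ 4 * y)) := by
    refine ((hy1.pow 4).mul_const y).congr fun i => ?_
    rw [← add_assoc, H.h_succ, pow_succ y, pow_mul']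
  have := tendsto_nhds_unique h2 h1
  simpa using this

lemma X_meas (S : RankOne) : MeasurableSet S.X := by
  rw [S.hX]
  exact MeasurableSet.iUnion fun n => MeasurableSet.iUnion fun j =>
    MeasurableSet.iUnion fun _ => measurableSet_Ioo

lemma specWM (H : Good7 S) : S.SpecWM := by
  rintro f z hf ⟨C, hC⟩ hz
  have mX := X_meas S
  rw [RankOne.μ, ae_restrict_iff' mX] at hC hz
  set g := S.X.indicator f with hgdef
  have hg : Measurable g := hf.indicator mX
  have hgX : ∀ x ∈ S.X, g x = f x := fun x hx => indicator_of_mem hx f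
  have hb : ∀ᵐ x, ‖g x‖ ≤ max C 0 := by
    filter_upwards [hC] with x hx
    by_cases h : x ∈ S.X
    · rw [hgX x h]; exact (hx h).trans (le_max_left _ _)
    · simp [hgdef, h]
  have he : ∀ᵐ x, x ∈ S.X → g (S.T x) = z * g x := by
    filter_upwards [hz] with x hx h
    rw [hgX x h, hgX _ (S.Tbij.mapsTo h), hx h]
  suffices hs : ∃ c : ℂ, ∀ᵐ x, x ∈ S.X → g x = c by
    obtain ⟨c, hc⟩ := hs
    refine ⟨c, ?_⟩
    rw [RankOne.μ, ae_restrict_iff' mX]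
    filter_upwards [hc] with x hx h
    rw [← hgX x h, hx h]
  by_cases h0 : ∀ n j, j < S.h n → Av S g n j = 0
  · exact ⟨0, H.Av_zero hg hb h0⟩
  push Not at h0
  obtain ⟨n, j, hj, hne⟩ := h0
  have hz1 : z = 1 := by
    by_cases hle : ‖z‖ ≤ 1
    · exact H.y_eq_one z hle n _ _ (norm_pos_iff.2 hne)
        fun m => H.Av_prod hg hb he z (Or.inl rfl) m n j hj
    · push Not at hle
      have hz0 : z ≠ 0 := by rintro rfl; simp at hle; linarith
      have := H.y_eq_one z⁻¹ (by rw [norm_inv]; exact inv_le_one_of_one_le₀ hle.le) n _ _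
        (norm_pos_iff.2 hne)
        fun m => H.Av_prod hg hb he z⁻¹ (Or.inr ⟨hz0, rfl⟩) m n j hj
      exact inv_eq_one.1 this
  subst hz1
  have hconst0 : ∀ n, Av S g n 0 = Av S g 0 0 := by
    intro n
    induction n with
    | zero => rfl
    | succ n ih =>
      have hs := H.h_succ n
      rw [← ih, H.Av_split hg hb n 0 (H.h_pos n), add_comm (S.h n) 0,
        H.Av_add he (n + 1) 0 (S.h n) (by omega)]
      simp
  have hconst : ∀ n j, j < S.h n → Av S g n j = Av S g 0 0 := by
    intro n j hj
    have := H.Av_add he n 0 j (by omega)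
    rw [zero_add] at this
    rw [this, hconst0]; simp
  set c := Av S g 0 0
  refine ⟨c, ?_⟩
  have hb' : ∀ᵐ x, ‖g x - c‖ ≤ max C 0 + ‖c‖ := by
    filter_upwards [hb] with x hx
    exact (norm_sub_le _ _).trans (by linarith)
  have := H.Av_zero (g := fun x => g x - c) (hg.sub_const c) hb' fun n j hj => by
    have h1 := hconst n j hj
    unfold Av at h1 ⊢
    rw [intervalIntegral.integral_sub (intInt hg hb _ _) intervalIntegrable_const, mul_sub, h1,
      intervalIntegral.integral_const, add_sub_cancel_left, H.w_eq]
    simp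
  filter_upwards [this] with x hx h
  exact sub_eq_zero.1 (hx h)

end Good7
namespace Good7

variable {S : RankOne}

lemma D_card (H : Good7 S) (a n : ℕ) : (D S a n).card = 2 ^ n := by
  induction n with
  | zero => simp [D]
  | succ n ih =>
    rw [D, Finset.card_union_of_disjoint, Finset.card_image_of_injective, ih, pow_succ]
    · ring
    · intro x y hxy; simpa using hxy
    · rw [Finset.disjoint_left]
      intro d hd hd'
      rw [Finset.mem_image] at hd'
      obtain ⟨e, he, rfl⟩ := hd'
      have := H.D_lt a n _ hd
      have := H.h_pos a
      omega

lemma window (H : Good7 S) (m n j : ℕ) :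
    ((D S 0 (m + 1 + n)).filter (fun d => j ≤ d ∧ d < j + S.h m)).card ≤ 2 ^ (m + 1) := by
  induction n generalizing j with
  | zero => exact (Finset.card_filter_le _ _).trans (H.D_card 0 (m + 1)).le
  | succ n ih =>
    have hb := H.D_lt 0 (m + 1 + n)
    have hm : 4 * S.h m + 1 ≤ S.h (m + 1 + n) := by
      rw [← H.h_succ m]; exact H.h_mono.monotone (by omega)
    rw [zero_add] at hb
    by_cases hj : j + S.h m ≤ S.h (m + 1 + n)
    · refine (Finset.card_le_card ?_).trans (ih j)
      intro d hd
      rw [Finset.mem_filter, ← add_assoc, mem_D_succ, zero_add] at hd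
      rw [Finset.mem_filter]
      rcases hd.1 with h | ⟨e, he, rfl⟩
      · exact ⟨h, hd.2⟩
      · omega
    · refine (Finset.card_le_card_of_injOn (fun d => d - S.h (m + 1 + n)) ?_ ?_).trans
        (ih (j - S.h (m + 1 + n)))
      · intro d hd
        rw [Finset.mem_coe, Finset.mem_filter, ← add_assoc, mem_D_succ, zero_add] at hd
        rw [Finset.mem_coe, Finset.mem_filter]
        rcases hd.1 with h | ⟨e, he, rfl⟩
        · have := hb d h
          omega
        · simp only [Nat.add_sub_cancel_left]
          refine ⟨he, ?_, ?_⟩ <;> omega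
      · intro d hd d' hd' hdd
        rw [Finset.mem_coe, Finset.mem_filter, ← add_assoc, mem_D_succ, zero_add] at hd hd'
        have h1 : S.h (m + 1 + n) ≤ d := by
          rcases hd.1 with h | ⟨e, he, rfl⟩
          · have := hb d h
            omega
          · omega
        have h2 : S.h (m + 1 + n) ≤ d' := by
          rcases hd'.1 with h | ⟨e, he, rfl⟩
          · have := hb d' h
            omega
          · omega
        simp only at hdd
        omega

lemma I_eq (S : RankOne) : S.lvl 0 0 = Ioo 0 1 := by
  simp [RankOne.lvl, S.pos0, S.w0]

open Classical in
lemma birkhoff_eq (S : RankOne) (F : Set ℝ) (n : ℕ) (x : ℝ) :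
    S.birkhoff F n x = (((Finset.range n).filter (fun k => (⇑S.T)^[k] x ∈ F)).card : ℝ) := by
  rw [RankOne.birkhoff, Finset.card_filter]
  push_cast
  refine Finset.sum_congr rfl fun k _ => ?_
  simp [indicator_apply]

lemma birkhoff_upper (H : Good7 S) (m n : ℕ) (hn : n ≤ S.h m) {x : ℝ} (hx : x ∈ S.lvl 0 0)
    (hE : x ∉ E S) : S.birkhoff (S.lvl 0 0) n x ≤ 2 ^ (m + 1) := by
  classical
  have h00 : 0 < S.h 0 := H.h_pos 0
  obtain ⟨n₀, hn₀⟩ := H.generic 0 0 n h00 hx hE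
  obtain ⟨p, hp, hpn⟩ := hn₀ (m + 1 + n₀) (by omega)
  rw [birkhoff_eq]
  have : ((Finset.range n).filter (fun k => (⇑S.T)^[k] x ∈ S.lvl 0 0)).card ≤ 2 ^ (m + 1) := by
    refine (Finset.card_le_card_of_injOn (fun k => p + k) ?_ ?_).trans (H.window m n₀ p)
    · intro k hk
      rw [Finset.mem_coe, Finset.mem_filter, Finset.mem_range] at hk
      obtain ⟨d, hd, e⟩ := H.lvl_inter 0 _ 0 (p + k) h00 (by omega) hk.2 (iter S (by omega) hp)
      rw [Finset.mem_coe, Finset.mem_filter]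
      rw [zero_add] at e
      simp only
      refine ⟨?_, by omega, by omega⟩
      rw [e]; exact hd
    · intro k _ k' _ h
      simpa using h
  exact_mod_cast this

lemma birkhoff_lower (H : Good7 S) (m n d : ℕ) (hn : 2 * S.h m ≤ n) (hd : d ∈ D S 0 m) {x : ℝ}
    (hx : x ∈ S.lvl (m + 1) d) : (2 : ℝ) ^ m ≤ S.birkhoff (S.lvl 0 0) n x := by
  classical
  have h00 : 0 < S.h 0 := H.h_pos 0
  have hs := H.h_succ m
  have hb := H.D_lt 0 m
  rw [zero_add] at hb
  have hbd := hb d hd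
  rw [birkhoff_eq]
  have : 2 ^ m ≤ ((Finset.range n).filter (fun k => (⇑S.T)^[k] x ∈ S.lvl 0 0)).card := by
    rw [← H.D_card 0 m]
    refine Finset.card_le_card_of_injOn (fun e => S.h m + e - d) ?_ ?_
    · intro e he
      have hbe := hb e he
      rw [Finset.mem_coe, Finset.mem_filter, Finset.mem_range]
      simp only
      refine ⟨by omega, ?_⟩
      have h1 := iter S (n := m + 1) (p := d) (k := S.h m + e - d) (by omega) hx
      rw [show d + (S.h m + e - d) = S.h m + e by omega] at h1
      have h2 := (H.D_lvl 0 (m + 1) (S.h m + e) 0 h00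
        (mem_D_succ.2 (Or.inr ⟨e, he, by rw [zero_add]⟩))).2
      rw [zero_add, zero_add] at h2
      exact h2 h1
    · intro e he e' he' h
      simp only at h
      omega
  exact_mod_cast this

lemma birkhoff_meas (S : RankOne) (F : Set ℝ) (hF : MeasurableSet F) (n : ℕ) :
    Measurable (S.birkhoff F n) := by
  unfold RankOne.birkhoff
  exact Finset.measurable_fun_sum _ fun k _ =>
    (measurable_const.indicator hF).comp (S.T.measurable.iterate k)

lemma birkhoff_nonneg (S : RankOne) (F : Set ℝ) (n : ℕ) (x : ℝ) : 0 ≤ S.birkhoff F n x := by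
  classical
  rw [birkhoff_eq]; positivity

lemma birkhoff_le (S : RankOne) (F : Set ℝ) (n : ℕ) (x : ℝ) : S.birkhoff F n x ≤ n := by
  classical
  rw [birkhoff_eq]
  exact_mod_cast (Finset.card_filter_le _ _).trans (Finset.card_range n).le

lemma int_lower (H : Good7 S) (m n : ℕ) (hn : 2 * S.h m ≤ n) :
    (2 : ℝ) ^ m / 2 ≤ ∫ x in S.lvl 0 0, S.birkhoff (S.lvl 0 0) n x := by
  have h00 : 0 < S.h 0 := H.h_pos 0
  have hs := H.h_succ m
  have mI : MeasurableSet (S.lvl 0 0) := measurableSet_Ioo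
  have hfin : volume (S.lvl 0 0) ≠ ⊤ := by rw [I_eq]; simp
  have hInt : IntegrableOn (S.birkhoff (S.lvl 0 0) n) (S.lvl 0 0) volume :=
    Measure.integrableOn_of_bounded (M := n) hfin
      (birkhoff_meas S _ mI n).aestronglyMeasurable
      (Eventually.of_forall fun x => by
        rw [Real.norm_eq_abs, abs_of_nonneg (birkhoff_nonneg S _ _ _)]
        exact birkhoff_le S _ _ _)
  set L := ⋃ d ∈ D S 0 m, S.lvl (m + 1) d with hL
  have mL : MeasurableSet L := Finset.measurableSet_biUnion _ fun d _ => measurableSet_Ioo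
  have hLI : L ⊆ S.lvl 0 0 := by
    refine iUnion₂_subset fun d hd => ?_
    have h2 := (H.D_lvl 0 (m + 1) d 0 h00 (mem_D_succ.2 (Or.inl hd))).2
    rwa [zero_add, zero_add] at h2
  have hvol : volume.real L = 1 / 2 := by
    rw [hL, measureReal_biUnion_finset (h := fun d _ => by simp [RankOne.lvl])]
    · have : ∀ d ∈ D S 0 m, volume.real (S.lvl (m + 1) d) = (1 / 2) ^ (m + 1) := by
        intro d _
        rw [RankOne.lvl, Real.volume_real_Ioo_of_le (by linarith [H.w_pos (m + 1)]), H.w_eq]; ring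
      rw [Finset.sum_congr rfl this, Finset.sum_const, H.D_card, nsmul_eq_mul]
      push_cast
      rw [pow_succ, one_div, inv_pow]
      field_simp
    · intro d hd d' hd' hne
      have hb := H.D_lt 0 m
      rw [zero_add] at hb
      have := hb d hd
      have := hb d' hd'
      exact S.disj (m + 1) d (by omega) d' (by omega) hne
    · intro d _; exact measurableSet_Ioo
  have hLfin : volume L ≠ ⊤ := ne_top_of_le_ne_top hfin (measure_mono hLI)
  calc (2 : ℝ) ^ m / 2 = ∫ x in L, (2 : ℝ) ^ m := by
        rw [setIntegral_const, hvol, smul_eq_mul]; ring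
    _ ≤ ∫ x in L, S.birkhoff (S.lvl 0 0) n x := by
        refine setIntegral_mono_on (integrableOn_const hLfin) (hInt.mono_set hLI) mL ?_
        intro x hx
        simp only [hL, mem_iUnion] at hx
        obtain ⟨d, hd, hxd⟩ := hx
        exact H.birkhoff_lower m n d hn hd hxd
    _ ≤ ∫ x in S.lvl 0 0, S.birkhoff (S.lvl 0 0) n x :=
        setIntegral_mono_set hInt (Eventually.of_forall fun x => birkhoff_nonneg S _ _ _)
          hLI.eventuallyLE

lemma ratErgodic (H : Good7 S) : S.RatErgodic := by
  have h00 : 0 < S.h 0 := H.h_pos 0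
  have mI : MeasurableSet (S.lvl 0 0) := measurableSet_Ioo
  have hIX : S.lvl 0 0 ⊆ S.X := lvl_subset_X S h00
  have hvI : volume (S.lvl 0 0) = 1 := by rw [I_eq]; simp
  have hμ : S.μ (S.lvl 0 0) = 1 := by
    rw [RankOne.μ, Measure.restrict_apply mI, inter_eq_self_of_subset_left hIX, hvI]
  have hres : S.μ.restrict (S.lvl 0 0) = volume.restrict (S.lvl 0 0) := by
    rw [RankOne.μ, Measure.restrict_restrict_of_subset hIX]
  have hrI : volume.real (S.lvl 0 0) = 1 := by simp [Measure.real, hvI]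
  refine ⟨S.lvl 0 0, 256, mI, by simp [hμ], by simp [hμ], fun n => ?_⟩
  rw [hres]
  rcases Nat.eq_zero_or_pos n with rfl | hn
  · simp [RankOne.birkhoff]
  have hInt : IntegrableOn (S.birkhoff (S.lvl 0 0) n) (S.lvl 0 0) volume :=
    Measure.integrableOn_of_bounded (M := n) (by simp [hvI])
      (birkhoff_meas S _ mI n).aestronglyMeasurable
      (Eventually.of_forall fun x => by
        rw [Real.norm_eq_abs, abs_of_nonneg (birkhoff_nonneg S _ _ _)]
        exact birkhoff_le S _ _ _)
  obtain ⟨m, hm1, hm2⟩ : ∃ m, S.h m ≤ n ∧ n < S.h (m + 1) := by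
    have hex : ∃ m, n < S.h m := ⟨n + 1, lt_of_lt_of_le (Nat.lt_succ_self n) (H.le_h _)⟩
    have hsp := Nat.find_spec hex
    have hne : Nat.find hex ≠ 0 := by
      intro h0
      rw [h0, S.h0] at hsp
      omega
    obtain ⟨m, hm⟩ := Nat.exists_eq_succ_of_ne_zero hne
    refine ⟨m, ?_, ?_⟩
    · have := Nat.find_min hex (m := m) (by omega)
      omega
    · rw [hm] at hsp; exact hsp
  have hlow : (2 : ℝ) ^ m / 4 ≤ ∫ x in S.lvl 0 0, S.birkhoff (S.lvl 0 0) n x := by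
    cases m with
    | zero =>
      have h1 : (1 : ℝ) ≤ ∫ x in S.lvl 0 0, S.birkhoff (S.lvl 0 0) n x := by
        calc (1 : ℝ) = ∫ x in S.lvl 0 0, (1 : ℝ) := by
              rw [setIntegral_const, hrI, smul_eq_mul]; ring
          _ ≤ _ := by
              refine setIntegral_mono_on (integrableOn_const (by simp [hvI])) hInt mI ?_
              intro x hx
              rw [RankOne.birkhoff]
              have h2 := Finset.single_le_sum (s := Finset.range n)
                (f := fun k => indicator (S.lvl 0 0) (fun _ => (1 : ℝ)) ((⇑S.T)^[k] x))
                (fun k _ => indicator_nonneg (fun _ _ => zero_le_one) _)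
                (Finset.mem_range.2 hn)
              refine le_trans ?_ h2
              simp [hx]
      norm_num
      linarith
    | succ m =>
      have hs := H.h_succ m
      have := H.int_lower m n (by omega)
      rw [pow_succ]
      linarith
  have hup : ∫ x in S.lvl 0 0, (S.birkhoff (S.lvl 0 0) n x) ^ 2 ≤ ((2 : ℝ) ^ (m + 2)) ^ 2 := by
    have hEn : ∀ᵐ x : ℝ, x ∉ E S := (E_countable (S := S)).ae_notMem volume
    calc ∫ x in S.lvl 0 0, (S.birkhoff (S.lvl 0 0) n x) ^ 2
        ≤ ∫ x in S.lvl 0 0, ((2 : ℝ) ^ (m + 2)) ^ 2 := by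
          refine integral_mono_of_nonneg (Eventually.of_forall fun x => sq_nonneg _)
            (integrableOn_const (by simp [hvI])) ?_
          filter_upwards [ae_restrict_of_ae hEn, ae_restrict_mem mI] with x hxE hx
          have h1 := H.birkhoff_upper (m + 1) n hm2.le hx hxE
          have h2 := birkhoff_nonneg S (S.lvl 0 0) n x
          exact pow_le_pow_left₀ h2 h1 2
      _ = ((2 : ℝ) ^ (m + 2)) ^ 2 := by
          rw [setIntegral_const, hrI, smul_eq_mul, one_mul]
  refine hup.trans ?_
  have h3 : ((2 : ℝ) ^ m / 4) ^ 2 ≤ (∫ x in S.lvl 0 0, S.birkhoff (S.lvl 0 0) n x) ^ 2 :=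
    pow_le_pow_left₀ (by positivity) hlow 2
  calc ((2 : ℝ) ^ (m + 2)) ^ 2 = 256 * ((2 : ℝ) ^ m / 4) ^ 2 := by ring
    _ ≤ _ := by linarith

end Good7
/-- The rank-one transformation obtained by cutting each column in half
(`r n = 2`), adding no spacers on the left subcolumn and exactly `2 h_n + 1` spacers on the
right subcolumn, is rationally ergodic and spectrally weakly mixing but not rationally
weakly mixing. -/
theorem statement7 (S : RankOne) (hr2 : ∀ n, S.r n = 2) (hs0 : ∀ n, S.s n 0 = 0)
    (hs1 : ∀ n, S.s n 1 = 2 * S.h n + 1) :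
    S.RatErgodic ∧ S.SpecWM ∧ ¬ S.RWM := by
  have H : Good7 S := ⟨hr2, hs0, hs1⟩
  exact ⟨H.ratErgodic, H.specWM, H.not_RWM⟩
end
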